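/- There exist constants c, A > 0, depending only on d, such that for any ε > 0 and any pair of nonnegative measurable functions f, f* ∈ L^{(d+1)/d}(ℝ^d) with positive finite norms satisfying ⟨T(f*), f⟩ ≥ ε ‖f‖_{(d+1)/d} ‖f*‖_{(d+1)/d}, there exist Lebesgue measurable sets E, E* ⊆ ℝ^d, positive scalars t, t*, and a ball ℬ = ℬ(z̄, e, r, r*) such that, writing (B, B*) = (π(ℬ), π*(ℬ)): t χ_E ≤ f and t* χ_{E*} ≤ f*; ⟨T(t* χ_{E* ∩ B*}), t χ_{E ∩ B}⟩ ≥ c ε^A ⟨T(f*), f⟩; and |B| ≤ |E| and |B*| ≤ |E*|. -/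

import Mathlib

open MeasureTheory ENNReal
open scoped RealInnerProductSpace

noncomputable section

/-- `ℝ^{d-1}` -/
abbrev Vec (n : ℕ) : Type := EuclideanSpace ℝ (Fin n)

/-- `ℝ^d = ℝ^{d-1} × ℝ`, a point `x = (x', x_d)` -/
abbrev Pt (n : ℕ) : Type := Vec n × ℝ

/-- The Radon-like transform `Tf(x) = ∫_{ℝ^{d-1}} f(x' - t, x_d - |t|²) dt`. -/
def radonT (n : ℕ) (f : Pt n → ℝ≥0∞) (x : Pt n) : ℝ≥0∞ :=
  ∫⁻ t : Vec n, f (x.1 - t, x.2 - ‖t‖ ^ 2)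

/-- The incidence functional `𝒯(E, E*) = ∫_E T(χ_{E*})`. -/
def incT (n : ℕ) (E Estar : Set (Pt n)) : ℝ≥0∞ :=
  ∫⁻ x in E, radonT n (Estar.indicator 1) x

/-- Admissibility of the parameters of a ball `ℬ(z̄, e, r, r*)`:
the center `z̄ = (x̄, x̄*)` lies on the incidence manifold `ℐ`, `ρ > 0`,
`e` is an orthonormal basis of `ℝ^{d-1}`, and `r_j r*_j = ρ > 0` for all `j`. -/
def IsBallParams (n : ℕ) (zb : Pt n × Pt n) (e : Fin n → Vec n)
    (r rs : Fin n → ℝ) (ρ : ℝ) : Prop :=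
  zb.2.2 = zb.1.2 - ‖zb.2.1 - zb.1.1‖ ^ 2 ∧ 0 < ρ ∧ Orthonormal ℝ e ∧
    (∀ j, 0 < r j) ∧ (∀ j, 0 < rs j) ∧ (∀ j, r j * rs j = ρ)

/-- The ball `ℬ(z̄, e, r, r*)`, a subset of the incidence manifold
`ℐ = {(x,y) : y_d = x_d - |y' - x'|²} ⊆ ℝ^d × ℝ^d`. -/
def ballI (n : ℕ) (zb : Pt n × Pt n) (e : Fin n → Vec n)
    (r rs : Fin n → ℝ) (ρ : ℝ) : Set (Pt n × Pt n) :=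
  fun z => z.2.2 = z.1.2 - ‖z.2.1 - z.1.1‖ ^ 2 ∧
    (∀ j, |⟪z.1.1 - zb.1.1, e j⟫| < r j) ∧
    |z.1.2 - zb.2.2 - ‖z.1.1 - zb.2.1‖ ^ 2| < ρ ∧
    (∀ j, |⟪z.2.1 - zb.2.1, e j⟫| < rs j) ∧
    |z.2.2 - zb.1.2 + ‖z.2.1 - zb.1.1‖ ^ 2| < ρ

/-- The `L^p` norm `(∫ f^p)^{1/p}` of a nonnegative (extended-real-valued)
function. -/
def LpN (n : ℕ) (p : ℝ) (f : Pt n → ℝ≥0∞) : ℝ≥0∞ :=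
  (∫⁻ x, f x ^ p) ^ (1 / p)

/-- The pairing `⟨Tg, f⟩ = ∫ f · Tg` for nonnegative functions. -/
def pairT (n : ℕ) (f g : Pt n → ℝ≥0∞) : ℝ≥0∞ :=
  ∫⁻ x, f x * radonT n g x

noncomputable section

/-- matrix of a simplex: rows `(1, z i)` -/
def smat {n : ℕ} (z : Fin (n + 1) → Vec n) : Matrix (Fin (n + 1)) (Fin (n + 1)) ℝ :=
  Matrix.of fun i => Fin.cons 1 (fun k => z i k)

/-- (normalized) volume of a simplex -/
def Vol {n : ℕ} (z : Fin (n + 1) → Vec n) : ℝ := |(smat z).det|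

lemma Vol_nonneg {n : ℕ} (z : Fin (n + 1) → Vec n) : 0 ≤ Vol z := abs_nonneg _

lemma continuous_Vol {n : ℕ} : Continuous (Vol (n := n)) := by
  unfold Vol smat
  refine continuous_abs.comp (Continuous.matrix_det ?_)
  refine continuous_matrix fun i j => ?_
  refine Fin.cases ?_ (fun k => ?_) j
  · simp only [Matrix.of_apply, Fin.cons_zero]; fun_prop
  · simp only [Matrix.of_apply, Fin.cons_succ]; fun_prop

lemma Vol_perm {n : ℕ} (z : Fin (n + 1) → Vec n) (σ : Equiv.Perm (Fin (n + 1))) :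
    Vol (z ∘ σ) = Vol z := by
  have h : smat (z ∘ σ) = (smat z).submatrix σ id := by
    ext i j; simp [smat]
  unfold Vol
  rw [h, Matrix.det_permute]
  rcases Int.units_eq_one_or (Equiv.Perm.sign σ) with h | h <;> simp [h]

lemma Vol_inj {n : ℕ} (ω : Fin (n + 2) → Vec n) (g : Fin (n + 1) → Fin (n + 2))
    (hg : Function.Injective g) (j : Fin (n + 2)) (hj : ∀ i, g i ≠ j) :
    Vol (ω ∘ g) = Vol (ω ∘ j.succAbove) := by
  have h1 : ∀ i, ∃ k, j.succAbove k = g i := fun i => Fin.exists_succAbove_eq (hj i)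
  choose τ hτ using h1
  have hτi : Function.Injective τ := by
    intro a b hab
    apply hg
    rw [← hτ, ← hτ, hab]
  let σ : Equiv.Perm (Fin (n + 1)) := Equiv.ofBijective τ (Finite.injective_iff_bijective.1 hτi)
  have : ω ∘ g = (ω ∘ j.succAbove) ∘ σ := by
    ext i : 1
    simp [σ, hτ]
  rw [this, Vol_perm]

lemma Vol_insertNth {n : ℕ} (i : Fin (n + 1)) (y : Vec n) (w : Fin n → Vec n) :
    Vol (i.insertNth y w : Fin (n + 1) → Vec n) = Vol (Fin.cons y w : Fin (n + 1) → Vec n) := by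
  have h := Vol_perm (Fin.cons y w : Fin (n + 1) → Vec n) (i.cycleRange)
  rw [← h]
  congr 1
  ext k : 1
  rw [Function.comp, ← Fin.insertNth_zero']
  rcases Fin.eq_self_or_eq_succAbove i k with rfl | ⟨l, rfl⟩
  · simp
  · simp [Fin.cycleRange_succAbove]

lemma smat_update {n : ℕ} (z : Fin (n + 1) → Vec n) (i : Fin (n + 1)) (y : Vec n) :
    smat (Function.update z i y) = (smat z).updateRow i (Fin.cons 1 (fun k => y k)) := by
  ext a b
  by_cases h : a = i
  · subst h; simp [smat]
  · simp [smat, h]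

/-- difference matrix -/
def dmat {n : ℕ} (z : Fin (n + 1) → Vec n) : Matrix (Fin n) (Fin n) ℝ :=
  Matrix.of fun i k => z i.succ k - z 0 k

lemma det_smat {n : ℕ} (z : Fin (n + 1) → Vec n) : (smat z).det = (dmat z).det := by
  let B : Matrix (Fin (n + 1)) (Fin (n + 1)) ℝ :=
    Matrix.of (Fin.cons (Fin.cons 1 (fun k => z 0 k)) (fun i => Fin.cons 0 (fun k => dmat z i k)))
  have h : (smat z).det = B.det := by
    refine Matrix.det_eq_of_forall_row_eq_smul_add_const (Fin.cons 0 (fun _ => 1)) 0 (by simp) ?_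
    intro i j
    refine Fin.cases ?_ (fun i => ?_) i <;> refine Fin.cases ?_ (fun j => ?_) j <;>
      simp [smat, B, dmat]
  rw [h, Matrix.det_succ_column_zero]
  rw [Fin.sum_univ_succ]
  simp [B]
  congr 1

/-- Lemma D: parallelepipeds fit in boxes. -/
lemma par_box {n : ℕ} (z : Fin (n + 1) → Vec n) (hz : 0 < Vol z) (lam : ℝ) (hl : 0 < lam) :
    ∃ (b : OrthonormalBasis (Fin n) ℝ (Vec n)) (r : Fin n → ℝ), (∀ j, 0 < r j) ∧
      (∏ j, r j) * Vol z ^ n = (n : ℝ) ^ n * lam ^ n * Vol z ∧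
      ∀ y : Vec n, (∀ i, Vol (Function.update z i y) ≤ lam) →
        ∀ j, |⟪y - z 0, b j⟫| ≤ r j := by
  classical
  set D := dmat z with hD
  have hA : (D.transpose * D).IsHermitian := by
    have := Matrix.isHermitian_conjTranspose_mul_self D
    simpa using this
  set b := hA.eigenvectorBasis with hb
  have hV : Vol z = |D.det| := by rw [Vol, det_smat]
  have hdet : ∏ j, hA.eigenvalues j = Vol z ^ 2 := by
    have := hA.det_eq_prod_eigenvalues
    rw [Matrix.det_mul, Matrix.det_transpose] at this
    rw [hV, sq_abs, pow_two, this]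
    simp
  have heig : ∀ j, ∑ i, ⟪z (Fin.succ i) - z 0, b j⟫ ^ 2 = hA.eigenvalues j := by
    intro j
    have h1 := hA.mulVec_eigenvectorBasis j
    have h2 : ∀ i, ⟪z (Fin.succ i) - z 0, b j⟫ = (D.mulVec (b j)) i := by
      intro i
      simp [D, dmat, Matrix.mulVec, dotProduct, PiLp.inner_apply, mul_comm]
    have h3 : ∑ i, (D.mulVec (b j)) i ^ 2 = dotProduct (b j) ((D.transpose * D).mulVec (b j)) := by
      rw [← Matrix.mulVec_mulVec, Matrix.dotProduct_mulVec, Matrix.vecMul_transpose]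
      simp [dotProduct, pow_two]
    simp_rw [h2]
    rw [h3, h1]
    have h4 : dotProduct (b j : Fin n → ℝ) (b j) = 1 := by
      have := b.orthonormal.1 j
      have h5 : ⟪b j, b j⟫ = 1 := by rw [real_inner_self_eq_norm_sq, this]; norm_num
      rw [PiLp.inner_apply] at h5
      simpa [dotProduct, pow_two] using h5
    rw [dotProduct_smul, h4]; simp
  have hnn : ∀ j, 0 ≤ hA.eigenvalues j := by
    intro j; rw [← heig]; positivity
  have hpos : ∀ j, 0 < hA.eigenvalues j := by
    intro j
    refine lt_of_le_of_ne (hnn j) fun h => ?_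
    have : ∏ j, hA.eigenvalues j = 0 := Finset.prod_eq_zero (Finset.mem_univ j) h.symm
    rw [hdet] at this
    exact absurd this (by positivity)
  refine ⟨b, fun j => n * (lam / Vol z) * √(hA.eigenvalues j), ?_, ?_, ?_⟩
  · intro j
    have : 0 < n := Fin.pos j
    have := hpos j
    positivity
  · rw [Finset.prod_mul_distrib, Finset.prod_const, ← Real.sqrt_prod _ (fun j _ => hnn j), hdet,
      Real.sqrt_sq hz.le]
    simp only [Finset.card_univ, Fintype.card_fin]
    rw [mul_pow, div_pow]
    field_simp
  · intro y hy j
    -- Cramer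
    set M := (smat z).transpose with hM
    have hMdet : M.det = (smat z).det := Matrix.det_transpose _
    have hne : M.det ≠ 0 := by
      rw [hMdet]; intro h; rw [Vol, h] at hz; simp at hz
    set w : Fin (n + 1) → ℝ := Fin.cons 1 (fun k => y k) with hw
    have hcr := Matrix.mulVec_cramer M w
    set t : Fin (n + 1) → ℝ := fun i => M.cramer w i / M.det with ht
    have ht2 : ∀ k, ∑ i, t i * smat z i k = w k := by
      intro k
      have := congrFun hcr k
      simp only [Matrix.mulVec, dotProduct, Pi.smul_apply, smul_eq_mul, hM,
        Matrix.transpose_apply] at this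
      have h2 : ∑ i, t i * smat z i k = (∑ i, smat z i k * M.cramer w i) / M.det := by
        rw [Finset.sum_div]; refine Finset.sum_congr rfl fun i _ => ?_
        simp only [ht]; ring
      rw [h2, hM, this]; exact mul_div_cancel_left₀ _ hne
    have htb : ∀ i, |t i| ≤ lam / Vol z := by
      intro i
      have h1 := hy i
      rw [Vol, smat_update] at h1
      have h2 : M.cramer w i = ((smat z).updateRow i w).det := by
        rw [Matrix.cramer_apply, hM, Matrix.updateCol_transpose, Matrix.det_transpose]
      simp only [ht, abs_div, h2, hMdet]
      exact div_le_div_of_nonneg_right h1 (abs_nonneg _)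
    have ht0 : ∑ i, t i = 1 := by
      have := ht2 0
      simpa [smat, hw] using this
    have htk : ∀ k : Fin n, ∑ i, t i * z i k = y k := by
      intro k
      have := ht2 k.succ
      simpa [smat, hw] using this
    have hyz : y - z 0 = ∑ i : Fin n, t i.succ • (z i.succ - z 0) := by
      ext k
      have h1 := htk k
      rw [Fin.sum_univ_succ] at h1 ht0
      have h3 : t 0 = 1 - ∑ i : Fin n, t i.succ := by linarith
      simp only [PiLp.sub_apply, WithLp.ofLp_sum, WithLp.ofLp_smul, WithLp.ofLp_sub, Finset.sum_apply, Pi.smul_apply, Pi.sub_apply, smul_eq_mul, mul_sub,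
        Finset.sum_sub_distrib, ← Finset.sum_mul]
      rw [← h1, h3]; ring
    have hs : ∀ i : Fin n, |⟪z i.succ - z 0, b j⟫| ≤ √(hA.eigenvalues j) := by
      intro i
      apply Real.abs_le_sqrt
      rw [← heig]
      exact Finset.single_le_sum (f := fun i => ⟪z (Fin.succ i) - z 0, b j⟫ ^ 2)
        (fun i _ => sq_nonneg _) (Finset.mem_univ i)
    rw [hyz, sum_inner]
    refine (Finset.abs_sum_le_sum_abs _ _).trans ?_
    refine (Finset.sum_le_card_nsmul _ _ (lam / Vol z * √(hA.eigenvalues j)) ?_).trans ?_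
    · intro i _
      rw [real_inner_smul_left, abs_mul]
      exact mul_le_mul (htb _) (hs i) (abs_nonneg _) (by positivity)
    · simp [mul_assoc]
end

noncomputable section

lemma swap_inc {n : ℕ} (c : ℝ) (Φ : Pt n → Pt n → ℝ≥0∞) (hΦ : Measurable (Function.uncurry Φ)) :
    ∫⁻ x : Pt n, ∫⁻ y' : Vec n, Φ x (y', x.2 + c * ⟪x.1, y'⟫) =
      ∫⁻ y : Pt n, ∫⁻ x' : Vec n, Φ (x', y.2 - c * ⟪x', y.1⟫) y := by
  have e1 : ∫⁻ x : Pt n, ∫⁻ y' : Vec n, Φ x (y', x.2 + c * ⟪x.1, y'⟫) =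
      ∫⁻ x' : Vec n, ∫⁻ y' : Vec n, ∫⁻ u : ℝ, Φ (x', u) (y', u + c * ⟪x', y'⟫) := by
    rw [Measure.volume_eq_prod, lintegral_prod]
    · refine lintegral_congr fun x' => ?_
      rw [lintegral_lintegral_swap]
      refine Measurable.aemeasurable ?_
      exact hΦ.comp (f := fun p : ℝ × Vec n => ((x', p.1), (p.2, p.1 + c * ⟪x', p.2⟫)))
        (by fun_prop)
    · refine (Measurable.lintegral_prod_right' (f := fun p : Pt n × Vec n =>
        Φ p.1 (p.2, p.1.2 + c * ⟪p.1.1, p.2⟫)) ?_).aemeasurable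
      exact hΦ.comp (f := fun p : Pt n × Vec n => (p.1, (p.2, p.1.2 + c * ⟪p.1.1, p.2⟫)))
        (by fun_prop)
  have e2 : ∫⁻ y : Pt n, ∫⁻ x' : Vec n, Φ (x', y.2 - c * ⟪x', y.1⟫) y =
      ∫⁻ y' : Vec n, ∫⁻ x' : Vec n, ∫⁻ v : ℝ, Φ (x', v - c * ⟪x', y'⟫) (y', v) := by
    rw [Measure.volume_eq_prod, lintegral_prod]
    · refine lintegral_congr fun y' => ?_
      rw [lintegral_lintegral_swap]
      refine Measurable.aemeasurable ?_
      exact hΦ.comp (f := fun p : ℝ × Vec n => ((p.2, p.1 - c * ⟪p.2, y'⟫), (y', p.1)))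
        (by fun_prop)
    · refine (Measurable.lintegral_prod_right' (f := fun p : Pt n × Vec n =>
        Φ (p.2, p.1.2 - c * ⟪p.2, p.1.1⟫) p.1) ?_).aemeasurable
      exact hΦ.comp (f := fun p : Pt n × Vec n => ((p.2, p.1.2 - c * ⟪p.2, p.1.1⟫), p.1))
        (by fun_prop)
  rw [e1, e2, lintegral_lintegral_swap]
  · refine lintegral_congr fun y' => lintegral_congr fun x' => ?_
    rw [← lintegral_sub_right_eq_self _ (c * ⟪x', y'⟫)]
    simp
  · refine (Measurable.lintegral_prod_right' (f := fun p : (Vec n × Vec n) × ℝ =>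
        Φ (p.1.1, p.2) (p.1.2, p.2 + c * ⟪p.1.1, p.1.2⟫)) ?_).aemeasurable
    exact hΦ.comp (f := fun p : (Vec n × Vec n) × ℝ =>
      ((p.1.1, p.2), (p.1.2, p.2 + c * ⟪p.1.1, p.1.2⟫))) (by fun_prop)

lemma lintegral_pi_prod {α : Type*} [MeasureSpace α] [SigmaFinite (volume : Measure α)] :
    ∀ {m : ℕ} (f : Fin m → α → ℝ≥0∞), (∀ i, Measurable (f i)) →
    ∫⁻ z : Fin m → α, ∏ i, f i (z i) = ∏ i, ∫⁻ t, f i t := by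
  intro m
  induction m with
  | zero => intro f _; simp [lintegral_unique, volume_pi]
  | succ m ih =>
    intro f hf
    have hp := (volume_preserving_piFinSuccAbove (fun _ : Fin (m+1) => α) 0).symm
    rw [← hp.lintegral_comp]
    · simp_rw [Fin.prod_univ_succ]
      rw [Measure.volume_eq_prod, lintegral_prod]
      · simp only [MeasurableEquiv.piFinSuccAbove_symm_apply, Fin.insertNthEquiv_apply, Fin.insertNth_zero', Fin.cons_zero, Fin.cons_succ]
        rw [← ih (fun i => f i.succ) (fun i => hf _), ← lintegral_mul_const'' _ (hf 0).aemeasurable]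
        refine lintegral_congr fun x => ?_
        rw [lintegral_const_mul]
        exact Finset.measurable_prod _ fun i _ => (hf _).comp (measurable_pi_apply i)
      · refine Measurable.aemeasurable ?_
        refine Measurable.mul ?_ (Finset.measurable_prod _ fun i _ => ?_)
        · exact (hf 0).comp ((measurable_pi_apply _).comp (MeasurableEquiv.measurable _))
        · exact (hf _).comp ((measurable_pi_apply _).comp (MeasurableEquiv.measurable _))
    · exact Finset.measurable_prod _ fun i _ => (hf _).comp (measurable_pi_apply i)

/-- `Pt n` as `Fin (n+1) → ℝ` -/
def ptE (n : ℕ) : Pt n ≃ᵐ (Fin (n + 1) → ℝ) :=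
  MeasurableEquiv.prodComm.trans
    (((MeasurableEquiv.refl ℝ).prodCongr ((MeasurableEquiv.toLp 2 (Fin n → ℝ)).symm)).trans
      (MeasurableEquiv.piFinSuccAbove (fun _ => ℝ) 0).symm)

lemma ptE_apply (n : ℕ) (x : Pt n) : ptE n x = Fin.cons x.2 (fun k => x.1 k) := by
  ext i
  refine Fin.cases ?_ (fun i => ?_) i
  · simp [ptE, MeasurableEquiv.prodCongr, MeasurableEquiv.prodComm]
  · simp [ptE, MeasurableEquiv.prodCongr, MeasurableEquiv.prodComm]

lemma ptE_mp (n : ℕ) : MeasurePreserving (ptE n) volume volume := by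
  have h1 : MeasurePreserving (MeasurableEquiv.prodComm : Pt n ≃ᵐ ℝ × Vec n) volume volume :=
    Measure.measurePreserving_swap
  have h2 : MeasurePreserving
      ((MeasurableEquiv.refl ℝ).prodCongr ((MeasurableEquiv.toLp 2 (Fin n → ℝ)).symm))
      (volume : Measure (ℝ × Vec n)) volume :=
    (MeasurePreserving.id (volume : Measure ℝ)).prod (PiLp.volume_preserving_ofLp (Fin n))
  have h3 := (volume_preserving_piFinSuccAbove (fun _ : Fin (n+1) => ℝ) 0).symm
  exact h3.comp (h2.comp h1)

lemma drury_fixed {n : ℕ} (c : ℝ) (hc : 1 ≤ |c|) (z : Fin (n + 1) → Vec n)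
    (g : Fin (n + 1) → ℝ → ℝ≥0∞) (hg : ∀ i, Measurable (g i)) :
    (∫⁻ x : Pt n, ∏ i, g i (x.2 + c * ⟪x.1, z i⟫)) * ENNReal.ofReal (Vol z) ≤
      ∏ i, ∫⁻ t, g i t := by
  classical
  rcases (Vol_nonneg z).eq_or_lt with h0 | h0
  · rw [← h0]; simp
  let D : Matrix (Fin (n+1)) (Fin (n+1)) ℝ := Matrix.diagonal (Fin.cons 1 (fun _ => c))
  let A := smat z * D
  have hA : |A.det| = Vol z * |c| ^ n := by
    simp [A, D, Matrix.det_mul, Matrix.det_diagonal, Fin.prod_univ_succ, Vol, abs_mul, abs_pow]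
  have hA0 : A.det ≠ 0 := by
    intro h
    rw [h, abs_zero] at hA
    have : 0 < Vol z * |c| ^ n := by positivity
    linarith
  have happ : ∀ x : Pt n, ∀ i, (Matrix.toLin' A (ptE n x)) i = x.2 + c * ⟪x.1, z i⟫ := by
    intro x i
    rw [Matrix.toLin'_apply, ptE_apply]
    simp only [A, D, Matrix.mulVec, dotProduct, Matrix.mul_diagonal, Fin.sum_univ_succ, smat,
      Matrix.of_apply, Fin.cons_zero, Fin.cons_succ, PiLp.inner_apply, Finset.mul_sum]
    simp
    refine Finset.sum_congr rfl fun k _ => ?_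
    ring
  have hm : Measurable fun t : Fin (n+1) → ℝ => ∏ i, g i (t i) :=
    Finset.measurable_prod _ fun i _ => (hg i).comp (measurable_pi_apply i)
  have hmA : Measurable (Matrix.toLin' A) := (LinearMap.continuous_of_finiteDimensional _).measurable
  have key : ∫⁻ x : Pt n, ∏ i, g i (x.2 + c * ⟪x.1, z i⟫) =
      ENNReal.ofReal |A.det⁻¹| * ∏ i, ∫⁻ t, g i t := by
    rw [← lintegral_pi_prod g hg, ← smul_eq_mul, ← lintegral_smul_measure,
      ← Real.map_matrix_volume_pi_eq_smul_volume_pi hA0, lintegral_map hm hmA]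
    have := (ptE_mp n).lintegral_comp (hm.comp hmA)
    simp only [Function.comp_apply, happ] at this
    exact this
  rw [key, mul_right_comm, ← ENNReal.ofReal_mul (abs_nonneg _)]
  refine mul_le_of_le_one_left' ?_
  rw [ENNReal.ofReal_le_one, abs_inv, hA, mul_inv, mul_right_comm, inv_mul_cancel₀ h0.ne', one_mul]
  exact inv_le_one_of_one_le₀ (one_le_pow₀ hc)

/-- Lemma A -/
lemma drury {n : ℕ} (c : ℝ) (hc : 1 ≤ |c|) (f : Fin (n + 1) → Pt n → ℝ≥0∞)
    (hf : ∀ i, Measurable (f i)) :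
    ∫⁻ x : Pt n, ∫⁻ z : Fin (n + 1) → Vec n,
      (∏ i, f i (z i, x.2 + c * ⟪x.1, z i⟫)) * ENNReal.ofReal (Vol z) ≤ ∏ i, ∫⁻ y, f i y := by
  have hV : Measurable fun z : Fin (n+1) → Vec n => ENNReal.ofReal (Vol z) :=
    ENNReal.measurable_ofReal.comp continuous_Vol.measurable
  have hm : Measurable fun p : Pt n × (Fin (n+1) → Vec n) =>
      (∏ i, f i (p.2 i, p.1.2 + c * ⟪p.1.1, p.2 i⟫)) := by
    refine Finset.measurable_prod _ fun i _ => (hf i).comp ?_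
    have : Measurable fun p : Pt n × (Fin (n+1) → Vec n) => p.2 i :=
      (measurable_pi_apply i).comp measurable_snd
    fun_prop
  rw [lintegral_lintegral_swap (hm.mul (hV.comp measurable_snd)).aemeasurable]
  calc _ ≤ ∫⁻ z : Fin (n+1) → Vec n, ∏ i, (∫⁻ t, f i (z i, t)) := by
        refine lintegral_mono fun z => ?_
        dsimp only
        rw [lintegral_mul_const]
        · exact drury_fixed c hc z (fun i t => f i (z i, t))
            (fun i => (hf i).comp (by fun_prop))
        · exact hm.comp (by fun_prop : Measurable fun x : Pt n => (x, z))
    _ = ∏ i, ∫⁻ y, f i y := by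
        rw [lintegral_pi_prod (fun i y' => ∫⁻ t, f i (y', t))
          (fun i => (hf i).lintegral_prod_right')]
        refine Finset.prod_congr rfl fun i _ => ?_
        rw [Measure.volume_eq_prod, lintegral_prod _ (hf i).aemeasurable]
end

noncomputable section

lemma vol_box {n : ℕ} (b : OrthonormalBasis (Fin n) ℝ (Vec n)) (a : Vec n) (r : Fin n → ℝ)
    (hr : ∀ j, 0 ≤ r j) :
    volume {y : Vec n | ∀ j, |⟪y - a, b j⟫| ≤ r j} = ENNReal.ofReal (2 ^ n * ∏ j, r j) := by
  have h1 : MeasurePreserving (fun y : Vec n => (WithLp.ofLp (b.repr (y - a)) : Fin n → ℝ))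
      volume volume :=
    (PiLp.volume_preserving_ofLp (Fin n)).comp
      (b.measurePreserving_repr.comp (measurePreserving_sub_right volume a))
  have h2 : {y : Vec n | ∀ j, |⟪y - a, b j⟫| ≤ r j} =
      (fun y : Vec n => (WithLp.ofLp (b.repr (y - a)) : Fin n → ℝ)) ⁻¹'
        (Set.univ.pi fun j => Set.Icc (-r j) (r j)) := by
    ext y
    simp only [Set.mem_ofPred_eq, Set.mem_preimage, Set.mem_pi, Set.mem_univ, true_imp_iff,
      Set.mem_Icc, ← abs_le, b.repr_apply_apply, real_inner_comm]
  rw [h2, h1.measure_preimage (MeasurableSet.univ_pi fun j => measurableSet_Icc).nullMeasurableSet,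
    volume_pi_pi]
  simp only [Real.volume_Icc]
  rw [← ENNReal.ofReal_prod_of_nonneg (fun j _ => by linarith [hr j])]
  congr 1
  have : ∀ j, r j - -r j = 2 * r j := fun j => by ring
  simp_rw [this, Finset.prod_mul_distrib]
  simp

lemma measurable_update_Vol {n : ℕ} (i : Fin (n + 1)) :
    Measurable fun p : Vec n × (Fin (n + 1) → Vec n) => Vol (Function.update p.2 i p.1) := by
  refine continuous_Vol.measurable.comp ?_
  exact (continuous_snd.update i continuous_fst).measurable

lemma vol_par {n : ℕ} (hn : 1 ≤ n) (z : Fin (n + 1) → Vec n) (hz : 0 < Vol z) (lam : ℝ)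
    (hl : 0 < lam) :
    volume {y : Vec n | ∀ i, Vol (Function.update z i y) ≤ lam} ≤
      ENNReal.ofReal ((2 * n) ^ n * lam ^ n / Vol z ^ (n - 1)) := by
  obtain ⟨b, r, hr, hp, hy⟩ := par_box z hz lam hl
  refine (measure_mono (t := {y : Vec n | ∀ j, |⟪y - z 0, b j⟫| ≤ r j}) hy).trans ?_
  rw [vol_box b _ r (fun j => (hr j).le)]
  refine ENNReal.ofReal_le_ofReal ?_
  rw [le_div_iff₀ (by positivity)]
  have : Vol z ^ n = Vol z ^ (n - 1) * Vol z := by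
    rw [← pow_succ]; congr 1; omega
  rw [this, ← mul_assoc] at hp
  have h2 := mul_right_cancel₀ hz.ne' hp
  rw [mul_assoc, h2, mul_pow]; apply le_of_eq; ring

lemma root_Vol {n : ℕ} (z : Fin (n + 1) → Vec n) (t : ℝ)
    (ht : Vol (z + t • (Fin.cons 0 (fun i => EuclideanSpace.single i 1) : Fin (n + 1) → Vec n)) = 0) :
    ((-dmat z).charpoly).IsRoot t := by
  have h4 := ht
  rw [Vol, det_smat, abs_eq_zero] at h4
  rw [Polynomial.IsRoot, Matrix.eval_charpoly, ← h4]
  congr 1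
  ext i k
  by_cases hik : i = k
  · subst hik
    simp [dmat, Matrix.scalar_apply]; ring
  · simp [dmat, Matrix.scalar_apply, hik]
    intro h; exact absurd h.symm hik

lemma null_of_lines {E : Type*} [AddCommGroup E] [Module ℝ E] [MeasurableSpace E]
    [MeasurableAdd₂ E] [MeasurableSMul ℝ E] (μ : Measure E) [SFinite μ] [μ.IsAddRightInvariant]
    (N : Set E) (hNm : MeasurableSet N) (w : E) (hw : ∀ z : E, {t : ℝ | z + t • w ∈ N}.Finite) :
    μ N = 0 := by
  have h1 : ∀ t : ℝ, ∫⁻ z : E, N.indicator 1 (z + t • w) ∂μ = μ N := by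
    intro t
    rw [lintegral_add_right_eq_self (μ := μ) (N.indicator (1 : E → ℝ≥0∞)) (t • w),
      lintegral_indicator_one hNm]
  have hmeas : Measurable fun p : E × ℝ => N.indicator (1 : E → ℝ≥0∞) (p.1 + p.2 • w) :=
    (measurable_one.indicator hNm).comp
      (measurable_fst.add ((measurable_id.smul_const w).comp measurable_snd))
  have h2 : μ N = ∫⁻ z : E, ∫⁻ t in Set.Icc (0:ℝ) 1, N.indicator 1 (z + t • w) ∂volume ∂μ := by
    rw [lintegral_lintegral_swap]
    · simp_rw [h1]; simp
    · exact hmeas.aemeasurable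
  rw [h2]
  have h3 : ∀ z : E, ∫⁻ t in Set.Icc (0:ℝ) 1, N.indicator (1 : E → ℝ≥0∞) (z + t • w) = 0 := by
    intro z
    refine le_antisymm ?_ bot_le
    refine (setLIntegral_le_lintegral _ _).trans ?_
    have h6 : (fun t : ℝ => N.indicator (1 : E → ℝ≥0∞) (z + t • w)) =
        {t : ℝ | z + t • w ∈ N}.indicator 1 := by
      ext t; simp [Set.indicator]
    rw [h6, lintegral_indicator_one (hw z).measurableSet, (hw z).measure_zero]
  simp_rw [h3]; simp

lemma null_Vol (n : ℕ) : volume {z : Fin (n + 1) → Vec n | Vol z = 0} = 0 := by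
  refine null_of_lines volume _ (continuous_Vol.measurable (measurableSet_singleton 0))
    (Fin.cons 0 (fun i => EuclideanSpace.single i 1)) fun z => ?_
  exact (Polynomial.finite_setOfPred_isRoot (Matrix.charpoly_monic (-dmat z)).ne_zero).subset
    fun t ht => root_Vol z t ht

/-- constant for Lemma B -/
def CB (n : ℕ) : ℝ := 2 * (n + 2) * (2 * n) ^ n

lemma CB_pos {n : ℕ} (hn : 1 ≤ n) : 0 < CB n := by
  have : (0:ℝ) < n := by exact_mod_cast hn
  unfold CB; positivity

/-- Lemma B -/
lemma many_simplices {n : ℕ} (hn : 1 ≤ n) (S : Set (Vec n)) (hS : MeasurableSet S) (h : ℝ)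
    (hh : 0 < h) (hv : volume S = ENNReal.ofReal h) :
    ENNReal.ofReal (h ^ (n + 1)) ≤ ENNReal.ofReal (2 * (n + 2)) *
      volume {z : Fin (n + 1) → Vec n | (∀ i, z i ∈ S) ∧ h / CB n ≤ Vol z} := by
  have hn' : (0:ℝ) < n := by exact_mod_cast hn
  set a := h / CB n with ha
  have ha0 : 0 < a := div_pos hh (CB_pos hn)
  set Γ := {z : Fin (n + 1) → Vec n | (∀ i, z i ∈ S) ∧ a ≤ Vol z} with hΓ
  have hSm : MeasurableSet {z : Fin (n + 1) → Vec n | ∀ i, z i ∈ S} := by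
    have := MeasurableSet.univ_pi (fun _ : Fin (n+1) => hS)
    simpa [Set.pi] using this
  have hSv : volume {z : Fin (n + 1) → Vec n | ∀ i, z i ∈ S} = ENNReal.ofReal (h ^ (n+1)) := by
    have := volume_pi_pi (fun _ : Fin (n+1) => S)
    simp only [hv, Finset.prod_const, Finset.card_univ, Fintype.card_fin] at this
    rw [ENNReal.ofReal_pow hh.le, ← this]; congr 1; ext; simp
  have hΓm : MeasurableSet Γ := hSm.inter (measurableSet_le measurable_const continuous_Vol.measurable)
  set N := {z : Fin (n + 1) → Vec n | Vol z = 0} with hN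
  have hNm : MeasurableSet N := continuous_Vol.measurable (measurableSet_singleton 0)
  set P := {p : Vec n × (Fin (n + 1) → Vec n) | (∀ i, p.2 i ∈ S) ∧ 0 < Vol p.2 ∧ Vol p.2 < a ∧
    ∀ i, Vol (Function.update p.2 i p.1) ≤ Vol p.2} with hP
  have hVm : Measurable fun p : Vec n × (Fin (n + 1) → Vec n) => Vol p.2 :=
    continuous_Vol.measurable.comp measurable_snd
  have hPm : MeasurableSet P := by
    refine (hSm.preimage measurable_snd).inter ?_
    refine (measurableSet_lt measurable_const hVm).inter ?_
    refine (measurableSet_lt hVm measurable_const).inter ?_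
    have : {p : Vec n × (Fin (n + 1) → Vec n) |  ∀ i, Vol (Function.update p.2 i p.1) ≤ Vol p.2} =
      ⋂ i, {p : Vec n × (Fin (n + 1) → Vec n) |  Vol (Function.update p.2 i p.1) ≤ Vol p.2} := by
      ext; simp
    have h := MeasurableSet.iInter fun i => measurableSet_le (measurable_update_Vol (n := n) i) hVm
    rw [← this] at h
    exact h
  have hPv : volume P ≤ ENNReal.ofReal ((2 * n) ^ n * a) * ENNReal.ofReal (h ^ (n+1)) := by
    rw [Measure.volume_eq_prod, Measure.prod_apply_symm hPm, ← hSv, ← lintegral_indicator_const hSm]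
    refine lintegral_mono fun z => ?_
    by_cases hz : (∀ i, z i ∈ S) ∧ 0 < Vol z ∧ Vol z < a
    · rw [Set.indicator_of_mem (by exact hz.1)]
      refine (measure_mono (t := {y : Vec n | ∀ i, Vol (Function.update z i y) ≤ Vol z}) ?_).trans
        ((vol_par hn z hz.2.1 _ hz.2.1).trans ?_)
      · intro y hy; exact hy.2.2.2
      · refine ENNReal.ofReal_le_ofReal ?_
        have : Vol z ^ n = Vol z ^ (n - 1) * Vol z := by
          rw [← pow_succ]; congr 1; omega
        rw [this, mul_left_comm, mul_div_cancel_left₀ _ (by have := hz.2.1; positivity)]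
        have := hz.2.2.le
        gcongr
    · have : ((fun x => (x, z)) ⁻¹' P) = ∅ := by
        ext y; simp only [Set.mem_preimage, Set.mem_empty_iff_false, iff_false]
        intro hy; exact hz ⟨hy.1, hy.2.1, hy.2.2.1⟩
      rw [this]; simp
  -- sample `n+2` points
  let e := fun j : Fin (n + 2) => MeasurableEquiv.piFinSuccAbove (fun _ : Fin (n+2) => Vec n) j
  have he : ∀ j, MeasurePreserving (e j) volume volume := fun j =>
    volume_preserving_piFinSuccAbove _ j
  have heap : ∀ j ω, e j ω = (ω j, ω ∘ j.succAbove) := fun j ω => rfl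
  have hcov : (Set.univ.pi fun _ : Fin (n + 2) => S) ⊆
      (e 0 ⁻¹' (Set.univ ×ˢ N)) ∪ ⋃ j, ((e j ⁻¹' (S ×ˢ Γ)) ∪ (e j ⁻¹' P)) := by
    intro ω hω
    have hω' : ∀ i, ω i ∈ S := fun i => hω i trivial
    obtain ⟨j, hj⟩ := Finite.exists_max (fun j : Fin (n + 2) => Vol (ω ∘ j.succAbove))
    by_cases h1 : a ≤ Vol (ω ∘ j.succAbove)
    · right
      refine Set.mem_iUnion.2 ⟨j, Or.inl ?_⟩
      rw [Set.mem_preimage, heap]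
      exact ⟨hω' j, fun i => hω' _, h1⟩
    push Not at h1
    rcases (Vol_nonneg (ω ∘ j.succAbove)).eq_or_lt with h2 | h2
    · left
      rw [Set.mem_preimage, heap]
      exact ⟨trivial, le_antisymm ((hj 0).trans h2.symm.le) (Vol_nonneg _)⟩
    · right
      refine Set.mem_iUnion.2 ⟨j, Or.inr ?_⟩
      rw [Set.mem_preimage, heap]
      refine ⟨fun i => hω' _, h2, h1, fun i => ?_⟩
      have h3 : Function.update (ω ∘ j.succAbove) i (ω j) =
          ω ∘ (Function.update j.succAbove i j) := by
        ext k : 1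
        by_cases hk : k = i
        · subst hk; simp
        · simp [hk]
      dsimp only
      rw [h3, Vol_inj ω _ _ (j.succAbove i)]
      · exact hj _
      · intro k hk
        by_cases hki : k = i
        · subst hki; simp at hk
        · simp [hki] at hk
      · intro k l hkl
        by_cases hki : k = i <;> by_cases hli : l = i
        · rw [hki, hli]
        · subst hki; simp [hli] at hkl
        · subst hli; simp [hki] at hkl
        · simp [hki, hli] at hkl; exact hkl
  have hmain := measure_mono (μ := volume) hcov
  rw [volume_pi_pi] at hmain
  simp only [hv, Finset.prod_const, Finset.card_univ, Fintype.card_fin] at hmain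
  have hsum : volume ((e 0 ⁻¹' (Set.univ ×ˢ N)) ∪ ⋃ j, ((e j ⁻¹' (S ×ˢ Γ)) ∪ (e j ⁻¹' P))) ≤
      0 + (n + 2 : ℕ) * (ENNReal.ofReal h * volume Γ +
        ENNReal.ofReal ((2 * n) ^ n * a) * ENNReal.ofReal (h ^ (n+1))) := by
    refine (measure_union_le _ _).trans (add_le_add ?_ ?_)
    · rw [(he 0).measure_preimage_equiv, Measure.volume_eq_prod, Measure.prod_prod, null_Vol]; simp
    · refine (measure_iUnion_le _).trans ?_
      rw [tsum_fintype]
      refine (Finset.sum_le_card_nsmul _ _ (ENNReal.ofReal h * volume Γ +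
        ENNReal.ofReal ((2 * n) ^ n * a) * ENNReal.ofReal (h ^ (n+1))) ?_).trans ?_
      · intro j _
        refine (measure_union_le _ _).trans (add_le_add ?_ ?_)
        · rw [(he j).measure_preimage_equiv, Measure.volume_eq_prod, Measure.prod_prod, hv]
        · rw [(he j).measure_preimage_equiv]; exact hPv
      · simp [mul_add]
  have hfin : volume Γ ≠ ⊤ := by
    refine ne_top_of_le_ne_top (b := volume {z : Fin (n + 1) → Vec n | ∀ i, z i ∈ S}) ?_ (measure_mono fun z hz => hz.1)
    rw [hSv]; exact ENNReal.ofReal_ne_top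
  have h7 := hmain.trans hsum
  obtain ⟨g, hg0, hg⟩ : ∃ g : ℝ, 0 ≤ g ∧ volume Γ = ENNReal.ofReal g :=
    ⟨(volume Γ).toReal, ENNReal.toReal_nonneg, (ENNReal.ofReal_toReal hfin).symm⟩
  rw [hg] at h7 ⊢
  rw [zero_add, ← ENNReal.ofReal_mul (by positivity), ← ENNReal.ofReal_mul (by positivity),
    ← ENNReal.ofReal_add (by positivity) (by positivity), ← ENNReal.ofReal_natCast,
    ← ENNReal.ofReal_mul (by positivity), ← ENNReal.ofReal_pow hh.le,
    ENNReal.ofReal_le_ofReal_iff (by positivity)] at h7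
  rw [← ENNReal.ofReal_mul (by positivity)]
  refine ENNReal.ofReal_le_ofReal ?_
  push_cast at h7
  have h8 : (n + 2 : ℝ) * ((2 * n) ^ n * a * h ^ (n + 1)) = h ^ (n + 2) / 2 := by
    rw [ha, CB]; field_simp; ring
  have h9 : h ^ (n+2) ≤ 2 * (n + 2) * g * h := by nlinarith
  rw [pow_succ] at h9
  exact le_of_mul_le_mul_right h9 hh
end

noncomputable section

/-- `X(G,H)` -/
def XI {n : ℕ} (G H : Set (Vec n)) : ℝ≥0∞ :=
  ∫⁻ y in G, ∫⁻ w in (Set.univ.pi fun _ : Fin n => H),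
    ENNReal.ofReal (Vol (Fin.cons y w : Fin (n + 1) → Vec n))

lemma measurable_cons {n : ℕ} : Measurable fun p : Vec n × (Fin n → Vec n) =>
    ENNReal.ofReal (Vol (Fin.cons p.1 p.2 : Fin (n + 1) → Vec n)) := by
  refine ENNReal.measurable_ofReal.comp (continuous_Vol.measurable.comp ?_)
  refine measurable_pi_iff.2 fun i => ?_
  refine Fin.cases ?_ (fun i => ?_) i
  · simp only [Fin.cons_zero]; fun_prop
  · simp only [Fin.cons_succ]; exact (measurable_pi_apply i).comp measurable_snd

lemma XI_swap {n : ℕ} (G H : Set (Vec n)) (i : Fin (n + 1)) (hH : MeasurableSet H) :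
    ∫⁻ z in (Set.univ.pi fun _ : Fin (n + 1) => H), ∫⁻ y in G,
      ENNReal.ofReal (Vol (Function.update z i y)) = volume H * XI G H := by
  have he := volume_preserving_piFinSuccAbove (fun _ : Fin (n+1) => Vec n) i
  have hm : Measurable fun w : Fin n → Vec n => ∫⁻ y in G,
      ENNReal.ofReal (Vol (Fin.cons y w : Fin (n + 1) → Vec n)) :=
    (measurable_cons.comp measurable_swap).lintegral_prod_right'
  have hset : (Set.univ.pi fun _ : Fin (n + 1) => H) =
      (MeasurableEquiv.piFinSuccAbove (fun _ : Fin (n+1) => Vec n) i) ⁻¹'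
        (H ×ˢ (Set.univ.pi fun _ : Fin n => H)) := by
    ext z
    simp only [Set.mem_preimage, Set.mem_prod, Set.mem_pi, Set.mem_univ, true_imp_iff]
    rw [i.forall_iff_succAbove]
    rfl
  have h1 := he.setLIntegral_comp_preimage (s := H ×ˢ (Set.univ.pi fun _ : Fin n => H))
    (hH.prod (MeasurableSet.univ_pi fun _ => hH)) (hm.comp measurable_snd)
  rw [← hset] at h1
  have h2 : ∀ z : Fin (n + 1) → Vec n, ∀ y, Vol (Function.update z i y) =
      Vol (Fin.cons y (fun k => z (i.succAbove k)) : Fin (n + 1) → Vec n) := by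
    intro z y
    rw [← Vol_insertNth i]
    have h3 := Fin.update_insertNth (α := fun _ => Vec n) i (z i) y (i.removeNth z)
    rw [Fin.insertNth_self_removeNth] at h3
    rw [h3]
    rfl
  simp_rw [h2]
  refine h1.trans ?_
  rw [Measure.volume_eq_prod, ← Measure.prod_restrict]
  rw [lintegral_prod _ (hm.comp measurable_snd).aemeasurable]
  simp only [Function.comp]
  rw [lintegral_const, mul_comm]
  congr 1
  · simp
  · unfold XI
    rw [lintegral_lintegral_swap]
    exact (measurable_cons.comp measurable_swap).aemeasurable

lemma measurable_updV {n : ℕ} (i : Fin (n + 1)) :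
    Measurable fun p : (Fin (n+1) → Vec n) × Vec n =>
      ENNReal.ofReal (Vol (Function.update p.1 i p.2)) :=
  ENNReal.measurable_ofReal.comp (continuous_Vol.measurable.comp
    (continuous_fst.update i continuous_snd).measurable)

/-- sum of one-point replaced volumes -/
def YI {n : ℕ} (G : Set (Vec n)) (z : Fin (n + 1) → Vec n) : ℝ≥0∞ := ∑ i, ∫⁻ y in G,
    ENNReal.ofReal (Vol (Function.update z i y))

lemma measurable_YI {n : ℕ} (G : Set (Vec n)) : Measurable (YI G) :=
  Finset.measurable_sum _ fun i _ => (measurable_updV i).lintegral_prod_right'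

lemma YI_markov {n : ℕ} (G : Set (Vec n)) (z : Fin (n + 1) → Vec n) (lam : ℝ) :
    ENNReal.ofReal lam * volume {y ∈ G | ∃ i, lam < Vol (Function.update z i y)} ≤ YI G z := by
  have hum : ∀ i : Fin (n+1), Measurable fun y : Vec n =>
      ENNReal.ofReal (Vol (Function.update z i y)) := fun i =>
    ENNReal.measurable_ofReal.comp (continuous_Vol.measurable.comp
      (continuous_const.update i continuous_id).measurable)
  have h2 : YI G z = ∫⁻ y in G, ∑ i, ENNReal.ofReal (Vol (Function.update z i y)) := by
    rw [lintegral_finsetSum _ fun i _ => hum i, YI]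
  have hm2 : Measurable fun y => ∑ i, ENNReal.ofReal (Vol (Function.update z i y)) :=
    Finset.measurable_sum _ fun i _ => hum i
  rw [h2]
  refine le_trans ?_ (mul_meas_ge_le_lintegral hm2 (ENNReal.ofReal lam))
  refine mul_le_mul' le_rfl ?_
  rw [Measure.restrict_apply (measurableSet_le measurable_const hm2)]
  refine measure_mono fun y hy => ⟨?_, hy.1⟩
  obtain ⟨i, hi⟩ := hy.2
  exact (ENNReal.ofReal_le_ofReal hi.le).trans (Finset.single_le_sum
    (f := fun i => ENNReal.ofReal (Vol (Function.update z i y))) (fun _ _ => bot_le) (Finset.mem_univ i))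

/-- Lemma C0 -/
lemma good_simplex {n : ℕ} (hn : 1 ≤ n) (G H : Set (Vec n)) (hH : MeasurableSet H) (h : ℝ)
    (hh : 0 < h) (hv : volume H = ENNReal.ofReal h) :
    ∃ z : Fin (n + 1) → Vec n, (∀ i, z i ∈ H) ∧ h / CB n ≤ Vol z ∧ ∀ lam : ℝ, 0 < lam →
      ENNReal.ofReal (h ^ n * lam) * volume {y ∈ G | ∃ i, lam < Vol (Function.update z i y)} ≤
        ENNReal.ofReal (2 * (n + 2) * (n + 1)) * XI G H := by
  set Γ := {z : Fin (n + 1) → Vec n | (∀ i, z i ∈ H) ∧ h / CB n ≤ Vol z} with hΓ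
  have hB := many_simplices hn H hH h hh hv
  rw [← hΓ] at hB
  have hΓ0 : volume Γ ≠ 0 := by
    intro h0
    rw [h0, mul_zero] at hB
    have : 0 < ENNReal.ofReal (h ^ (n+1)) := ENNReal.ofReal_pos.2 (by positivity)
    exact absurd hB (not_le.2 this)
  have hΓsub : Γ ⊆ (Set.univ.pi fun _ : Fin (n + 1) => H) := fun z hz i _ => hz.1 i
  have hΓt : volume Γ ≠ ⊤ := by
    refine ne_top_of_le_ne_top ?_ (measure_mono hΓsub)
    rw [volume_pi_pi]; simp [hv]
  let Y := YI G
  have hYm : Measurable Y := measurable_YI G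
  have hYi : ∫⁻ z in Γ, Y z ≤ (n + 1 : ℕ) * (ENNReal.ofReal h * XI G H) := by
    refine (lintegral_mono_set hΓsub).trans ?_
    simp only [Y, YI]
    rw [lintegral_finsetSum _ fun i _ => (measurable_updV i).lintegral_prod_right']
    simp_rw [XI_swap G H _ hH, hv]
    simp
  obtain ⟨z, hz, hzY⟩ := exists_le_setLAverage hΓ0 hΓt hYm.aemeasurable
  refine ⟨z, hz.1, hz.2, fun lam hl => ?_⟩
  have h1 := YI_markov G z lam
  rw [setLAverage_eq, ENNReal.le_div_iff_mul_le (Or.inl hΓ0) (Or.inl hΓt)] at hzY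
  have h3 : ENNReal.ofReal h * (ENNReal.ofReal (h ^ n) * Y z) ≤
      ENNReal.ofReal h * (ENNReal.ofReal (2 * (n + 2) * (n + 1)) * XI G H) := by
    calc ENNReal.ofReal h * (ENNReal.ofReal (h ^ n) * Y z) = ENNReal.ofReal (h ^ (n + 1)) * Y z := by
          rw [← mul_assoc, ← ENNReal.ofReal_mul hh.le, pow_succ, mul_comm h]
      _ ≤ ENNReal.ofReal (2 * (n + 2)) * volume Γ * Y z := by gcongr
      _ = ENNReal.ofReal (2 * (n + 2)) * (Y z * volume Γ) := by ring
      _ ≤ ENNReal.ofReal (2 * (n + 2)) * ((n + 1 : ℕ) * (ENNReal.ofReal h * XI G H)) := by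
          exact mul_le_mul' le_rfl (hzY.trans hYi)
      _ = _ := by
          rw [ENNReal.ofReal_mul (q := (n + 1 : ℝ)) (by positivity)]
          have : ((n + 1 : ℕ) : ℝ≥0∞) = ENNReal.ofReal (n + 1 : ℝ) := by
            rw [← ENNReal.ofReal_natCast]; simp
          rw [this]; ring
  have h4 := (ENNReal.mul_le_mul_iff_right (by simpa using hh) ENNReal.ofReal_ne_top).1 h3
  refine le_trans ?_ h4
  rw [ENNReal.ofReal_mul (by positivity), mul_assoc]
  gcongr

/-- Lemma C -/
lemma XI_lower {n : ℕ} (hn : 1 ≤ n) : ∃ C : ℝ, 0 < C ∧ ∀ G H : Set (Vec n),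
    MeasurableSet H → volume G ≠ ⊤ → volume H ≠ ⊤ →
    volume G ^ (n + 1) * volume H ^ (n ^ 2 + n - 1) ≤ ENNReal.ofReal C * XI G H ^ n := by
  have hn' : (0:ℝ) < n := by exact_mod_cast hn
  have hCB := CB_pos hn
  set D : ℝ := 2 * (n + 2) * (n + 1) with hD
  have hD0 : 0 < D := by positivity
  refine ⟨2 * (2 * n) ^ n * CB n ^ (n - 1) * (2 * D) ^ n, by positivity, ?_⟩
  intro G H hH hGt hHt
  obtain ⟨g, hg0, hg⟩ : ∃ g : ℝ, 0 ≤ g ∧ volume G = ENNReal.ofReal g :=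
    ⟨(volume G).toReal, ENNReal.toReal_nonneg, (ENNReal.ofReal_toReal hGt).symm⟩
  obtain ⟨h, hh0, hv⟩ : ∃ h : ℝ, 0 ≤ h ∧ volume H = ENNReal.ofReal h :=
    ⟨(volume H).toReal, ENNReal.toReal_nonneg, (ENNReal.ofReal_toReal hHt).symm⟩
  have hexp : n ^ 2 + n - 1 ≠ 0 := by
    have : 1 ≤ n ^ 2 := Nat.one_le_pow _ _ hn
    omega
  rcases hg0.eq_or_lt with rfl | hg0
  · simp [hg]
  rcases hh0.eq_or_lt with rfl | hh0
  · simp [hv, hexp]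
  by_cases hX : XI G H = ⊤
  · rw [hX, ENNReal.top_pow (by omega), ENNReal.mul_top]
    · exact le_top
    · simp only [ne_eq, ENNReal.ofReal_eq_zero, not_le]; positivity
  obtain ⟨x, hx0, hx⟩ : ∃ x : ℝ, 0 ≤ x ∧ XI G H = ENNReal.ofReal x :=
    ⟨(XI G H).toReal, ENNReal.toReal_nonneg, (ENNReal.ofReal_toReal hX).symm⟩
  rw [hg, hv, hx, ← ENNReal.ofReal_pow hg0.le, ← ENNReal.ofReal_pow hh0.le,
    ← ENNReal.ofReal_pow hx0, ← ENNReal.ofReal_mul (by positivity),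
    ← ENNReal.ofReal_mul (by positivity)]
  refine ENNReal.ofReal_le_ofReal ?_
  obtain ⟨z, hz1, hz2, hz3⟩ := good_simplex hn G H hH h hh0 hv
  have hz0 : 0 < Vol z := lt_of_lt_of_le (by positivity) hz2
  have key : ∀ x' : ℝ, x ≤ x' → 0 < x' → g ^ (n + 1) * h ^ (n ^ 2 + n - 1) ≤
      2 * (2 * n) ^ n * CB n ^ (n - 1) * (2 * D) ^ n * x' ^ n := by
    intro x' hxx hx'
    set lam := 2 * D * x' / (h ^ n * g) with hlam
    have hl : 0 < lam := by positivity
    have h1 := hz3 lam hl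
    rw [hx, ← ENNReal.ofReal_mul (by positivity)] at h1
    have h2 := vol_par hn z hz0 lam hl
    set A := {y ∈ G | ∃ i, lam < Vol (Function.update z i y)}
    set B := {y : Vec n | ∀ i, Vol (Function.update z i y) ≤ lam}
    have hsub : G ⊆ A ∪ B := by
      intro y hy
      by_cases hyB : ∀ i, Vol (Function.update z i y) ≤ lam
      · exact Or.inr hyB
      · push Not at hyB; exact Or.inl ⟨hy, hyB⟩
    have hAt : volume A ≠ ⊤ := ne_top_of_le_ne_top hGt (measure_mono fun y hy => hy.1)
    obtain ⟨α, hα0, hα⟩ : ∃ α : ℝ, 0 ≤ α ∧ volume A = ENNReal.ofReal α :=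
      ⟨(volume A).toReal, ENNReal.toReal_nonneg, (ENNReal.ofReal_toReal hAt).symm⟩
    have h3 := (measure_mono hsub).trans (measure_union_le (μ := volume) A B)
    replace h3 := h3.trans (add_le_add_right h2 _)
    rw [hα, ← ENNReal.ofReal_mul (by positivity),
      ENNReal.ofReal_le_ofReal_iff (by positivity)] at h1
    rw [hg, hα, ← ENNReal.ofReal_add (by positivity) (by positivity),
      ENNReal.ofReal_le_ofReal_iff (by positivity)] at h3
    have h4 : α ≤ g / 2 := by
      have h5 : h ^ n * lam = 2 * D * x' / g := by rw [hlam]; field_simp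
      rw [h5] at h1
      have h6 : D * x ≤ D * x' := by gcongr
      have h7 : 2 * D * x' / g * α ≤ D * x' := by linarith
      have h8 : 0 < D * x' := by positivity
      have h9 : 2 * D * x' / g * α = (D * x') * (2 * α / g) := by ring
      rw [h9] at h7
      have h10 : 2 * α / g ≤ 1 := by
        by_contra hcon
        push Not at hcon
        nlinarith
      rw [div_le_one hg0] at h10
      linarith
    have h5 : g / 2 ≤ (2 * n) ^ n * lam ^ n / (h / CB n) ^ (n - 1) := by
      have : (2 * n) ^ n * lam ^ n / Vol z ^ (n - 1) ≤
          (2 * n) ^ n * lam ^ n / (h / CB n) ^ (n - 1) := by gcongr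
      linarith
    have h6 : (h ^ n * g) ^ n * (h ^ (n - 1)) * g =
        g ^ (n + 1) * h ^ (n ^ 2 + n - 1) := by
      have : n ^ 2 + n - 1 = n * n + (n - 1) := by rw [pow_two]; omega
      rw [this, pow_add h, pow_mul, mul_pow]; ring
    rw [← h6]
    rw [hlam, div_pow, div_pow, le_div_iff₀ (by positivity)] at h5
    rw [← mul_div_assoc ((2 * n : ℝ) ^ n), le_div_iff₀ (by positivity)] at h5
    have h7 : g / 2 * (h ^ (n - 1) / CB n ^ (n - 1)) * (h ^ n * g) ^ n =
      ((h ^ n * g) ^ n * h ^ (n - 1) * g) / (2 * CB n ^ (n - 1)) := by field_simp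
    rw [h7, div_le_iff₀ (by positivity)] at h5
    refine h5.trans (le_of_eq ?_)
    rw [mul_pow (2 * D)]; ring
  rcases hx0.eq_or_lt with h0 | h0
  · have htend : Filter.Tendsto (fun x' : ℝ =>
        2 * (2 * n) ^ n * CB n ^ (n - 1) * (2 * D) ^ n * x' ^ n) (nhdsWithin 0 (Set.Ioi 0))
        (nhds (2 * (2 * n) ^ n * CB n ^ (n - 1) * (2 * D) ^ n * 0 ^ n)) := by
      refine Filter.Tendsto.mono_left ?_ nhdsWithin_le_nhds
      exact Continuous.tendsto (by fun_prop) 0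
    rw [← h0]
    refine ge_of_tendsto htend ?_
    filter_upwards [self_mem_nhdsWithin] with x' hx'
    exact key x' (by rw [← h0]; exact le_of_lt hx') hx'
  · exact key x le_rfl h0
end

noncomputable section

/-- coordinate boxes -/
def bx {n : ℕ} (b : OrthonormalBasis (Fin n) ℝ (Vec n)) (a : Vec n) (r : Fin n → ℝ) : Set (Vec n) :=
  {y : Vec n | ∀ j, |⟪y - a, b j⟫| ≤ r j}

lemma measurableSet_bx {n : ℕ} (b : OrthonormalBasis (Fin n) ℝ (Vec n)) (a : Vec n)
    (r : Fin n → ℝ) : MeasurableSet (bx b a r) := by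
  have : bx b a r = ⋂ j, {y : Vec n | |⟪y - a, b j⟫| ≤ r j} := by ext; simp [bx]
  rw [this]
  exact MeasurableSet.iInter fun j => measurableSet_le (by fun_prop) measurable_const

lemma vol_affine (A : Set ℝ) (a b : ℝ) (hb : b ≠ 0) :
    volume {t : ℝ | a + b * t ∈ A} = ENNReal.ofReal |b⁻¹| * volume A := by
  have h := Real.volume_preimage_mul_left hb ((fun t => a + t) ⁻¹' A)
  rw [measure_preimage_add] at h
  exact h

lemma slice_key {n : ℕ} (b : OrthonormalBasis (Fin n) ℝ (Vec n)) (x0 : Vec n) (r : Fin n → ℝ)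
    (hr : ∀ j, 0 < r j) (c : ℝ) (hc : 1 ≤ |c|) (s : ℝ) (w : Vec n) (A : Set ℝ)
    (hA : MeasurableSet A) (j : Fin n) (hw : ⟪w, b j⟫ ≠ 0) :
    ENNReal.ofReal (r j * |⟪w, b j⟫|) * volume {x' ∈ bx b x0 r | s + c * ⟪x', w⟫ ∈ A} ≤
      ENNReal.ofReal (2 ^ n * ∏ i, r i) * volume A := by
  set Q := {x' ∈ bx b x0 r | s + c * ⟪x', w⟫ ∈ A} with hQ
  set wj := ⟪w, b j⟫ with hwj
  have hcw : c * wj ≠ 0 := mul_ne_zero (by intro h; simp [h] at hc; linarith) hw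
  have hQm : MeasurableSet Q :=
    (measurableSet_bx b x0 r).inter (hA.preimage (f := fun x' : Vec n => s + c * ⟪x', w⟫) (by fun_prop))
  set r' := Function.update r j (2 * r j) with hr'
  have h1 : ∀ t : ℝ, ∫⁻ x' : Vec n, Q.indicator 1 (x' + t • b j) = volume Q := by
    intro t
    rw [lintegral_add_right_eq_self (μ := volume) (Q.indicator (1 : Vec n → ℝ≥0∞)) (t • b j),
      lintegral_indicator_one hQm]
  have hmeas : Measurable fun p : Vec n × ℝ => Q.indicator (1 : Vec n → ℝ≥0∞) (p.1 + p.2 • b j) :=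
    (measurable_one.indicator hQm).comp (by fun_prop)
  have h2 : ENNReal.ofReal (2 * r j) * volume Q =
      ∫⁻ x' : Vec n, ∫⁻ t in Set.Icc (-r j) (r j), Q.indicator 1 (x' + t • b j) := by
    rw [lintegral_lintegral_swap hmeas.aemeasurable]
    simp_rw [h1]
    simp only [lintegral_const, MeasurableSet.univ, Measure.restrict_apply, Set.univ_inter,
      Real.volume_Icc]
    rw [mul_comm]; congr 2; ring
  have h3 : ∀ x' : Vec n, ∫⁻ t in Set.Icc (-r j) (r j), Q.indicator (1 : Vec n → ℝ≥0∞) (x' + t • b j) ≤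
      (bx b x0 r').indicator (fun _ => ENNReal.ofReal |(c * wj)⁻¹| * volume A) x' := by
    intro x'
    by_cases hx : x' ∈ bx b x0 r'
    · rw [Set.indicator_of_mem hx]
      refine (setLIntegral_le_lintegral _ _).trans ?_
      rw [← vol_affine A (s + c * ⟪x', w⟫) (c * wj) hcw]
      have hms : MeasurableSet {t : ℝ | s + c * ⟪x', w⟫ + c * wj * t ∈ A} :=
        hA.preimage (f := fun t : ℝ => s + c * ⟪x', w⟫ + c * wj * t) (by fun_prop)
      rw [← lintegral_indicator_one hms]
      refine lintegral_mono fun t => ?_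
      refine Set.indicator_le_indicator_of_subset (s := (fun t => x' + t • b j) ⁻¹' Q) (f := fun _ => (1 : ℝ≥0∞)) ?_ (fun _ => bot_le) t
      intro t ht
      have h4 : s + c * ⟪x' + t • b j, w⟫ ∈ A := ht.2
      rw [inner_add_left, real_inner_smul_left, real_inner_comm w (b j)] at h4
      have h5 : s + c * (⟪x', w⟫ + t * ⟪w, b j⟫) = s + c * ⟪x', w⟫ + c * wj * t := by
        rw [hwj]; ring
      rw [h5] at h4
      exact h4
    · rw [Set.indicator_of_notMem hx]
      refine le_of_eq ?_
      rw [setLIntegral_congr_fun (g := fun _ => 0) measurableSet_Icc]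
      · simp
      · intro t ht
        refine Set.indicator_of_notMem ?_ _
        intro hq
        apply hx
        intro i
        have h4 := hq.1 i
        have h5 : ⟪x' + t • b j - x0, b i⟫ = ⟪x' - x0, b i⟫ + t * ⟪b j, b i⟫ := by
          rw [add_sub_right_comm, inner_add_left, real_inner_smul_left]
        rw [h5] at h4
        by_cases hij : i = j
        · subst hij
          rw [real_inner_self_eq_norm_sq, b.orthonormal.1] at h4
          simp only [hr', Function.update_self]
          rw [abs_le] at h4 ⊢
          constructor <;> linarith [ht.1, ht.2]
        · rw [b.orthonormal.2 (fun h => hij h.symm)] at h4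
          simpa [hr', hij] using h4
  have h4 := lintegral_mono (μ := volume) h3
  rw [← h2, lintegral_indicator_const (measurableSet_bx b x0 r'), bx,
    vol_box b x0 r' (fun i => by
      by_cases hij : i = j
      · subst hij; simp [hr', (hr i).le]
      · simp [hr', hij, (hr i).le])] at h4
  have hprod : ∏ i, r' i = 2 * ∏ i, r i := by
    rw [hr', Finset.prod_update_of_mem (Finset.mem_univ j), mul_assoc]
    congr 1
    rw [← Finset.prod_sdiff (Finset.subset_univ {j})]
    simp [mul_comm]
  rw [hprod] at h4
  have hP : 0 < ∏ i, r i := Finset.prod_pos fun i _ => hr i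
  have hwp : 0 < |wj| := abs_pos.2 hw
  calc ENNReal.ofReal (r j * |wj|) * volume Q
      = ENNReal.ofReal (|wj| / 2) * (ENNReal.ofReal (2 * r j) * volume Q) := by
        rw [← mul_assoc, ← ENNReal.ofReal_mul (by positivity)]; congr 2; ring
    _ ≤ ENNReal.ofReal (|wj| / 2) * (ENNReal.ofReal |(c * wj)⁻¹| * volume A *
          ENNReal.ofReal (2 ^ n * (2 * ∏ i, r i))) := mul_le_mul' le_rfl h4
    _ = ENNReal.ofReal (|wj| / 2 * |(c * wj)⁻¹| * (2 ^ n * (2 * ∏ i, r i))) * volume A := by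
        rw [ENNReal.ofReal_mul (p := |wj| / 2 * |(c * wj)⁻¹|) (by positivity),
          ENNReal.ofReal_mul (p := |wj| / 2) (by positivity)]
        generalize ENNReal.ofReal (2 ^ n * (2 * ∏ i, r i)) = q
        ring
    _ ≤ _ := by
        refine mul_le_mul' (ENNReal.ofReal_le_ofReal ?_) le_rfl
        rw [abs_inv, abs_mul]
        have : |wj| / 2 * (|c| * |wj|)⁻¹ * (2 ^ n * (2 * ∏ i, r i)) = (2 ^ n * ∏ i, r i) / |c| := by
          field_simp
        rw [this]
        exact div_le_self (by positivity) hc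

lemma measurableSet_far {n : ℕ} (b : OrthonormalBasis (Fin n) ℝ (Vec n)) (r : Fin n → ℝ)
    (y0 : Vec n) (θ : ℝ) (j : Fin n) : MeasurableSet {y' : Vec n | θ < r j * |⟪y' - y0, b j⟫|} :=
  measurableSet_lt measurable_const (by fun_prop)

lemma fub_set {α β : Type*} [MeasureSpace α] [MeasureSpace β] [SFinite (volume : Measure α)]
    [SFinite (volume : Measure β)] (B : Set α) (M : Set (α × β)) (hM : MeasurableSet M) :
    ∫⁻ x in B, volume {y | (x, y) ∈ M} = ∫⁻ y, volume {x ∈ B | (x, y) ∈ M} := by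
  have h1 := Measure.prod_apply (μ := volume.restrict B) (ν := (volume : Measure β)) hM
  have h2 := Measure.prod_apply_symm (μ := volume.restrict B) (ν := (volume : Measure β)) hM
  refine h1.symm.trans (h2.trans (lintegral_congr fun y => ?_))
  rw [Measure.restrict_apply (hM.preimage measurable_prodMk_right), Set.inter_comm]
  rfl

lemma measurable_fub {α β : Type*} [MeasureSpace α] [MeasureSpace β] [SFinite (volume : Measure α)]
    [SFinite (volume : Measure β)] (B : Set α) (M : Set (α × β)) (hM : MeasurableSet M) :
    Measurable fun y => volume {x ∈ B | (x, y) ∈ M} := by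
  have h := measurable_measure_prodMk_right (μ := volume.restrict B) hM
  have heq : (fun y => volume {x ∈ B | (x, y) ∈ M}) =
      fun y => (volume.restrict B) ((fun x => (x, y)) ⁻¹' M) := by
    funext y
    rw [Measure.restrict_apply (hM.preimage measurable_prodMk_right), Set.inter_comm]
    rfl
  rw [heq]
  exact h

/-- Lemma S3 -/
lemma slicing {n : ℕ} (b : OrthonormalBasis (Fin n) ℝ (Vec n)) (x0 : Vec n) (r : Fin n → ℝ)
    (hr : ∀ j, 0 < r j) (c : ℝ) (hc : 1 ≤ |c|) (S : Set (Vec n)) (hS : S ⊆ bx b x0 r)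
    (F : Set (Pt n)) (hF : MeasurableSet F) (y0 : Vec n) (v0 : ℝ) (θ : ℝ) (hθ : 0 < θ) :
    ENNReal.ofReal θ * ∫⁻ x' in S, volume {y' : Vec n | (y', v0 + c * ⟪x', y' - y0⟫) ∈ F ∧
      ∃ j, θ < r j * |⟪y' - y0, b j⟫|} ≤ ENNReal.ofReal (n * 2 ^ n * ∏ j, r j) * volume F := by
  have hP : 0 < ∏ i, r i := Finset.prod_pos fun i _ => hr i
  have hM : ∀ j, MeasurableSet {p : Vec n × Vec n | (p.2, v0 + c * ⟪p.1, p.2 - y0⟫) ∈ F ∧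
      θ < r j * |⟪p.2 - y0, b j⟫|} := fun j =>
    (hF.preimage (f := fun p : Vec n × Vec n => (p.2, v0 + c * ⟪p.1, p.2 - y0⟫)) (by fun_prop)).inter
      ((measurableSet_far b r y0 θ j).preimage measurable_snd)
  have hone : ∀ j, ENNReal.ofReal θ * ∫⁻ x' in bx b x0 r,
      volume {y' : Vec n | (y', v0 + c * ⟪x', y' - y0⟫) ∈ F ∧ θ < r j * |⟪y' - y0, b j⟫|} ≤
      ENNReal.ofReal (2 ^ n * ∏ j, r j) * volume F := by
    intro j
    have h1 := fub_set (bx b x0 r) _ (hM j)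
    refine (congrArg (ENNReal.ofReal θ * ·) h1).trans_le ?_
    rw [← lintegral_const_mul]
    swap
    · exact measurable_fub (bx b x0 r) _ (hM j)
    rw [Measure.volume_eq_prod, Measure.prod_apply hF, ← lintegral_const_mul _
      (measurable_measure_prodMk_left hF)]
    refine lintegral_mono fun y' => ?_
    dsimp only
    by_cases hy : θ < r j * |⟪y' - y0, b j⟫|
    · have hw : ⟪y' - y0, b j⟫ ≠ 0 := by
        intro h; rw [h] at hy; simp at hy; linarith
      have h2 := slice_key b x0 r hr c hc v0 (y' - y0) (Prod.mk y' ⁻¹' F)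
        (hF.preimage measurable_prodMk_left) j hw
      refine le_trans ?_ h2
      refine mul_le_mul' (ENNReal.ofReal_le_ofReal hy.le) ?_
      exact measure_mono fun x' hx => ⟨hx.1, hx.2.1⟩
    · have : {x' ∈ bx b x0 r | (x', y') ∈ {p : Vec n × Vec n | (p.2, v0 + c * ⟪p.1, p.2 - y0⟫) ∈ F ∧
        θ < r j * |⟪p.2 - y0, b j⟫|}} = ∅ := by
        ext x'
        simp only [Set.mem_empty_iff_false, iff_false]
        exact fun h => hy h.2.2
      rw [this]
      simp
  have hM1 : ∀ j, Measurable fun x' : Vec n => volume {y' : Vec n | (y', v0 + c * ⟪x', y' - y0⟫) ∈ F ∧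
        θ < r j * |⟪y' - y0, b j⟫|} := fun j => measurable_measure_prodMk_left (hM j)
  calc _ ≤ ENNReal.ofReal θ * ∫⁻ x' in bx b x0 r, ∑ j,
      volume {y' : Vec n | (y', v0 + c * ⟪x', y' - y0⟫) ∈ F ∧ θ < r j * |⟪y' - y0, b j⟫|} := by
        refine mul_le_mul' le_rfl ?_
        refine (lintegral_mono_set hS).trans (lintegral_mono fun x' => ?_)
        refine le_trans (measure_mono ?_) (measure_iUnion_fintype_le _ _)
        rintro y' ⟨h1, j, h2⟩
        exact Set.mem_iUnion.2 ⟨j, h1, h2⟩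
    _ = ∑ j, ENNReal.ofReal θ * ∫⁻ x' in bx b x0 r,
      volume {y' : Vec n | (y', v0 + c * ⟪x', y' - y0⟫) ∈ F ∧ θ < r j * |⟪y' - y0, b j⟫|} := by
        rw [lintegral_finsetSum _ fun j _ => hM1 j, Finset.mul_sum]
    _ ≤ ∑ j : Fin n, ENNReal.ofReal (2 ^ n * ∏ j, r j) * volume F := Finset.sum_le_sum fun j _ => hone j
    _ = _ := by
        rw [Finset.sum_const, Finset.card_univ, Fintype.card_fin, nsmul_eq_mul, mul_assoc (n : ℝ),
          ENNReal.ofReal_mul (p := (n : ℝ)) (by positivity), ENNReal.ofReal_natCast, mul_assoc]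
end

noncomputable section

/-- slices in Radon coordinates -/
def sl {n : ℕ} (c : ℝ) (F : Set (Pt n)) (x : Pt n) : Set (Vec n) :=
  {y' | (y', x.2 + c * ⟪x.1, y'⟫) ∈ F}

lemma sl_mono {n : ℕ} (c : ℝ) {F F' : Set (Pt n)} (h : F ⊆ F') (x : Pt n) : sl c F x ⊆ sl c F' x :=
  fun _ hy => h hy

lemma sl_subset {n : ℕ} (c : ℝ) (F : Set (Pt n)) (x : Pt n) : sl c F x ⊆ Prod.fst '' F :=
  fun _ hy => ⟨_, hy, rfl⟩

lemma measurableSet_sl {n : ℕ} (c : ℝ) {F : Set (Pt n)} (hF : MeasurableSet F) (x : Pt n) :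
    MeasurableSet (sl c F x) :=
  hF.preimage (f := fun y' : Vec n => (y', x.2 + c * ⟪x.1, y'⟫)) (by fun_prop)

lemma measurable_vol_sl {n : ℕ} (c : ℝ) {F : Set (Pt n)} (hF : MeasurableSet F) :
    Measurable fun x => volume (sl c F x) := by
  have hM : MeasurableSet {p : Pt n × Vec n | (p.2, p.1.2 + c * ⟪p.1.1, p.2⟫) ∈ F} :=
    hF.preimage (f := fun p : Pt n × Vec n => (p.2, p.1.2 + c * ⟪p.1.1, p.2⟫)) (by fun_prop)
  exact measurable_measure_prodMk_left hM

/-- parametrization of the incidence manifold -/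
def incMap {n : ℕ} (c : ℝ) (p : Pt n × Vec n) : Pt n × Pt n :=
  (p.1, (p.2, p.1.2 + c * ⟪p.1.1, p.2⟫))

lemma measurable_incMap {n : ℕ} (c : ℝ) : Measurable (incMap (n := n) c) := by
  unfold incMap; fun_prop

/-- incidence measure -/
def Lam (n : ℕ) (c : ℝ) : Measure (Pt n × Pt n) :=
  (volume : Measure (Pt n × Vec n)).map (incMap c)

lemma Lam_apply {n : ℕ} (c : ℝ) {M : Set (Pt n × Pt n)} (hM : MeasurableSet M) :
    Lam n c M = ∫⁻ x : Pt n, volume {y' : Vec n | (x, (y', x.2 + c * ⟪x.1, y'⟫)) ∈ M} := by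
  rw [Lam, Measure.map_apply (measurable_incMap c) hM, Measure.volume_eq_prod,
    Measure.prod_apply (hM.preimage (measurable_incMap c))]
  rfl

lemma Lam_apply' {n : ℕ} (c : ℝ) {M : Set (Pt n × Pt n)} (hM : MeasurableSet M) :
    Lam n c M = ∫⁻ y : Pt n, volume {x' : Vec n | ((x', y.2 + -c * ⟪y.1, x'⟫), y) ∈ M} := by
  rw [Lam_apply c hM]
  have h := swap_inc c (fun x y => M.indicator (1 : Pt n × Pt n → ℝ≥0∞) (x, y))
    (measurable_one.indicator hM)
  have h1 : ∀ x : Pt n, ∫⁻ y' : Vec n, M.indicator (1 : Pt n × Pt n → ℝ≥0∞)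
      (x, (y', x.2 + c * ⟪x.1, y'⟫)) =
      volume {y' : Vec n | (x, (y', x.2 + c * ⟪x.1, y'⟫)) ∈ M} := by
    intro x
    rw [← lintegral_indicator_one]
    · rfl
    · exact hM.preimage (f := fun y' : Vec n => (x, (y', x.2 + c * ⟪x.1, y'⟫))) (by fun_prop)
  have h2 : ∀ y : Pt n, ∫⁻ x' : Vec n, M.indicator (1 : Pt n × Pt n → ℝ≥0∞)
      ((x', y.2 - c * ⟪x', y.1⟫), y) =
      volume {x' : Vec n | ((x', y.2 + -c * ⟪y.1, x'⟫), y) ∈ M} := by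
    intro y
    rw [← lintegral_indicator_one]
    · refine lintegral_congr fun x' => ?_
      have : y.2 - c * ⟪x', y.1⟫ = y.2 + -c * ⟪y.1, x'⟫ := by
        rw [real_inner_comm]; ring
      rw [this]
      rfl
    · exact hM.preimage (f := fun x' : Vec n => ((x', y.2 + -c * ⟪y.1, x'⟫), y)) (by fun_prop)
  simp_rw [h1, h2] at h
  exact h

lemma Lam_prod {n : ℕ} (c : ℝ) {E F : Set (Pt n)} (hE : MeasurableSet E) (hF : MeasurableSet F) :
    Lam n c (E ×ˢ F) = ∫⁻ x in E, volume (sl c F x) := by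
  rw [Lam_apply c (hE.prod hF), ← lintegral_indicator hE]
  refine lintegral_congr fun x => ?_
  by_cases hx : x ∈ E
  · rw [Set.indicator_of_mem hx]; simp [hx, sl]
  · rw [Set.indicator_of_notMem hx]; simp [hx]

lemma Lam_prod' {n : ℕ} (c : ℝ) {E F : Set (Pt n)} (hE : MeasurableSet E) (hF : MeasurableSet F) :
    Lam n c (E ×ˢ F) = ∫⁻ y in F, volume (sl (-c) E y) := by
  rw [Lam_apply' c (hE.prod hF), ← lintegral_indicator hF]
  refine lintegral_congr fun x => ?_
  by_cases hx : x ∈ F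
  · rw [Set.indicator_of_mem hx]; simp [hx, sl]
  · rw [Set.indicator_of_notMem hx]; simp [hx]

lemma Lam_inc {n : ℕ} (c : ℝ) {M : Set (Pt n × Pt n)} (hM : MeasurableSet M)
    (h : Lam n c M ≠ 0) : ∃ z ∈ M, z.2.2 = z.1.2 + c * ⟪z.1.1, z.2.1⟫ := by
  rw [Lam, Measure.map_apply (measurable_incMap c) hM] at h
  obtain ⟨p, hp⟩ := nonempty_of_measure_ne_zero h
  exact ⟨_, hp, rfl⟩

lemma Lam_inter_inc {n : ℕ} (c : ℝ) {M : Set (Pt n × Pt n)} (hM : MeasurableSet M) :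
    Lam n c (M ∩ {z | z.2.2 = z.1.2 + c * ⟪z.1.1, z.2.1⟫}) = Lam n c M := by
  have hI : MeasurableSet {z : Pt n × Pt n | z.2.2 = z.1.2 + c * ⟪z.1.1, z.2.1⟫} :=
    measurableSet_eq_fun (by fun_prop) (by fun_prop)
  rw [Lam, Measure.map_apply (measurable_incMap c) hM,
    Measure.map_apply (measurable_incMap c) (hM.inter hI)]
  congr 1
  ext p
  simp [incMap]

lemma XI_eq {n : ℕ} (G H : Set (Vec n)) (hG : MeasurableSet G) (hH : MeasurableSet H) :
    XI G H = ∫⁻ z : Fin (n + 1) → Vec n,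
      (∏ i, (Fin.cons (G.indicator 1) (fun _ => H.indicator 1) :
        Fin (n + 1) → Vec n → ℝ≥0∞) i (z i)) * ENNReal.ofReal (Vol z) := by
  have he := volume_preserving_piFinSuccAbove (fun _ : Fin (n+1) => Vec n) 0
  have hm1 : Measurable fun p : Vec n × (Fin n → Vec n) =>
      G.indicator (1 : Vec n → ℝ≥0∞) p.1 * ∏ i, H.indicator (1 : Vec n → ℝ≥0∞) (p.2 i) := by
    refine ((measurable_one.indicator hG).comp measurable_fst).mul
      (Finset.measurable_prod _ fun i _ => (measurable_one.indicator hH).comp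
        ((measurable_pi_apply i).comp measurable_snd))
  have h1 := he.lintegral_comp (hm1.mul measurable_cons)
  have h2 : ∀ z : Fin (n + 1) → Vec n,
      (∏ i, (Fin.cons (G.indicator 1) (fun _ => H.indicator 1) :
        Fin (n + 1) → Vec n → ℝ≥0∞) i (z i)) * ENNReal.ofReal (Vol z) =
      (fun p : Vec n × (Fin n → Vec n) =>
      G.indicator (1 : Vec n → ℝ≥0∞) p.1 * (∏ i, H.indicator (1 : Vec n → ℝ≥0∞) (p.2 i)) *
       ENNReal.ofReal (Vol (Fin.cons p.1 p.2 : Fin (n + 1) → Vec n)))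
       (MeasurableEquiv.piFinSuccAbove (fun _ : Fin (n+1) => Vec n) 0 z) := by
    intro z
    rw [Fin.prod_univ_succ]
    have h3 : (Fin.cons (z 0) (fun k : Fin n => z k.succ) : Fin (n + 1) → Vec n) = z :=
      Fin.cons_self_tail z
    conv_lhs => rw [← h3]
    rfl
  simp_rw [h2]
  refine Eq.trans ?_ h1.symm
  rw [Measure.volume_eq_prod, lintegral_prod _ (hm1.mul measurable_cons).aemeasurable]
  unfold XI
  rw [← lintegral_indicator hG]
  refine lintegral_congr fun y => ?_
  by_cases hy : y ∈ G
  · rw [Set.indicator_of_mem hy]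
    rw [← lintegral_indicator (MeasurableSet.univ_pi fun _ => hH)]
    refine lintegral_congr fun w => ?_
    simp only [Set.indicator_of_mem hy, Pi.one_apply, one_mul, Pi.mul_apply]
    by_cases hw : w ∈ Set.univ.pi fun _ : Fin n => H
    · rw [Set.indicator_of_mem hw, Finset.prod_eq_one, one_mul]
      intro i _
      exact Set.indicator_of_mem (hw i trivial) _
    · rw [Set.indicator_of_notMem hw]
      simp only [Set.mem_pi, Set.mem_univ, true_imp_iff, not_forall] at hw
      obtain ⟨i, hi⟩ := hw
      rw [Finset.prod_eq_zero (Finset.mem_univ i) (Set.indicator_of_notMem hi _), zero_mul]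
  · simp [Set.indicator_of_notMem hy]

lemma XI_drury {n : ℕ} (c : ℝ) (hc : 1 ≤ |c|) {F F' : Set (Pt n)} (hF : MeasurableSet F)
    (hF' : MeasurableSet F') :
    ∫⁻ x : Pt n, XI (sl c F x) (sl c F' x) ≤ volume F * volume F' ^ n := by
  have h := drury c hc (Fin.cons (F.indicator 1) (fun _ => F'.indicator 1)) (by
    intro i
    refine Fin.cases ?_ (fun i => ?_) i
    · exact measurable_one.indicator hF
    · exact measurable_one.indicator hF')
  rw [Fin.prod_univ_succ] at h
  simp only [Fin.cons_zero, Fin.cons_succ, lintegral_indicator_one hF,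
    lintegral_indicator_one hF', Finset.prod_const, Finset.card_univ, Fintype.card_fin] at h
  refine le_trans (le_of_eq (lintegral_congr fun x => ?_)) h
  rw [XI_eq _ _ (measurableSet_sl c hF x) (measurableSet_sl c hF' x)]
  refine lintegral_congr fun z => ?_
  congr 1
  refine Finset.prod_congr rfl fun i _ => ?_
  refine Fin.cases ?_ (fun i => ?_) i <;> rfl
end

noncomputable section

/-- the normalized setting of the set theorem -/
structure Setup (n : ℕ) (c : ℝ) (E F : Set (Pt n)) (α β ρ K : ℝ) : Prop where
  hn : 1 ≤ n
  hc1 : 1 ≤ |c|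
  hc2 : |c| ≤ 2
  hE : MeasurableSet E
  hF : MeasurableSet F
  hEs : volume (Prod.fst '' E) ≠ ⊤
  hFs : volume (Prod.fst '' F) ≠ ⊤
  hα : 0 < α
  hβ : 0 < β
  hρ : 0 < ρ
  hK1 : 1 ≤ K
  vE : volume E = ENNReal.ofReal (ρ * β)
  vF : volume F = ENNReal.ofReal (ρ * α)
  vT : Lam n c (E ×ˢ F) = ENNReal.ofReal (ρ * α * β)
  hK : ρ ^ n ≤ K * (α * β)

/-- points with large slices -/
def Fgood {n : ℕ} (c : ℝ) (E F : Set (Pt n)) (β : ℝ) : Set (Pt n) :=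
  {y ∈ F | ENNReal.ofReal (β / 20) < volume (sl (-c) E y)}

/-- points with small slices -/
def Fbad {n : ℕ} (c : ℝ) (E F : Set (Pt n)) (β : ℝ) : Set (Pt n) :=
  {y ∈ F | volume (sl (-c) E y) ≤ ENNReal.ofReal (β / 20)}

/-- bad points of `E` -/
def Ebad {n : ℕ} (c : ℝ) (E F : Set (Pt n)) (α β : ℝ) : Set (Pt n) :=
  {x ∈ E | volume (sl c F x) ≤ ENNReal.ofReal (α / 20) + 2 * volume (sl c (Fbad c E F β) x)}

section
variable {n : ℕ} {c : ℝ} {E F : Set (Pt n)} {α β ρ K : ℝ}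

lemma Setup.mFgood (h : Setup n c E F α β ρ K) : MeasurableSet (Fgood c E F β) :=
  h.hF.inter (measurableSet_lt measurable_const (measurable_vol_sl (-c) h.hE))

lemma Setup.mFbad (h : Setup n c E F α β ρ K) : MeasurableSet (Fbad c E F β) :=
  h.hF.inter (measurableSet_le (measurable_vol_sl (-c) h.hE) measurable_const)

lemma Setup.mEbad (h : Setup n c E F α β ρ K) : MeasurableSet (Ebad c E F α β) :=
  h.hE.inter (measurableSet_le (measurable_vol_sl c h.hF)
    (measurable_const.add ((measurable_vol_sl c h.mFbad).const_mul 2)))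

lemma Setup.finE (h : Setup n c E F α β ρ K) {E' : Set (Pt n)} (hE' : E' ⊆ E) (c' : ℝ) (y : Pt n) :
    volume (sl c' E' y) ≠ ⊤ :=
  ne_top_of_le_ne_top h.hEs (measure_mono ((sl_subset c' E' y).trans (Set.image_mono hE')))

lemma Setup.finF (h : Setup n c E F α β ρ K) {F' : Set (Pt n)} (hF' : F' ⊆ F) (c' : ℝ) (y : Pt n) :
    volume (sl c' F' y) ≠ ⊤ :=
  ne_top_of_le_ne_top h.hFs (measure_mono ((sl_subset c' F' y).trans (Set.image_mono hF')))

lemma Setup.bad1 (h : Setup n c E F α β ρ K) :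
    Lam n c (E ×ˢ Fbad c E F β) ≤ ENNReal.ofReal (ρ * α * β / 20) := by
  have hβ := h.hβ
  rw [Lam_prod' c h.hE h.mFbad]
  calc _ ≤ ∫⁻ y in Fbad c E F β, ENNReal.ofReal (β / 20) :=
        setLIntegral_mono measurable_const fun y hy => hy.2
    _ ≤ ENNReal.ofReal (β / 20) * volume F := by
        rw [setLIntegral_const]
        exact mul_le_mul' le_rfl (measure_mono fun y hy => hy.1)
    _ = _ := by
        rw [h.vF, ← ENNReal.ofReal_mul (by positivity)]; congr 1; ring

lemma Setup.bad2 (h : Setup n c E F α β ρ K) :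
    Lam n c (Ebad c E F α β ×ˢ F) ≤ ENNReal.ofReal (3 * (ρ * α * β) / 20) := by
  have hα := h.hα
  have hβ := h.hβ
  have hρ := h.hρ
  rw [Lam_prod c h.mEbad h.hF]
  calc _ ≤ ∫⁻ x in Ebad c E F α β, (ENNReal.ofReal (α / 20) +
          2 * volume (sl c (Fbad c E F β) x)) :=
        setLIntegral_mono (measurable_const.add ((measurable_vol_sl c h.mFbad).const_mul 2))
          fun y hy => hy.2
    _ ≤ ∫⁻ x in E, (ENNReal.ofReal (α / 20) +
          2 * volume (sl c (Fbad c E F β) x)) := lintegral_mono_set fun x hx => hx.1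
    _ = ENNReal.ofReal (α / 20) * volume E + 2 * Lam n c (E ×ˢ Fbad c E F β) := by
        rw [lintegral_add_left measurable_const, setLIntegral_const,
          lintegral_const_mul _ (measurable_vol_sl c h.mFbad), Lam_prod c h.hE h.mFbad]
    _ ≤ ENNReal.ofReal (α / 20) * ENNReal.ofReal (ρ * β) +
          ENNReal.ofReal 2 * ENNReal.ofReal (ρ * α * β / 20) := by
        rw [h.vE]
        exact add_le_add le_rfl (mul_le_mul' (by simp) h.bad1)
    _ = _ := by
        rw [← ENNReal.ofReal_mul (by positivity), ← ENNReal.ofReal_mul (by positivity),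
          ← ENNReal.ofReal_add (by positivity) (by positivity)]
        congr 1; ring

lemma Setup.stepA (h : Setup n c E F α β ρ K) : ∃ y0 : Pt n,
    ENNReal.ofReal (β / 20) < volume (sl (-c) E y0) ∧
    4 * volume (sl (-c) (Ebad c E F α β) y0) < volume (sl (-c) E y0) ∧
    XI (sl (-c) E y0) (sl (-c) E y0) <
      ENNReal.ofReal (20 * K * β ^ (n + 1)) * volume (sl (-c) E y0) := by
  by_contra hcon
  push Not at hcon
  have hα := h.hα
  have hβ := h.hβ
  have hρ := h.hρ
  have hK0 : 0 < K := by linarith [h.hK1]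
  set D := ENNReal.ofReal (20 * K * β ^ (n + 1)) with hD
  have hpt : ∀ y : Pt n, D * volume (sl (-c) E y) ≤
      (D * (ENNReal.ofReal (β / 20) + 4 * volume (sl (-c) (Ebad c E F α β) y))) +
        XI (sl (-c) E y) (sl (-c) E y) := by
    intro y
    by_cases h1 : ENNReal.ofReal (β / 20) < volume (sl (-c) E y)
    · by_cases h2 : 4 * volume (sl (-c) (Ebad c E F α β) y) < volume (sl (-c) E y)
      · exact (hcon y h1 h2).trans le_add_self
      · exact le_add_right (mul_le_mul' le_rfl (le_add_left (not_lt.1 h2)))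
    · exact le_add_right (mul_le_mul' le_rfl (le_add_right (not_lt.1 h1)))
  have hmm : Measurable fun y : Pt n =>
      (ENNReal.ofReal (β / 20) + 4 * volume (sl (-c) (Ebad c E F α β) y)) :=
    measurable_const.add ((measurable_vol_sl (-c) h.mEbad).const_mul 4)
  have hintg := lintegral_mono (μ := volume.restrict F) hpt
  rw [lintegral_const_mul _ (measurable_vol_sl (-c) h.hE), ← Lam_prod' c h.hE h.hF, h.vT,
    lintegral_add_left (hmm.const_mul D), lintegral_const_mul _ hmm,
    lintegral_add_left measurable_const, setLIntegral_const,
    lintegral_const_mul _ (measurable_vol_sl (-c) h.mEbad), ← Lam_prod' c h.mEbad h.hF, h.vF] at hintg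
  have hX : ∫⁻ y in F, XI (sl (-c) E y) (sl (-c) E y) ≤ ENNReal.ofReal ((ρ * β) ^ (n + 1)) := by
    refine (setLIntegral_le_lintegral _ _).trans
      ((XI_drury (-c) (by rw [abs_neg]; exact h.hc1) h.hE h.hE).trans ?_)
    rw [h.vE, ← pow_succ', ENNReal.ofReal_pow (by positivity)]
  have hfin : D * ENNReal.ofReal (ρ * α * β) ≤ D * (ENNReal.ofReal (β / 20) * ENNReal.ofReal (ρ * α)
      + ENNReal.ofReal 4 * ENNReal.ofReal (3 * (ρ * α * β) / 20)) +
      ENNReal.ofReal ((ρ * β) ^ (n + 1)) := by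
    refine hintg.trans (add_le_add (mul_le_mul' le_rfl (add_le_add le_rfl ?_)) hX)
    rw [show (4 : ℝ≥0∞) = ENNReal.ofReal 4 by simp]
    exact mul_le_mul' le_rfl h.bad2
  rw [hD, ← ENNReal.ofReal_mul (by positivity), ← ENNReal.ofReal_mul (by positivity),
    ← ENNReal.ofReal_mul (by positivity),
    ← ENNReal.ofReal_add (by positivity) (by positivity), ← ENNReal.ofReal_mul (by positivity),
    ← ENNReal.ofReal_add (by positivity) (by positivity),
    ENNReal.ofReal_le_ofReal_iff (by positivity)] at hfin
  have h5 : (ρ * β) ^ (n + 1) ≤ K * (α * β) * ρ * β ^ (n + 1) := by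
    rw [mul_pow, pow_succ ρ]
    have := h.hK
    gcongr
  have h6 : 0 < K * β ^ (n + 1) * (ρ * α * β) := by positivity
  nlinarith [h5, h6, hfin]

end

/-- constant -/
def K2 (n : ℕ) (K : ℝ) : ℝ := 4 * (2 * (n + 2) * (n + 1)) * (20 * K) * 20 ^ n
/-- constant -/
def K3 (n : ℕ) (K : ℝ) : ℝ := (n : ℝ) ^ n * K2 n K ^ n * (20 * CB n) ^ (n - 1)

lemma K2_pos {n : ℕ} {K : ℝ} (hK : 1 ≤ K) : 0 < K2 n K := by
  unfold K2; positivity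

lemma K3_pos {n : ℕ} (hn : 1 ≤ n) {K : ℝ} (hK : 1 ≤ K) : 0 < K3 n K := by
  have := K2_pos (n := n) hK
  have := CB_pos hn
  have : (0:ℝ) < n := by exact_mod_cast hn
  unfold K3; positivity

section
variable {n : ℕ} {c : ℝ} {E F : Set (Pt n)} {α β ρ K : ℝ}

lemma Setup.stepB (h : Setup n c E F α β ρ K) : ∃ (y0 : Pt n)
    (b : OrthonormalBasis (Fin n) ℝ (Vec n)) (xb : Vec n) (r : Fin n → ℝ) (S0 : Set (Vec n)),
    (∀ j, 0 < r j) ∧ ∏ j, r j ≤ K3 n K * β ∧ MeasurableSet S0 ∧ S0 ⊆ bx b xb r ∧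
    ENNReal.ofReal (β / 40) ≤ volume S0 ∧
    ∀ x' ∈ S0, ENNReal.ofReal (α / 20) ≤
      volume (sl c (Fgood c E F β) (x', y0.2 + -c * ⟪y0.1, x'⟫)) := by
  have hα := h.hα
  have hβ := h.hβ
  have hρ := h.hρ
  have hK0 : 0 < K := by linarith [h.hK1]
  obtain ⟨y0, hA1, hA2, hA3⟩ := h.stepA
  set S := sl (-c) E y0 with hS
  have hSm : MeasurableSet S := measurableSet_sl _ h.hE _
  have hSf : volume S ≠ ⊤ := h.finE subset_rfl _ _
  set hh := (volume S).toReal with hhd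
  have hvS : volume S = ENNReal.ofReal hh := (ENNReal.ofReal_toReal hSf).symm
  rw [hvS] at hA1
  have hh0 : β / 20 < hh := by
    rwa [ENNReal.ofReal_lt_ofReal_iff_of_nonneg (by positivity)] at hA1
  have hhp : 0 < hh := by linarith [div_pos hβ (by norm_num : (0:ℝ) < 20)]
  have hk2 := K2_pos (n := n) h.hK1
  have hCB := CB_pos h.hn
  obtain ⟨z, hzS, hzV, hzm⟩ := good_simplex h.hn S S hSm hh hhp hvS
  set lam := K2 n K * β with hlam
  have hlam0 : 0 < lam := by positivity
  have hVz : 0 < Vol z := lt_of_lt_of_le (by positivity) hzV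
  obtain ⟨b, r, hr, hrV, hrb⟩ := par_box z hVz lam hlam0
  set Bd := {y ∈ S | ∃ i, lam < Vol (Function.update z i y)} with hBd
  have hBd4 : 4 * volume Bd ≤ volume S := by
    have h1 := hzm lam hlam0
    have h2 : ENNReal.ofReal (hh ^ n * lam) * volume Bd ≤
        ENNReal.ofReal (2 * (n + 2) * (n + 1)) *
          (ENNReal.ofReal (20 * K * β ^ (n + 1)) * ENNReal.ofReal hh) := by
      refine h1.trans (mul_le_mul' le_rfl ?_)
      rw [← hvS]; exact hA3.le
    have h3 : ENNReal.ofReal ((β / 20) ^ n * lam) * volume Bd ≤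
        ENNReal.ofReal (2 * (n + 2) * (n + 1)) *
          (ENNReal.ofReal (20 * K * β ^ (n + 1)) * ENNReal.ofReal hh) := by
      refine le_trans (mul_le_mul' (ENNReal.ofReal_le_ofReal ?_) le_rfl) h2
      gcongr
    have h4 : (β / 20) ^ n * lam = 4 * (2 * (n + 2) * (n + 1)) * (20 * K * β ^ (n + 1)) := by
      rw [hlam, K2, div_pow, pow_succ]; field_simp
    have h5 : ENNReal.ofReal (2 * (n + 2) * (n + 1)) *
          (ENNReal.ofReal (20 * K * β ^ (n + 1)) * ENNReal.ofReal hh) =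
        ENNReal.ofReal ((2 * (n + 2) * (n + 1)) * (20 * K * β ^ (n + 1))) * volume S := by
      rw [ENNReal.ofReal_mul (p := 2 * ((n:ℝ) + 2) * (n + 1)) (by positivity), hvS, ← mul_assoc]
    rw [h4, h5, mul_assoc (4:ℝ), mul_comm (4:ℝ),
      ENNReal.ofReal_mul (q := 4) (by positivity), mul_assoc,
      ENNReal.mul_le_mul_iff_right (ENNReal.ofReal_pos.2 (by positivity)).ne' ENNReal.ofReal_ne_top]
      at h3
    simpa using h3
  have hBdm : MeasurableSet Bd := by
    have : Bd = S ∩ ⋃ i, {y | lam < Vol (Function.update z i y)} := by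
      ext y; simp [hBd]
    rw [this]
    refine hSm.inter (MeasurableSet.iUnion fun i => ?_)
    exact measurableSet_lt measurable_const
      (continuous_Vol.measurable.comp (continuous_const.update i continuous_id).measurable)
  set S0 := (S \ sl (-c) (Ebad c E F α β) y0) \ Bd with hS0
  have hEbm : MeasurableSet (sl (-c) (Ebad c E F α β) y0) := measurableSet_sl _ h.mEbad _
  refine ⟨y0, b, z 0, r, S0, hr, ?_, (hSm.diff hEbm).diff hBdm, ?_, ?_, ?_⟩
  · -- product bound
    obtain ⟨m, rfl⟩ : ∃ m, n = m + 1 := ⟨n - 1, by have := h.hn; omega⟩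
    have hV : β / (20 * CB (m + 1)) ≤ Vol z := by
      refine le_trans ?_ hzV
      rw [div_le_div_iff₀ (by positivity) hCB]
      nlinarith [mul_lt_mul_of_pos_right hh0 hCB]
    have hP : 0 < ∏ j, r j := Finset.prod_pos fun j _ => hr j
    have h1 : (∏ j, r j) * Vol z ^ m = ((m + 1 : ℕ) : ℝ) ^ (m + 1) * lam ^ (m + 1) := by
      have := hrV
      rw [pow_succ (Vol z), ← mul_assoc] at this
      exact mul_right_cancel₀ hVz.ne' this
    have h2 : (∏ j, r j) * (β / (20 * CB (m + 1))) ^ m ≤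
        ((m + 1 : ℕ) : ℝ) ^ (m + 1) * lam ^ (m + 1) := by
      rw [← h1]; gcongr
    rw [K3, Nat.add_sub_cancel]
    rw [hlam, mul_pow, div_pow] at h2
    have h3 : 0 < (20 * CB (m + 1)) ^ m := by positivity
    rw [← mul_div_assoc, div_le_iff₀ h3, pow_succ β] at h2
    have h4 : 0 < β ^ m := by positivity
    refine le_of_mul_le_mul_right ?_ h4
    linarith
  · intro y hy
    refine hrb y fun i => ?_
    by_contra hcon
    exact hy.2 ⟨hy.1.1, i, not_le.1 hcon⟩
  · have hle : volume S ≤ volume S0 + (volume (sl (-c) (Ebad c E F α β) y0) + volume Bd) := by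
      refine (measure_mono ?_).trans ((measure_union_le S0 _).trans
        (add_le_add le_rfl (measure_union_le _ _)))
      intro y hy
      by_cases h1 : y ∈ sl (-c) (Ebad c E F α β) y0
      · exact Or.inr (Or.inl h1)
      · by_cases h2 : y ∈ Bd
        · exact Or.inr (Or.inr h2)
        · exact Or.inl ⟨⟨hy, h1⟩, h2⟩
    have f1 : volume S0 ≠ ⊤ := ne_top_of_le_ne_top hSf (measure_mono fun y hy => hy.1.1)
    have f2 : volume Bd ≠ ⊤ := ne_top_of_le_ne_top hSf (measure_mono fun y hy => hy.1)
    have f3 : volume (sl (-c) (Ebad c E F α β) y0) ≠ ⊤ := h.finE (fun x hx => hx.1) _ _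
    rw [hvS] at hle hA2 hBd4
    rw [← ENNReal.ofReal_toReal f1] at hle ⊢
    rw [← ENNReal.ofReal_toReal f2] at hle hBd4
    rw [← ENNReal.ofReal_toReal f3] at hle hA2
    rw [show (4 : ℝ≥0∞) = ENNReal.ofReal 4 by simp, ← ENNReal.ofReal_mul (by norm_num)] at hA2 hBd4
    rw [← ENNReal.ofReal_add (by positivity) (by positivity),
      ← ENNReal.ofReal_add (by positivity) (by positivity),
      ENNReal.ofReal_le_ofReal_iff (by positivity)] at hle
    rw [ENNReal.ofReal_lt_ofReal_iff hhp] at hA2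
    rw [ENNReal.ofReal_le_ofReal_iff hhp.le] at hBd4
    refine ENNReal.ofReal_le_ofReal ?_
    linarith
  · intro x' hx'
    set x : Pt n := (x', y0.2 + -c * ⟪y0.1, x'⟫) with hx
    have hxE : x ∈ E := hx'.1.1
    have hxb : x ∉ Ebad c E F α β := hx'.1.2
    have h1 : ENNReal.ofReal (α / 20) + 2 * volume (sl c (Fbad c E F β) x) <
        volume (sl c F x) := by
      by_contra hcon
      exact hxb ⟨hxE, not_lt.1 hcon⟩
    have h2 : volume (sl c F x) ≤ volume (sl c (Fgood c E F β) x) + volume (sl c (Fbad c E F β) x) := by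
      refine (measure_mono ?_).trans (measure_union_le _ _)
      intro y hy
      by_cases h3 : ENNReal.ofReal (β / 20) <
          volume (sl (-c) E ((y, x.2 + c * ⟪x.1, y⟫) : Pt n))
      · exact Or.inl ⟨hy, h3⟩
      · exact Or.inr ⟨hy, not_lt.1 h3⟩
    have f1 : volume (sl c (Fbad c E F β) x) ≠ ⊤ := h.finF (fun x hx => hx.1) _ _
    have h3 := h1.le.trans h2
    rw [two_mul, ← add_assoc] at h3
    exact (le_add_right le_rfl).trans ((ENNReal.add_le_add_iff_right f1).1 h3)
end
end

noncomputable section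

lemma markov_set {α : Type*} [MeasureSpace α] (S : Set α) (hS : MeasurableSet S)
    (g : α → ℝ≥0∞) (hg : Measurable g) (a : ℝ≥0∞) :
    a * volume {x ∈ S | a ≤ g x} ≤ ∫⁻ x in S, g x := by
  have h := mul_meas_ge_le_lintegral (μ := volume.restrict S) hg a
  rw [Measure.restrict_apply' hS] at h
  refine le_trans (mul_le_mul' le_rfl (measure_mono ?_)) h
  exact fun x hx => ⟨hx.2, hx.1⟩

lemma vol_sub {α : Type*} [MeasureSpace α] {A N M : Set α} (hA : A ⊆ N ∪ M) {p q : ℝ}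
    (hq : 0 ≤ q) (hp : ENNReal.ofReal p ≤ volume A) (hM : volume M ≤ ENNReal.ofReal q) :
    ENNReal.ofReal (p - q) ≤ volume N := by
  rw [ENNReal.ofReal_sub p hq, tsub_le_iff_right]
  exact hp.trans ((measure_mono hA).trans ((measure_union_le _ _).trans (add_le_add le_rfl hM)))

/-- far part of a slice -/
def farS {n : ℕ} (b : OrthonormalBasis (Fin n) ℝ (Vec n)) (r : Fin n → ℝ) (c : ℝ) (F : Set (Pt n))
    (y0 : Vec n) (v0 θ : ℝ) (x' : Vec n) : Set (Vec n) :=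
  {y' : Vec n | (y', v0 + c * ⟪x', y' - y0⟫) ∈ F ∧ ∃ j, θ < r j * |⟪y' - y0, b j⟫|}

lemma measurable_farS {n : ℕ} (b : OrthonormalBasis (Fin n) ℝ (Vec n)) (r : Fin n → ℝ) (c : ℝ)
    {F : Set (Pt n)} (hF : MeasurableSet F) (y0 : Vec n) (v0 θ : ℝ) :
    Measurable fun x' => volume (farS b r c F y0 v0 θ x') := by
  have hM : MeasurableSet {p : Vec n × Vec n | (p.2, v0 + c * ⟪p.1, p.2 - y0⟫) ∈ F ∧
      ∃ j, θ < r j * |⟪p.2 - y0, b j⟫|} := by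
    refine (hF.preimage (f := fun p : Vec n × Vec n => (p.2, v0 + c * ⟪p.1, p.2 - y0⟫))
      (by fun_prop)).inter ?_
    have : {p : Vec n × Vec n | ∃ j, θ < r j * |⟪p.2 - y0, b j⟫|} =
        ⋃ j, Prod.snd ⁻¹' {y' : Vec n | θ < r j * |⟪y' - y0, b j⟫|} := by
      ext; simp
    refine (congrArg MeasurableSet this).mpr ?_
    exact MeasurableSet.iUnion fun j => (measurableSet_far b r y0 θ j).preimage measurable_snd
  exact measurable_measure_prodMk_left hM

lemma markov_slice {n : ℕ} (b : OrthonormalBasis (Fin n) ℝ (Vec n)) (x0 : Vec n) (r : Fin n → ℝ)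
    (hr : ∀ j, 0 < r j) (c : ℝ) (hc : 1 ≤ |c|) (S : Set (Vec n)) (hS : S ⊆ bx b x0 r)
    (hSm : MeasurableSet S)
    (F : Set (Pt n)) (hF : MeasurableSet F) (y0 : Vec n) (v0 : ℝ) (θ : ℝ) (hθ : 0 < θ)
    (a : ℝ) (ha : 0 < a) (f : ℝ) (hf : volume F ≤ ENNReal.ofReal f) :
    volume {x' ∈ S | ENNReal.ofReal a ≤ volume (farS b r c F y0 v0 θ x')} ≤
      ENNReal.ofReal (n * 2 ^ n * (∏ j, r j) * f / (θ * a)) := by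
  have hP : 0 < ∏ i, r i := Finset.prod_pos fun i _ => hr i
  have h1 := markov_set S hSm _ (measurable_farS b r c hF y0 v0 θ) (ENNReal.ofReal a)
  have h2 := slicing b x0 r hr c hc S hS F hF y0 v0 θ hθ
  have h3 := (mul_le_mul' (le_refl (ENNReal.ofReal θ)) h1).trans
    (h2.trans (mul_le_mul' le_rfl hf))
  rw [← mul_assoc, ← ENNReal.ofReal_mul hθ.le, ← ENNReal.ofReal_mul (by positivity)] at h3
  rw [ENNReal.ofReal_div_of_pos (by positivity), ENNReal.le_div_iff_mul_le
    (Or.inl (ENNReal.ofReal_pos.2 (by positivity)).ne') (Or.inl ENNReal.ofReal_ne_top), mul_comm]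
  exact h3

lemma sl_lift {n : ℕ} (c : ℝ) (F : Set (Pt n)) (y0 : Pt n) (x' : Vec n) :
    sl c F (x', y0.2 + -c * ⟪y0.1, x'⟫) = {y' | (y', y0.2 + c * ⟪x', y' - y0.1⟫) ∈ F} := by
  ext y'
  have : y0.2 + -c * ⟪y0.1, x'⟫ + c * ⟪x', y'⟫ = y0.2 + c * ⟪x', y' - y0.1⟫ := by
    rw [inner_sub_right, real_inner_comm y0.1 x']; ring
  show (y', y0.2 + -c * ⟪y0.1, x'⟫ + c * ⟪x', y'⟫) ∈ F ↔ _
  rw [this]; rfl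

/-- constant -/
def K4 (n : ℕ) (K : ℝ) : ℝ := 3200 * n * 2 ^ n * K3 n K
/-- constant -/
def K5 (n : ℕ) (K : ℝ) : ℝ := 128000 * n * 4 ^ n * K4 n K ^ (n - 1) * K
/-- constant -/
def K6 (n : ℕ) (K : ℝ) : ℝ := 6400 * 4 ^ n * K
/-- constant -/
def K7 (n : ℕ) (K : ℝ) : ℝ := 512000 * n * 2 ^ n * K3 n K * K6 n K

lemma inner_abs_le {n : ℕ} (b : OrthonormalBasis (Fin n) ℝ (Vec n)) (x y : Vec n) (r s : Fin n → ℝ)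
    (M : ℝ) (hr : ∀ j, 0 < r j) (hx : ∀ j, |⟪x, b j⟫| ≤ r j * M) (hy : ∀ j, r j * |⟪y, b j⟫| ≤ s j) :
    |⟪x, y⟫| ≤ M * ∑ j, s j := by
  rw [← b.sum_inner_mul_inner x y, Finset.mul_sum]
  refine (Finset.abs_sum_le_sum_abs _ _).trans (Finset.sum_le_sum fun j _ => ?_)
  rw [abs_mul, real_inner_comm y (b j)]
  have hM : 0 ≤ M := by
    have := (abs_nonneg _).trans (hx j)
    by_contra hcon
    nlinarith [hr j]
  calc |⟪x, b j⟫| * |⟪y, b j⟫| ≤ r j * M * |⟪y, b j⟫| := by gcongr; exact hx j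
    _ = M * (r j * |⟪y, b j⟫|) := by ring
    _ ≤ _ := by gcongr; exact hy j

section
variable {n : ℕ} {c : ℝ} {E F : Set (Pt n)} {α β ρ K : ℝ}

lemma Setup.stepE (h : Setup n c E F α β ρ K) : ∃ (y0 : Pt n)
    (b : OrthonormalBasis (Fin n) ℝ (Vec n)) (xb : Vec n) (r : Fin n → ℝ) (E' F' : Set (Pt n)),
    (∀ j, 0 < r j) ∧ ∏ j, r j ≤ K3 n K * β ∧ β / 40 ≤ 2 ^ n * ∏ j, r j ∧
    E' ⊆ E ∧ F' ⊆ F ∧ MeasurableSet E' ∧ MeasurableSet F' ∧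
    (∀ x ∈ E', ∀ j, |⟪x.1 - xb, b j⟫| ≤ (K5 n K + 1) * r j) ∧
    (∀ y ∈ F', ∀ j, r j * |⟪y.1 - y0.1, b j⟫| ≤ K4 n K * ρ) ∧
    (∀ y ∈ F', |y.2 - y0.2 - c * ⟪xb, y.1 - y0.1⟫| ≤ 2 * n * K4 n K * ρ) ∧
    ENNReal.ofReal (ρ * α * β) ≤ ENNReal.ofReal (K7 n K) * Lam n c (E' ×ˢ F') := by
  have hα := h.hα
  have hβ := h.hβ
  have hρ := h.hρ
  have hK0 : 0 < K := by linarith [h.hK1]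
  have hn0 : (0:ℝ) < n := by exact_mod_cast h.hn
  have hk3 := K3_pos h.hn h.hK1
  have hk4 : 0 < K4 n K := by unfold K4; positivity
  have hk5 : 0 < K5 n K := by unfold K5; positivity
  have hk6 : 0 < K6 n K := by unfold K6; positivity
  obtain ⟨y0, b, xb, r, S0, hr, hrK, hS0m, hS0b, hS0v, hS0g⟩ := h.stepB
  have hP : 0 < ∏ i, r i := Finset.prod_pos fun i _ => hr i
  have hPl : β / 40 ≤ 2 ^ n * ∏ j, r j := by
    have h1 := hS0v.trans (measure_mono hS0b)
    rw [bx, vol_box b xb r fun j => (hr j).le, ENNReal.ofReal_le_ofReal_iff (by positivity)] at h1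
    exact h1
  set Fg := Fgood c E F β with hFg
  have hFgm : MeasurableSet Fg := h.mFgood
  have hFgF : Fg ⊆ F := fun y hy => hy.1
  set ρ1 := K4 n K * ρ with hρ1
  have hρ10 : 0 < ρ1 := by positivity
  -- step C
  set S1 := {x' ∈ S0 | volume (farS b r c Fg y0.1 y0.2 ρ1 x') < ENNReal.ofReal (α / 40)} with hS1
  have hS1m : MeasurableSet S1 :=
    hS0m.inter (measurableSet_lt (measurable_farS b r c hFgm y0.1 y0.2 ρ1) measurable_const)
  have hS1b : S1 ⊆ bx b xb r := fun x hx => hS0b hx.1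
  have hS1v : ENNReal.ofReal (β / 80) ≤ volume S1 := by
    have h1 := markov_slice b xb r hr c h.hc1 S0 hS0b hS0m Fg hFgm y0.1 y0.2 ρ1 hρ10 (α / 40)
      (by positivity) (ρ * α) (h.vF ▸ measure_mono hFgF)
    have h2 : n * 2 ^ n * (∏ j, r j) * (ρ * α) / (ρ1 * (α / 40)) ≤ β / 80 := by
      rw [div_le_iff₀ (by positivity), hρ1, K4]
      have : n * 2 ^ n * (∏ j, r j) * (ρ * α) ≤ n * 2 ^ n * (K3 n K * β) * (ρ * α) := by gcongr
      refine this.trans (le_of_eq ?_)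
      ring
    have h3 := vol_sub (A := S0) (N := S1) (q := β / 80) (by
      intro x hx
      by_cases hx1 : volume (farS b r c Fg y0.1 y0.2 ρ1 x) < ENNReal.ofReal (α / 40)
      · exact Or.inl ⟨hx, hx1⟩
      · exact Or.inr ⟨hx, not_lt.1 hx1⟩) (by positivity) hS0v (h1.trans (ENNReal.ofReal_le_ofReal h2))
    refine le_trans (ENNReal.ofReal_le_ofReal ?_) h3
    linarith
  -- the near part
  set Eb := E ∩ Prod.fst ⁻¹' bx b xb (fun j => (K5 n K + 1) * r j) with hEb
  have hEbm : MeasurableSet Eb := h.hE.inter ((measurableSet_bx _ _ _).preimage measurable_fst)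
  set Fgg := {y ∈ F | (∀ j, r j * |⟪y.1 - y0.1, b j⟫| ≤ ρ1) ∧
    |y.2 - y0.2 - c * ⟪xb, y.1 - y0.1⟫| ≤ 2 * n * K4 n K * ρ ∧
    ENNReal.ofReal (β / 40) ≤ volume (sl (-c) Eb y)} with hFgg
  have hFggm : MeasurableSet Fgg := by
    refine h.hF.inter (MeasurableSet.inter ?_ (MeasurableSet.inter ?_ ?_))
    · have : {y : Pt n | ∀ j, r j * |⟪y.1 - y0.1, b j⟫| ≤ ρ1} =
          ⋂ j, {y : Pt n | r j * |⟪y.1 - y0.1, b j⟫| ≤ ρ1} := by ext; simp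
      refine (congrArg MeasurableSet this).mpr ?_
      exact MeasurableSet.iInter fun j => measurableSet_le (by fun_prop) measurable_const
    · exact measurableSet_le (f := fun y : Pt n => |y.2 - y0.2 - c * ⟪xb, y.1 - y0.1⟫|)
        (by fun_prop) measurable_const
    · exact measurableSet_le measurable_const (measurable_vol_sl (-c) hEbm)
  -- step D
  have hD : ∀ x' ∈ S1, ENNReal.ofReal (α / 80) ≤
      volume {y' | (y', y0.2 + c * ⟪x', y' - y0.1⟫) ∈ Fgg} := by
    intro x' hx'
    have hx'g := hS0g x' hx'.1
    rw [sl_lift] at hx'g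
    set G' := {y' : Vec n | (y', y0.2 + c * ⟪x', y' - y0.1⟫) ∈ Fg} ∩
      bx b y0.1 (fun j => ρ1 / r j) with hG'
    have hG'm : MeasurableSet G' := by
      refine MeasurableSet.inter ?_ (measurableSet_bx _ _ _)
      exact hFgm.preimage (f := fun y' : Vec n => (y', y0.2 + c * ⟪x', y' - y0.1⟫)) (by fun_prop)
    have hG'v : ENNReal.ofReal (α / 40) ≤ volume G' := by
      have h3 := vol_sub (N := G') (q := α / 40) (by
        intro y hy
        by_cases hy1 : y ∈ bx b y0.1 (fun j => ρ1 / r j)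
        · exact Or.inl ⟨hy, hy1⟩
        · refine Or.inr (show y ∈ farS b r c Fg y0.1 y0.2 ρ1 x' from ⟨hy, ?_⟩)
          simp only [bx, Set.mem_ofPred_eq, not_forall, not_le] at hy1
          obtain ⟨j, hj⟩ := hy1
          refine ⟨j, ?_⟩
          rwa [div_lt_iff₀' (hr j)] at hj) (by positivity) hx'g hx'.2.le
      refine le_trans (ENNReal.ofReal_le_ofReal ?_) h3
      linarith
    set u := y0.2 + -c * ⟪y0.1, x'⟫ with hu
    have h1 := markov_slice b y0.1 (fun j => ρ1 / r j) (fun j => div_pos hρ10 (hr j)) (-c)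
      (by rw [abs_neg]; exact h.hc1) G' Set.inter_subset_right hG'm E h.hE x' u (K5 n K * ρ1)
      (by positivity) (β / 40) (by positivity) (ρ * β) h.vE.le
    have h2 : n * 2 ^ n * (∏ j, ρ1 / r j) * (ρ * β) / (K5 n K * ρ1 * (β / 40)) ≤ α / 80 := by
      rw [Finset.prod_div_distrib, Finset.prod_const, Finset.card_univ, Fintype.card_fin]
      rw [div_le_iff₀ (by positivity)]
      have e1 : ρ1 ^ n / (∏ j, r j) ≤ ρ1 ^ n * (40 * 2 ^ n) / β := by
        rw [div_le_div_iff₀ hP hβ, mul_assoc]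
        refine mul_le_mul_of_nonneg_left ?_ (by positivity)
        linarith
      calc n * 2 ^ n * (ρ1 ^ n / ∏ j, r j) * (ρ * β)
          ≤ n * 2 ^ n * (ρ1 ^ n * (40 * 2 ^ n) / β) * (ρ * β) := by gcongr
        _ = 40 * n * (2 ^ n * 2 ^ n) * K4 n K ^ (n - 1) * ρ1 * ρ ^ n := by
            obtain ⟨m, hm⟩ : ∃ m, n = m + 1 := ⟨n - 1, by have := h.hn; omega⟩
            have e2 : ρ1 ^ n = K4 n K ^ (n - 1) * ρ1 * ρ ^ (n - 1) := by
              have : n - 1 = m := by omega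
              rw [this]
              conv_lhs => rw [hm, pow_succ, hρ1, mul_pow]
              rw [hρ1]; ring
            have e3 : ρ ^ n = ρ ^ (n - 1) * ρ := by
              rw [← pow_succ]; congr 1; omega
            rw [e2, e3]; field_simp
        _ ≤ 40 * n * (2 ^ n * 2 ^ n) * K4 n K ^ (n - 1) * ρ1 * (K * (α * β)) := by
            have := h.hK
            gcongr
        _ = _ := by
            rw [K5, ← mul_pow]; norm_num; ring
    have h3 := vol_sub (A := G') (N := {y' | (y', y0.2 + c * ⟪x', y' - y0.1⟫) ∈ Fgg}) (q := α / 80)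
      (by
        intro y' hy'
        by_cases hy1 : ENNReal.ofReal (β / 40) ≤
            volume (farS b (fun j => ρ1 / r j) (-c) E x' u (K5 n K * ρ1) y')
        · exact Or.inr ⟨hy', hy1⟩
        · refine Or.inl ?_
          rw [not_le] at hy1
          have hyb : ∀ j, r j * |⟪y' - y0.1, b j⟫| ≤ ρ1 := by
            intro j
            have := hy'.2 j
            rwa [le_div_iff₀' (hr j)] at this
          refine ⟨hFgF hy'.1, hyb, ?_, ?_⟩
          · have e1 : y0.2 + c * ⟪x', y' - y0.1⟫ - y0.2 - c * ⟪xb, y' - y0.1⟫ =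
                c * ⟪x' - xb, y' - y0.1⟫ := by rw [inner_sub_left]; ring
            show |y0.2 + c * ⟪x', y' - y0.1⟫ - y0.2 - c * ⟪xb, y' - y0.1⟫| ≤ _
            rw [e1, abs_mul]
            have e2 := inner_abs_le b (x' - xb) (y' - y0.1) r (fun _ => ρ1) 1 hr
              (fun j => by rw [mul_one]; exact hS1b hx' j) hyb
            rw [Finset.sum_const, Finset.card_univ, Fintype.card_fin, nsmul_eq_mul, one_mul] at e2
            calc |c| * |⟪x' - xb, y' - y0.1⟫| ≤ 2 * (n * ρ1) :=
                  mul_le_mul h.hc2 e2 (abs_nonneg _) (by norm_num)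
              _ = _ := by rw [hρ1]; ring
          · have e1 : ENNReal.ofReal (β / 20) <
                volume (sl (-c) E ((y', y0.2 + c * ⟪x', y' - y0.1⟫) : Pt n)) := hy'.1.2
            have e2 := vol_sub (N := sl (-c) Eb ((y', y0.2 + c * ⟪x', y' - y0.1⟫) : Pt n))
              (q := β / 40) (by
                intro x2 hx2
                by_cases hx3 : x2 ∈ bx b xb (fun j => (K5 n K + 1) * r j)
                · exact Or.inl ⟨hx2, hx3⟩
                · refine Or.inr (show x2 ∈ farS b (fun j => ρ1 / r j) (-c) E x' u (K5 n K * ρ1) y'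
                    from ⟨?_, ?_⟩)
                  · have e3 : u + -c * ⟪y', x2 - x'⟫ =
                        y0.2 + c * ⟪x', y' - y0.1⟫ + -c * ⟪y', x2⟫ := by
                      rw [hu, inner_sub_right, inner_sub_right, real_inner_comm x' y',
                        real_inner_comm y0.1 x']; ring
                    rw [e3]; exact hx2
                  · simp only [bx, Set.mem_ofPred_eq, not_forall, not_le] at hx3
                    obtain ⟨j, hj⟩ := hx3
                    refine ⟨j, ?_⟩
                    have e4 := hS1b hx' j
                    have e5 : ⟪x2 - xb, b j⟫ = ⟪x2 - x', b j⟫ + ⟪x' - xb, b j⟫ := by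
                      rw [← inner_add_left]; congr 1; abel
                    rw [e5] at hj
                    have e6 : K5 n K * r j < |⟪x2 - x', b j⟫| := by
                      have := abs_add_le ⟪x2 - x', b j⟫ ⟪x' - xb, b j⟫
                      linarith
                    rw [div_mul_eq_mul_div, lt_div_iff₀ (hr j)]
                    nlinarith [mul_lt_mul_of_pos_left e6 hρ10])
              (by positivity) e1.le hy1.le
            refine le_trans (ENNReal.ofReal_le_ofReal ?_) e2
            linarith)
      (by positivity) hG'v (h1.trans (ENNReal.ofReal_le_ofReal h2))
    refine le_trans (ENNReal.ofReal_le_ofReal ?_) h3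
    linarith
  -- step E
  set τ := ρ / K6 n K with hτ
  have hτ0 : 0 < τ := by positivity
  have hfar : ∀ x' ∈ S1, ENNReal.ofReal (α / 160) ≤ volume (farS b r c Fgg y0.1 y0.2 τ x') := by
    intro x' hx'
    have e1 : volume (bx b y0.1 (fun j => τ / r j)) ≤ ENNReal.ofReal (α / 160) := by
      rw [bx, vol_box b y0.1 _ fun j => (div_pos hτ0 (hr j)).le]
      refine ENNReal.ofReal_le_ofReal ?_
      rw [Finset.prod_div_distrib, Finset.prod_const, Finset.card_univ, Fintype.card_fin,
        ← mul_div_assoc, div_le_iff₀ hP]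
      have e2 : τ ^ n ≤ K * (α * β) / K6 n K := by
        rw [hτ, div_pow]
        have hk61 : 1 ≤ K6 n K := by
          have : (1:ℝ) ≤ 4 ^ n := one_le_pow₀ (by norm_num)
          have := mul_le_mul this h.hK1 (by norm_num) (by positivity)
          unfold K6; nlinarith
        have := h.hK
        refine div_le_div₀ (by positivity) this hk6 ?_
        exact le_self_pow₀ hk61 (by have := h.hn; omega)
      have e3 : (2:ℝ) ^ n * τ ^ n ≤ 2 ^ n * (K * (α * β) / K6 n K) := by gcongr
      have e4 : (2:ℝ) ^ n * (K * (α * β) / K6 n K) = (α / 160) * ((β / 40) / 2 ^ n) := by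
        rw [K6, show (4:ℝ) ^ n = 2 ^ n * 2 ^ n by rw [← mul_pow]; norm_num]
        field_simp; norm_num
      rw [e4] at e3
      refine e3.trans ?_
      gcongr
      rw [div_le_iff₀' (by positivity)]
      exact hPl
    have h3 := vol_sub (N := farS b r c Fgg y0.1 y0.2 τ x') (q := α / 160) (by
      intro y hy
      by_cases hy1 : y ∈ bx b y0.1 (fun j => τ / r j)
      · exact Or.inr hy1
      · refine Or.inl ⟨hy, ?_⟩
        simp only [bx, Set.mem_ofPred_eq, not_forall, not_le] at hy1
        obtain ⟨j, hj⟩ := hy1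
        refine ⟨j, ?_⟩
        rwa [div_lt_iff₀' (hr j)] at hj) (by positivity) (hD x' hx') e1
    refine le_trans (ENNReal.ofReal_le_ofReal ?_) h3
    linarith
  have hJ : ENNReal.ofReal (β / 40) * volume Fgg ≤ Lam n c (Eb ×ˢ Fgg) := by
    rw [Lam_prod' c hEbm hFggm, ← setLIntegral_const]
    exact setLIntegral_mono (measurable_vol_sl (-c) hEbm) fun y hy => hy.2.2.2
  have hE1 : ENNReal.ofReal (τ * (α / 160 * (β / 80))) ≤
      ENNReal.ofReal (n * 2 ^ n * (K3 n K * β)) * volume Fgg := by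
    have e1 := slicing b xb r hr c h.hc1 S1 hS1b Fgg hFggm y0.1 y0.2 τ hτ0
    have e2 : ENNReal.ofReal (α / 160) * ENNReal.ofReal (β / 80) ≤
        ∫⁻ x' in S1, volume (farS b r c Fgg y0.1 y0.2 τ x') := by
      refine (mul_le_mul' le_rfl hS1v).trans ?_
      rw [← setLIntegral_const]
      exact setLIntegral_mono (measurable_farS b r c hFggm y0.1 y0.2 τ) hfar
    rw [ENNReal.ofReal_mul hτ0.le, ENNReal.ofReal_mul (by positivity)]
    refine ((mul_le_mul' le_rfl e2).trans e1).trans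
      (mul_le_mul' (ENNReal.ofReal_le_ofReal ?_) le_rfl)
    gcongr
  refine ⟨y0, b, xb, r, Eb, Fgg, hr, hrK, hPl, Set.inter_subset_left, fun y hy => hy.1, hEbm, hFggm,
    fun x hx => hx.2, fun y hy => hy.2.1, fun y hy => hy.2.2.1, ?_⟩
  calc ENNReal.ofReal (ρ * α * β)
      = ENNReal.ofReal (12800 * K6 n K) * ENNReal.ofReal (τ * (α / 160 * (β / 80))) := by
        rw [← ENNReal.ofReal_mul (by positivity), hτ]; congr 1; field_simp; norm_num
    _ ≤ ENNReal.ofReal (12800 * K6 n K) *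
        (ENNReal.ofReal (n * 2 ^ n * (K3 n K * β)) * volume Fgg) := mul_le_mul' le_rfl hE1
    _ = ENNReal.ofReal (K7 n K) * (ENNReal.ofReal (β / 40) * volume Fgg) := by
        rw [← mul_assoc (ENNReal.ofReal (12800 * K6 n K)), ← mul_assoc (ENNReal.ofReal (K7 n K)),
          ← ENNReal.ofReal_mul (by positivity), ← ENNReal.ofReal_mul (by unfold K7; positivity), K7]
        congr 2; ring
    _ ≤ _ := mul_le_mul' le_rfl hJ
end
end

noncomputable section

lemma vol_slab {n : ℕ} (b : OrthonormalBasis (Fin n) ℝ (Vec n)) (a : Vec n) (r : Fin n → ℝ)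
    (hr : ∀ j, 0 ≤ r j) (ℓ : Vec n → ℝ) (hℓ : Measurable ℓ) (ρ : ℝ) :
    volume {x : Pt n | (∀ j, |⟪x.1 - a, b j⟫| < r j) ∧ |x.2 - ℓ x.1| < ρ} ≤
      ENNReal.ofReal (2 ^ n * ∏ j, r j) * ENNReal.ofReal (2 * ρ) := by
  have hm : MeasurableSet {x : Pt n | x.1 ∈ bx b a r ∧ |x.2 - ℓ x.1| < ρ} :=
    ((measurableSet_bx b a r).preimage measurable_fst).inter
      (measurableSet_lt (f := fun x : Pt n => |x.2 - ℓ x.1|)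
        (by
          have this : Measurable fun x : Pt n => ℓ x.1 := hℓ.comp measurable_fst
          exact (measurable_snd.sub this).abs) measurable_const)
  refine (measure_mono (t := {x : Pt n | x.1 ∈ bx b a r ∧ |x.2 - ℓ x.1| < ρ}) ?_).trans ?_
  · exact fun x hx => ⟨fun j => (hx.1 j).le, hx.2⟩
  rw [Measure.volume_eq_prod, Measure.prod_apply hm]
  calc _ ≤ ∫⁻ x : Vec n, (bx b a r).indicator (fun _ => ENNReal.ofReal (2 * ρ)) x := by
        refine lintegral_mono fun x => ?_
        by_cases hx : x ∈ bx b a r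
        · rw [Set.indicator_of_mem hx]
          rw [← Real.volume_ball (ℓ x) ρ]
          refine measure_mono fun t ht => ?_
          rw [Metric.mem_ball, Real.dist_eq]
          exact ht.2
        · rw [Set.indicator_of_notMem hx]
          refine le_of_eq (measure_mono_null ?_ measure_empty)
          exact fun t ht => hx ht.1
    _ = _ := by
        rw [lintegral_indicator_const (measurableSet_bx b a r), bx, vol_box b a r hr, mul_comm]

/-- balls in Radon coordinates -/
def rball {n : ℕ} (c : ℝ) (zb : Pt n × Pt n) (b : Fin n → Vec n)
    (r rs : Fin n → ℝ) (ρ : ℝ) : Set (Pt n × Pt n) :=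
  {z | z.2.2 = z.1.2 + c * ⟪z.1.1, z.2.1⟫ ∧ (∀ j, |⟪z.1.1 - zb.1.1, b j⟫| < r j) ∧
    |z.1.2 + c * ⟪z.1.1, zb.2.1⟫ - zb.2.2| < ρ ∧ (∀ j, |⟪z.2.1 - zb.2.1, b j⟫| < rs j) ∧
    |z.2.2 - zb.1.2 - c * ⟪zb.1.1, z.2.1⟫| < ρ}

lemma pigeon {α ι : Type*} [MeasurableSpace α] (μ : Measure α) (Z : Set α) (q : α → ι)
    (I : Finset ι) (hI : I.Nonempty) (hq : ∀ z ∈ Z, q z ∈ I) :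
    ∃ i ∈ I, μ Z ≤ I.card * μ (Z ∩ q ⁻¹' {i}) := by
  obtain ⟨i, hi, hmax⟩ := Finset.exists_max_image I (fun i => μ (Z ∩ q ⁻¹' {i})) hI
  refine ⟨i, hi, ?_⟩
  have h1 : μ Z ≤ ∑ i ∈ I, μ (Z ∩ q ⁻¹' {i}) := by
    refine (measure_mono ?_).trans (measure_biUnion_finset_le I _)
    intro z hz
    simp only [Set.mem_iUnion]
    exact ⟨q z, hq z hz, hz, rfl⟩
  refine h1.trans ((Finset.sum_le_card_nsmul I _ _ hmax).trans ?_)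
  rw [nsmul_eq_mul]

/-- constant -/
def K8 (n : ℕ) (K : ℝ) : ℝ := 2 ^ (n + 1) * K3 n K + 80 * 4 ^ n * K
/-- constant -/
def KR (n : ℕ) (K : ℝ) : ℝ := K5 n K + 1 + 2 * n * K4 n K + K4 n K
/-- constant -/
def K9 (n : ℕ) (K : ℝ) : ℝ := 8 * n * KR n K ^ 2 * K8 n K ^ 2 + 3
/-- constant -/
def KF (n : ℕ) (K : ℝ) : ℝ := K7 n K * K9 n K ^ (2 * n + 1)

lemma floor_mem {t N : ℝ} {M : ℤ} (h : |t| ≤ N) (hM : N ≤ M) : ⌊t⌋ ∈ Finset.Icc (-M) M := by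
  rw [abs_le] at h
  rw [Finset.mem_Icc]
  constructor
  · rw [Int.le_floor]; push_cast; linarith
  · have : (⌊t⌋ : ℝ) ≤ M := (Int.floor_le t).trans (by linarith)
    exact_mod_cast this

section
variable {n : ℕ} {c : ℝ} {E F : Set (Pt n)} {α β ρ K : ℝ}

set_option maxHeartbeats 2000000 in
lemma Setup.main (h : Setup n c E F α β ρ K) : ∃ (zb : Pt n × Pt n)
    (b : OrthonormalBasis (Fin n) ℝ (Vec n)) (r rs : Fin n → ℝ) (ρ' : ℝ),
    zb.2.2 = zb.1.2 + c * ⟪zb.1.1, zb.2.1⟫ ∧ 0 < ρ' ∧ (∀ j, 0 < r j) ∧ (∀ j, 0 < rs j) ∧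
    (∀ j, r j * rs j = ρ') ∧
    volume {x : Pt n | (∀ j, |⟪x.1 - zb.1.1, b j⟫| < r j) ∧
      |x.2 - (zb.2.2 - c * ⟪x.1, zb.2.1⟫)| < ρ'} ≤ volume E ∧
    volume {y : Pt n | (∀ j, |⟪y.1 - zb.2.1, b j⟫| < rs j) ∧
      |y.2 - (zb.1.2 + c * ⟪zb.1.1, y.1⟫)| < ρ'} ≤ volume F ∧
    Lam n c (E ×ˢ F) ≤ ENNReal.ofReal (KF n K) * Lam n c ((E ×ˢ F) ∩ rball c zb b r rs ρ') := by
  have hα := h.hα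
  have hβ := h.hβ
  have hρ := h.hρ
  have hK0 : 0 < K := by linarith [h.hK1]
  have hn1 : (1:ℝ) ≤ n := by exact_mod_cast h.hn
  have hn0 : (0:ℝ) < n := by linarith
  have hk3 := K3_pos h.hn h.hK1
  have hk4 : 0 < K4 n K := by unfold K4; positivity
  have hk5 : 0 < K5 n K := by unfold K5; positivity
  have hk6 : 0 < K6 n K := by unfold K6; positivity
  have hk7 : 0 < K7 n K := by unfold K7; positivity
  have hk8 : 0 < K8 n K := by unfold K8; positivity
  have hkR : 1 ≤ KR n K := by
    have : 0 < 2 * n * K4 n K := by positivity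
    unfold KR; linarith
  have hk81 : 1 ≤ K8 n K := by
    have h1 : 0 < 2 ^ (n + 1) * K3 n K := by positivity
    have h2 : (1:ℝ) ≤ 4 ^ n := one_le_pow₀ (by norm_num)
    have h3 := mul_le_mul h2 h.hK1 (by norm_num) (by positivity)
    unfold K8; nlinarith
  obtain ⟨y0, b, xb, r, E', F', hr, hrK, hPl, hEE, hFF, hE'm, hF'm, hE1, hF1, hF2, hT⟩ := h.stepE
  have hP : 0 < ∏ i, r i := Finset.prod_pos fun i _ => hr i
  rw [← h.vT] at hT
  set R := KR n K with hR
  have hR0 : 0 < R := by linarith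
  have hE1' : ∀ x ∈ E', ∀ j, |⟪x.1 - xb, b j⟫| ≤ r j * R := fun x hx j => by
    refine (hE1 x hx j).trans ?_
    rw [mul_comm]
    refine mul_le_mul_of_nonneg_left ?_ (hr j).le
    have : 0 < 2 * n * K4 n K := by positivity
    rw [hR, KR]; linarith
  have hF1' : ∀ y ∈ F', ∀ j, r j * |⟪y.1 - y0.1, b j⟫| ≤ R * ρ := fun y hy j => by
    refine (hF1 y hy j).trans ?_
    refine mul_le_mul_of_nonneg_right ?_ hρ.le
    have : 0 < 2 * n * K4 n K := by positivity
    rw [hR, KR]; linarith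
  have hF2' : ∀ y ∈ F', |y.2 - y0.2 - c * ⟪xb, y.1 - y0.1⟫| ≤ R * ρ := fun y hy => by
    refine (hF2 y hy).trans ?_
    refine mul_le_mul_of_nonneg_right ?_ hρ.le
    rw [hR, KR]; linarith
  set δ := 1 / K8 n K with hδ
  have hδ0 : 0 < δ := by positivity
  have hδ1 : δ ≤ 1 := by rw [hδ, div_le_one hk8]; exact hk81
  have hδK : δ * K8 n K = 1 := by rw [hδ]; field_simp
  set σ := δ ^ 2 / (4 * n * R) with hσ
  have hσ0 : 0 < σ := by positivity
  have hσR : 4 * n * R * σ = δ ^ 2 := by rw [hσ]; field_simp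
  have hnR : 1 ≤ n * R := by nlinarith
  have hσδ : σ ≤ δ := by nlinarith
  -- cells
  let q : Pt n × Pt n → (Fin n → ℤ) × (Fin n → ℤ) × ℤ := fun z =>
    (fun j => ⌊⟪z.1.1 - xb, b j⟫ / (σ * r j)⌋,
     fun j => ⌊r j * ⟪z.2.1 - y0.1, b j⟫ / (σ * ρ)⌋,
     ⌊(z.2.2 - y0.2 - c * ⟪xb, z.2.1 - y0.1⟫) / (σ * ρ)⌋)
  have hqm : Measurable q := by
    refine Measurable.prodMk (measurable_pi_iff.2 fun j => ?_)
      (Measurable.prodMk (measurable_pi_iff.2 fun j => ?_) ?_)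
    · exact Int.measurable_floor.comp
        (f := fun z : Pt n × Pt n => ⟪z.1.1 - xb, b j⟫ / (σ * r j)) (by fun_prop)
    · exact Int.measurable_floor.comp
        (f := fun z : Pt n × Pt n => r j * ⟪z.2.1 - y0.1, b j⟫ / (σ * ρ)) (by fun_prop)
    · exact Int.measurable_floor.comp
        (f := fun z : Pt n × Pt n => (z.2.2 - y0.2 - c * ⟪xb, z.2.1 - y0.1⟫) / (σ * ρ))
        (by fun_prop)
  set M : ℕ := ⌈R / σ⌉₊ with hM
  have hM1 : R / σ ≤ (M : ℤ) := by
    have := Nat.le_ceil (R / σ)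
    exact_mod_cast this
  let J := Finset.Icc (-(M:ℤ)) (M:ℤ)
  let I := (Fintype.piFinset fun _ : Fin n => J) ×ˢ ((Fintype.piFinset fun _ : Fin n => J) ×ˢ J)
  have hJc : (J.card : ℝ) = 2 * M + 1 := by
    have : J.card = 2 * M + 1 := by
      simp only [J, Int.card_Icc]; omega
    rw [this]; push_cast; ring
  have hIc : (I.card : ℝ) ≤ K9 n K ^ (2 * n + 1) := by
    have h1 : (I.card : ℝ) = (J.card : ℝ) ^ (2 * n + 1) := by
      simp only [I, Finset.card_product, Fintype.card_piFinset_const]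
      push_cast
      ring
    rw [h1, hJc]
    refine pow_le_pow_left₀ (by positivity) ?_ _
    have h2 : (M : ℝ) < R / σ + 1 := Nat.ceil_lt_add_one (by positivity)
    have h3 : R / σ = 4 * n * R ^ 2 * K8 n K ^ 2 := by
      rw [hσ, hδ]; field_simp
    rw [h3] at h2
    rw [K9]; linarith
  have hIne : I.Nonempty := by
    have h0 : (0:ℤ) ∈ J := by simp [J]
    exact ⟨(fun _ => 0, fun _ => 0, 0), by simp [I, h0]⟩
  obtain ⟨i, hi, hpig⟩ := pigeon (Lam n c) (E' ×ˢ F') q I hIne (by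
    rintro z ⟨hz1, hz2⟩
    simp only [I, Finset.mem_product, Fintype.mem_piFinset, q]
    refine ⟨fun j => ?_, fun j => ?_, ?_⟩
    · refine floor_mem ?_ hM1
      have := hE1' z.1 hz1 j
      rw [abs_div, abs_of_pos (mul_pos hσ0 (hr j)), div_le_div_iff₀ (mul_pos hσ0 (hr j)) hσ0]
      nlinarith
    · refine floor_mem ?_ hM1
      have := hF1' z.2 hz2 j
      rw [abs_div, abs_mul, abs_of_pos (hr j), abs_of_pos (mul_pos hσ0 hρ),
        div_le_div_iff₀ (mul_pos hσ0 hρ) hσ0]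
      nlinarith
    · refine floor_mem ?_ hM1
      have := hF2' z.2 hz2
      rw [abs_div, abs_of_pos (mul_pos hσ0 hρ), div_le_div_iff₀ (mul_pos hσ0 hρ) hσ0]
      nlinarith)
  have hZm : MeasurableSet (E' ×ˢ F' ∩ q ⁻¹' {i}) :=
    (hE'm.prod hF'm).inter (hqm (measurableSet_singleton i))
  have hpos : Lam n c (E' ×ˢ F' ∩ q ⁻¹' {i}) ≠ 0 := by
    intro h0
    rw [h0, mul_zero] at hpig
    rw [le_antisymm hpig bot_le, mul_zero, h.vT] at hT
    have : 0 < ENNReal.ofReal (ρ * α * β) := ENNReal.ofReal_pos.2 (by positivity)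
    exact absurd hT (not_le.2 this)
  obtain ⟨zb, ⟨⟨hzb1, hzb2⟩, hzbq⟩, hzbi⟩ := Lam_inc c hZm hpos
  have hzbq' : q zb = i := hzbq
  refine ⟨zb, b, fun j => δ * r j, fun j => δ * ρ / r j, δ ^ 2 * ρ, hzbi, by positivity,
    fun j => mul_pos hδ0 (hr j), fun j => div_pos (by positivity) (hr j), fun j => ?_, ?_, ?_, ?_⟩
  · have := (hr j).ne'; field_simp
  · refine (vol_slab b zb.1.1 (fun j => δ * r j) (fun j => (mul_pos hδ0 (hr j)).le)
      (fun x => zb.2.2 - c * ⟪x, zb.2.1⟫) (by fun_prop) (δ ^ 2 * ρ)).trans ?_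
    rw [h.vE, ← ENNReal.ofReal_mul (by
      have : 0 < ∏ j, δ * r j := Finset.prod_pos fun j _ => mul_pos hδ0 (hr j)
      positivity)]
    refine ENNReal.ofReal_le_ofReal ?_
    rw [Finset.prod_mul_distrib, Finset.prod_const, Finset.card_univ, Fintype.card_fin]
    have h1 : δ ^ (n + 2) ≤ δ := by
      calc δ ^ (n + 2) ≤ δ ^ 1 := pow_le_pow_of_le_one hδ0.le hδ1 (by omega)
        _ = δ := pow_one δ
    have h2 : δ * (2 ^ (n + 1) * K3 n K) ≤ 1 := by
      rw [← hδK]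
      refine mul_le_mul_of_nonneg_left ?_ hδ0.le
      rw [K8]
      have : 0 < 80 * 4 ^ n * K := by positivity
      linarith
    calc 2 ^ n * (δ ^ n * ∏ j, r j) * (2 * (δ ^ 2 * ρ))
        = δ ^ (n + 2) * (2 ^ (n + 1) * ∏ j, r j) * ρ := by ring
      _ ≤ δ * (2 ^ (n + 1) * (K3 n K * β)) * ρ := by gcongr
      _ = δ * (2 ^ (n + 1) * K3 n K) * (ρ * β) := by ring
      _ ≤ 1 * (ρ * β) := by gcongr
      _ = _ := one_mul _
  · refine (vol_slab b zb.2.1 (fun j => δ * ρ / r j) (fun j => (div_pos (by positivity) (hr j)).le)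
      (fun y => zb.1.2 + c * ⟪zb.1.1, y⟫) (by fun_prop) (δ ^ 2 * ρ)).trans ?_
    rw [h.vF, ← ENNReal.ofReal_mul (by
      have : 0 < ∏ j, δ * ρ / r j := Finset.prod_pos fun j _ => div_pos (by positivity) (hr j)
      positivity)]
    refine ENNReal.ofReal_le_ofReal ?_
    rw [Finset.prod_div_distrib, Finset.prod_const, Finset.card_univ, Fintype.card_fin]
    have h1 : δ ^ (n + 2) ≤ δ := by
      calc δ ^ (n + 2) ≤ δ ^ 1 := pow_le_pow_of_le_one hδ0.le hδ1 (by omega)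
        _ = δ := pow_one δ
    have h2 : δ * (80 * 4 ^ n * K) ≤ 1 := by
      rw [← hδK]
      refine mul_le_mul_of_nonneg_left ?_ hδ0.le
      rw [K8]
      have : 0 < 2 ^ (n + 1) * K3 n K := by positivity
      linarith
    have h3 : 1 / (∏ j, r j) ≤ 40 * 2 ^ n / β := by
      rw [div_le_div_iff₀ hP hβ]; linarith
    have h4 : (4:ℝ) ^ n = 2 ^ n * 2 ^ n := by rw [← mul_pow]; norm_num
    have hKK := h.hK
    calc 2 ^ n * ((δ * ρ) ^ n / ∏ j, r j) * (2 * (δ ^ 2 * ρ))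
        = δ ^ (n + 2) * (2 ^ (n + 1) * (1 / ∏ j, r j)) * ρ ^ n * ρ := by
          rw [mul_pow]; field_simp; ring
      _ ≤ δ * (2 ^ (n + 1) * (40 * 2 ^ n / β)) * (K * (α * β)) * ρ := by gcongr
      _ = δ * (80 * 4 ^ n * K) * (ρ * α) := by rw [h4]; field_simp; ring
      _ ≤ 1 * (ρ * α) := by gcongr
      _ = _ := one_mul _
  · have hsub : (E' ×ˢ F' ∩ q ⁻¹' {i}) ∩ {z | z.2.2 = z.1.2 + c * ⟪z.1.1, z.2.1⟫} ⊆
        (E ×ˢ F) ∩ rball c zb b (fun j => δ * r j) (fun j => δ * ρ / r j) (δ ^ 2 * ρ) := by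
      rintro z ⟨⟨⟨hz1, hz2⟩, hzq⟩, hzi⟩
      have hzq' : q z = q zb := by rw [hzbq']; exact hzq
      simp only [q, Prod.mk.injEq] at hzq'
      obtain ⟨g1, g2, g3⟩ := hzq'
      have f1 : ∀ j, |⟪z.1.1 - zb.1.1, b j⟫| < σ * r j := by
        intro j
        have := Int.abs_sub_lt_one_of_floor_eq_floor (congrFun g1 j)
        rw [← sub_div, ← inner_sub_left, sub_sub_sub_cancel_right, abs_div,
          abs_of_pos (mul_pos hσ0 (hr j)), div_lt_one (mul_pos hσ0 (hr j))] at this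
        exact this
      have f2 : ∀ j, r j * |⟪z.2.1 - zb.2.1, b j⟫| < σ * ρ := by
        intro j
        have := Int.abs_sub_lt_one_of_floor_eq_floor (congrFun g2 j)
        rw [← sub_div, ← mul_sub, ← inner_sub_left, sub_sub_sub_cancel_right, abs_div,
          abs_of_pos (mul_pos hσ0 hρ), div_lt_one (mul_pos hσ0 hρ), abs_mul,
          abs_of_pos (hr j)] at this
        exact this
      have f3 : |(z.2.2 - zb.2.2) - c * ⟪xb, z.2.1 - zb.2.1⟫| < σ * ρ := by
        have := Int.abs_sub_lt_one_of_floor_eq_floor g3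
        rw [← sub_div, abs_div, abs_of_pos (mul_pos hσ0 hρ), div_lt_one (mul_pos hσ0 hρ)] at this
        have e : (z.2.2 - zb.2.2) - c * ⟪xb, z.2.1 - zb.2.1⟫ =
            z.2.2 - y0.2 - c * ⟪xb, z.2.1 - y0.1⟫ - (zb.2.2 - y0.2 - c * ⟪xb, zb.2.1 - y0.1⟫) := by
          simp only [inner_sub_right]; ring
        rw [e]; exact this
      have f4 : ∀ x ∈ E', |(z.2.2 - zb.2.2) - c * ⟪x.1, z.2.1 - zb.2.1⟫| < δ ^ 2 * ρ := by
        intro x hx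
        have e := inner_abs_le b (x.1 - xb) (z.2.1 - zb.2.1) r (fun _ => σ * ρ) R hr (hE1' x hx)
          (fun j => (f2 j).le)
        rw [Finset.sum_const, Finset.card_univ, Fintype.card_fin, nsmul_eq_mul] at e
        have e1 : (z.2.2 - zb.2.2) - c * ⟪x.1, z.2.1 - zb.2.1⟫ =
            ((z.2.2 - zb.2.2) - c * ⟪xb, z.2.1 - zb.2.1⟫) - c * ⟪x.1 - xb, z.2.1 - zb.2.1⟫ := by
          rw [inner_sub_left]; ring
        have e2 : |c * ⟪x.1 - xb, z.2.1 - zb.2.1⟫| ≤ 2 * (R * (n * (σ * ρ))) := by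
          rw [abs_mul]
          exact mul_le_mul h.hc2 e (abs_nonneg _) (by norm_num)
        rw [e1]
        refine (abs_sub _ _).trans_lt ?_
        have e3 : σ * ρ * 1 ≤ σ * ρ * (n * R) := mul_le_mul_of_nonneg_left hnR (by positivity)
        have e5 : 2 * (R * (n * (σ * ρ))) = 2 * (σ * ρ * (n * R)) := by ring
        have e6 : δ ^ 2 * ρ = 4 * (σ * ρ * (n * R)) := by rw [← hσR]; ring
        have e7 : 0 < σ * ρ := mul_pos hσ0 hρ
        linarith only [e2, e3, e5, e6, e7, f3]
      refine ⟨⟨hEE hz1, hFF hz2⟩, hzi, fun j => ?_, ?_, fun j => ?_, ?_⟩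
      · exact (f1 j).trans_le (mul_le_mul_of_nonneg_right hσδ (hr j).le)
      · have := f4 z.1 hz1
        have hzi' : z.2.2 = z.1.2 + c * ⟪z.1.1, z.2.1⟫ := hzi
        rw [hzi', inner_sub_right] at this
        convert this using 2
        ring
      · show |⟪z.2.1 - zb.2.1, b j⟫| < δ * ρ / r j
        rw [lt_div_iff₀ (hr j), mul_comm]
        exact (f2 j).trans_le (mul_le_mul_of_nonneg_right hσδ hρ.le)
      · have := f4 zb.1 hzb1
        rw [hzbi, inner_sub_right] at this
        convert this using 2
        ring
    have h1 : Lam n c (E' ×ˢ F' ∩ q ⁻¹' {i}) ≤ Lam n c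
        ((E ×ˢ F) ∩ rball c zb b (fun j => δ * r j) (fun j => δ * ρ / r j) (δ ^ 2 * ρ)) := by
      rw [← Lam_inter_inc c hZm]
      exact measure_mono hsub
    have h2 : (I.card : ℝ≥0∞) ≤ ENNReal.ofReal (K9 n K ^ (2 * n + 1)) := by
      rw [← ENNReal.ofReal_natCast]
      exact ENNReal.ofReal_le_ofReal hIc
    rw [KF, ENNReal.ofReal_mul hk7.le, mul_assoc]
    exact hT.trans (mul_le_mul' le_rfl (hpig.trans (mul_le_mul' h2 h1)))
end
end

noncomputable section

/-- two-sided geometric sum -/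
def AA (κ : ℝ) : ℝ≥0∞ := ∑' m : ℤ, (2 : ℝ≥0∞) ^ (-(κ * |(m : ℝ)|))

lemma two_rpow_add (a b : ℝ) : (2 : ℝ≥0∞) ^ (a + b) = 2 ^ a * 2 ^ b :=
  ENNReal.rpow_add a b (by norm_num) (by norm_num)

lemma two_rpow_ne_top (a : ℝ) : (2 : ℝ≥0∞) ^ a ≠ ⊤ := by
  rw [Ne, ENNReal.rpow_eq_top_iff]; norm_num

lemma two_rpow_ne_zero (a : ℝ) : (2 : ℝ≥0∞) ^ a ≠ 0 := by
  rw [Ne, ENNReal.rpow_eq_zero_iff]; norm_num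

lemma AA_ne_top {κ : ℝ} (hκ : 0 < κ) : AA κ ≠ ⊤ := by
  have key : ∑' m : ℕ, ((2 : ℝ≥0∞) ^ (-κ)) ^ m ≠ ⊤ := by
    rw [ENNReal.tsum_geometric]
    have : (2 : ℝ≥0∞) ^ (-κ) < 1 := ENNReal.rpow_lt_one_of_one_lt_of_neg (by norm_num) (by linarith)
    simpa [tsub_eq_zero_iff_le] using this
  have e1 : ∀ m : ℕ, (2 : ℝ≥0∞) ^ (-(κ * |((m : ℤ) : ℝ)|)) = ((2 : ℝ≥0∞) ^ (-κ)) ^ m := by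
    intro m
    rw [← ENNReal.rpow_natCast, ← ENNReal.rpow_mul]
    congr 1
    simp
  have e2 : ∀ m : ℕ, (2 : ℝ≥0∞) ^ (-(κ * |((-((m : ℤ) + 1) : ℤ) : ℝ)|)) ≤ ((2 : ℝ≥0∞) ^ (-κ)) ^ m := by
    intro m
    rw [← ENNReal.rpow_natCast, ← ENNReal.rpow_mul]
    refine ENNReal.rpow_le_rpow_of_exponent_le (by norm_num) ?_
    push_cast
    rw [abs_neg, abs_of_nonneg (by positivity)]
    nlinarith
  have h := HasSum.of_nat_of_neg_add_one (f := fun m : ℤ => (2 : ℝ≥0∞) ^ (-(κ * |(m : ℝ)|)))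
    (ENNReal.summable.hasSum) (ENNReal.summable.hasSum)
  rw [AA, h.tsum_eq]
  refine ENNReal.add_ne_top.2 ⟨?_, ?_⟩
  · simp only [e1]; exact key
  · exact ne_top_of_le_ne_top key (ENNReal.tsum_le_tsum e2)

lemma sum_le_AA (κ : ℝ) (K : Finset ℤ) (k0 : ℤ) :
    ∑ l ∈ K, (2 : ℝ≥0∞) ^ (-(κ * |((l : ℝ) - k0)|)) ≤ AA κ := by
  refine (ENNReal.sum_le_tsum K).trans ?_
  rw [AA, ← (Equiv.subRight k0).tsum_eq (fun m : ℤ => (2 : ℝ≥0∞) ^ (-(κ * |(m : ℝ)|)))]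
  simp

lemma ptw {s q κ : ℝ} (hs : 0 < s) (hsq : s < q) (K : Finset ℤ) (u : ℤ → ℝ≥0∞) :
    (∑ k ∈ K, u k) ^ q ≤ AA κ ^ q * ∑ k ∈ K, ∑ l ∈ K,
      if k ≤ l then (2 : ℝ≥0∞) ^ (κ * q * ((l : ℝ) - k)) * (u k ^ s * u l ^ (q - s)) else 0 := by
  have hq : 0 < q := hs.trans hsq
  set S := ∑ k ∈ K, ∑ l ∈ K,
      if k ≤ l then (2 : ℝ≥0∞) ^ (κ * q * ((l : ℝ) - k)) * (u k ^ s * u l ^ (q - s)) else 0 with hS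
  rcases K.eq_empty_or_nonempty with rfl | hK
  · simp [hq]
  obtain ⟨k0, hk0, hmax⟩ := Finset.exists_max_image K u hK
  have hterm : ∀ k ∈ K, ∀ l ∈ K, k ≤ l →
      (2 : ℝ≥0∞) ^ (κ * q * ((l : ℝ) - k)) * (u k ^ s * u l ^ (q - s)) ≤ S := by
    intro k hk l hl hkl
    rw [hS]
    refine le_trans ?_ (Finset.single_le_sum (f := fun k => ∑ l ∈ K,
      if k ≤ l then (2 : ℝ≥0∞) ^ (κ * q * ((l : ℝ) - k)) * (u k ^ s * u l ^ (q - s)) else 0)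
      (fun _ _ => zero_le) hk)
    refine le_trans ?_ (Finset.single_le_sum (f := fun l =>
      if k ≤ l then (2 : ℝ≥0∞) ^ (κ * q * ((l : ℝ) - k)) * (u k ^ s * u l ^ (q - s)) else 0)
      (fun _ _ => zero_le) hl)
    simp [hkl]
  have hpt : ∀ l ∈ K, u l ≤ (2 : ℝ≥0∞) ^ (-(κ * |((l : ℝ) - k0)|)) * S ^ (1 / q) := by
    intro l hl
    have h1 : (2 : ℝ≥0∞) ^ (κ * q * |((l : ℝ) - k0)|) * u l ^ q ≤ S := by
      have e : u l ^ q = u l ^ s * u l ^ (q - s) := by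
        rw [← ENNReal.rpow_add_of_nonneg _ _ hs.le (by linarith)]; congr 1; ring
      rcases le_total k0 l with h | h
      · have h' : (k0 : ℝ) ≤ l := by exact_mod_cast h
        rw [abs_of_nonneg (by linarith)]
        refine le_trans ?_ (hterm k0 hk0 l hl h)
        rw [e]
        exact mul_le_mul' le_rfl (mul_le_mul' (ENNReal.rpow_le_rpow (hmax l hl) hs.le) le_rfl)
      · have h' : (l : ℝ) ≤ k0 := by exact_mod_cast h
        rw [abs_of_nonpos (by linarith), neg_sub]
        refine le_trans ?_ (hterm l hl k0 hk0 h)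
        rw [e]
        exact mul_le_mul' le_rfl (mul_le_mul' le_rfl
          (ENNReal.rpow_le_rpow (hmax l hl) (by linarith)))
    have h2 := ENNReal.rpow_le_rpow h1 (z := 1 / q) (by positivity)
    rw [ENNReal.mul_rpow_of_nonneg _ _ (by positivity), ← ENNReal.rpow_mul, ← ENNReal.rpow_mul,
      mul_one_div_cancel hq.ne', ENNReal.rpow_one] at h2
    calc u l = (2 : ℝ≥0∞) ^ (-(κ * |((l : ℝ) - k0)|)) *
          (2 ^ (κ * q * |((l : ℝ) - k0)| * (1 / q)) * u l) := by
          rw [← mul_assoc, ← two_rpow_add]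
          have : -(κ * |(l:ℝ) - k0|) + κ * q * |(l:ℝ) - k0| * (1 / q) = 0 := by field_simp; ring
          rw [this, ENNReal.rpow_zero, one_mul]
      _ ≤ _ := mul_le_mul' le_rfl h2
  have hsum : ∑ k ∈ K, u k ≤ AA κ * S ^ (1 / q) := by
    refine (Finset.sum_le_sum hpt).trans ?_
    rw [← Finset.sum_mul]
    exact mul_le_mul' (sum_le_AA κ K k0) le_rfl
  refine (ENNReal.rpow_le_rpow hsum hq.le).trans ?_
  rw [ENNReal.mul_rpow_of_nonneg _ _ hq.le, ← ENNReal.rpow_mul, one_div_mul_cancel hq.ne',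
    ENNReal.rpow_one]

lemma slice_pair {n : ℕ} (hn : 1 ≤ n) : ∃ C : ℝ≥0∞, C ≠ ⊤ ∧ ∀ c : ℝ, 1 ≤ |c| →
    ∀ F F' : Set (Pt n), MeasurableSet F → MeasurableSet F' → volume (Prod.fst '' F) ≠ ⊤ →
    volume (Prod.fst '' F') ≠ ⊤ →
    ∫⁻ x : Pt n, volume (sl c F x) ^ (1 + 1 / (n : ℝ)) *
      volume (sl c F' x) ^ ((n : ℝ) + 2 - (1 + 1 / (n : ℝ))) ≤ C * (volume F * volume F' ^ n) := by
  obtain ⟨C, hC, h⟩ := XI_lower hn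
  have hn' : (0:ℝ) < n := by exact_mod_cast hn
  refine ⟨ENNReal.ofReal C ^ (1 / (n : ℝ)),
    ENNReal.rpow_ne_top_of_nonneg (by positivity) ENNReal.ofReal_ne_top, ?_⟩
  intro c hc F F' hF hF' hFs hFs'
  refine le_trans ?_ (mul_le_mul' le_rfl (XI_drury c hc hF hF'))
  rw [← lintegral_const_mul' _ _
    (ENNReal.rpow_ne_top_of_nonneg (by positivity) ENNReal.ofReal_ne_top)]
  refine lintegral_mono fun x => ?_
  have h1 := h (sl c F x) (sl c F' x) (measurableSet_sl c hF' x)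
    (ne_top_of_le_ne_top hFs (measure_mono (sl_subset c F x)))
    (ne_top_of_le_ne_top hFs' (measure_mono (sl_subset c F' x)))
  have h2 := ENNReal.rpow_le_rpow h1 (z := 1 / (n:ℝ)) (by positivity)
  rw [ENNReal.mul_rpow_of_nonneg _ _ (by positivity),
    ENNReal.mul_rpow_of_nonneg _ _ (by positivity)] at h2
  simp only [← ENNReal.rpow_natCast] at h2
  rw [← ENNReal.rpow_mul, ← ENNReal.rpow_mul, ← ENNReal.rpow_mul, mul_one_div_cancel hn'.ne',
    ENNReal.rpow_one] at h2
  convert h2 using 3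
  · push_cast; field_simp
  · have : 1 ≤ n ^ 2 + n := by nlinarith
    push_cast [Nat.cast_sub this]
    field_simp
    ring

/-- mixed norm bound over level sets -/
lemma lorentz {n : ℕ} (hn : 1 ≤ n) : ∃ C : ℝ≥0∞, C ≠ ⊤ ∧ ∀ c : ℝ, 1 ≤ |c| →
    ∀ (K : Finset ℤ) (F : ℤ → Set (Pt n)), (∀ k, MeasurableSet (F k)) →
    (∀ k, volume (Prod.fst '' F k) ≠ ⊤) →
    ∫⁻ x : Pt n, (∑ k ∈ K, (2 : ℝ≥0∞) ^ (k : ℝ) * volume (sl c (F k) x)) ^ ((n : ℝ) + 2) ≤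
      C * ∑ k ∈ K, ((2 : ℝ≥0∞) ^ ((k : ℝ) * (((n : ℝ) + 2) / (n + 1))) * volume (F k)) ^ (n + 1) := by
  obtain ⟨C, hC, h⟩ := slice_pair hn
  have hn' : (0:ℝ) < n := by exact_mod_cast hn
  have hn1 : (1:ℝ) ≤ n := by exact_mod_cast hn
  set q : ℝ := (n : ℝ) + 2 with hq
  have hq0 : 0 < q := by positivity
  set s : ℝ := 1 + 1 / (n : ℝ) with hs
  have hs0 : 0 < s := by positivity
  have hs2 : s ≤ 2 := by
    have : 1 / (n:ℝ) ≤ 1 := by rw [div_le_one hn']; exact hn1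
    linarith
  have hsq : s < q := by linarith
  set θ : ℝ := 1 / (2 * n * (n + 1)) with hθ
  have hθ0 : 0 < θ := by positivity
  set κ : ℝ := θ / q with hκ
  have hκ0 : 0 < κ := by positivity
  have hκq : κ * q = θ := by rw [hκ]; field_simp
  refine ⟨AA κ ^ q * (C * (2 * AA θ)), ?_, ?_⟩
  · exact ENNReal.mul_ne_top (ENNReal.rpow_ne_top_of_nonneg hq0.le (AA_ne_top hκ0))
      (ENNReal.mul_ne_top hC (ENNReal.mul_ne_top (by norm_num) (AA_ne_top hθ0)))
  intro c hc K F hF hFs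
  set φ : ℤ → ℝ≥0∞ := fun k => (2 : ℝ≥0∞) ^ ((k : ℝ) * (q / (n + 1))) * volume (F k) with hφ
  have hpair : ∀ k l : ℤ, k ≤ l → ∫⁻ x : Pt n, (2 : ℝ≥0∞) ^ (κ * q * ((l : ℝ) - k)) *
      (((2 : ℝ≥0∞) ^ (k : ℝ) * volume (sl c (F k) x)) ^ s *
        ((2 : ℝ≥0∞) ^ (l : ℝ) * volume (sl c (F l) x)) ^ (q - s)) ≤
      C * ((2 : ℝ≥0∞) ^ (-(θ * |(l : ℝ) - k|)) * (φ k ^ (n + 1) + φ l ^ (n + 1))) := by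
    intro k l hkl
    have hkl' : (k : ℝ) ≤ l := by exact_mod_cast hkl
    have e1 : ∀ x : Pt n, (2 : ℝ≥0∞) ^ (κ * q * ((l : ℝ) - k)) *
      (((2 : ℝ≥0∞) ^ (k : ℝ) * volume (sl c (F k) x)) ^ s *
        ((2 : ℝ≥0∞) ^ (l : ℝ) * volume (sl c (F l) x)) ^ (q - s)) =
        (2 : ℝ≥0∞) ^ (θ * ((l : ℝ) - k) + k * s + l * (q - s)) *
          (volume (sl c (F k) x) ^ s * volume (sl c (F l) x) ^ (q - s)) := by
      intro x
      rw [ENNReal.mul_rpow_of_nonneg _ _ hs0.le, ENNReal.mul_rpow_of_nonneg _ _ (by linarith),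
        two_rpow_add, two_rpow_add, ENNReal.rpow_mul _ (k : ℝ) s, ENNReal.rpow_mul _ (l : ℝ) (q - s),
        hκq]
      ring
    simp only [e1]
    rw [lintegral_const_mul' _ _ (two_rpow_ne_top _)]
    refine (mul_le_mul' le_rfl (h c hc (F k) (F l) (hF k) (hF l) (hFs k) (hFs l))).trans ?_
    have e2 : (2 : ℝ≥0∞) ^ (θ * ((l : ℝ) - k) + k * s + l * (q - s)) * (C * (volume (F k) *
        volume (F l) ^ n)) = C * ((2 : ℝ≥0∞) ^ (-(θ * |(l : ℝ) - k|)) * (φ k * φ l ^ n)) := by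
      rw [abs_of_nonneg (by linarith)]
      have e3 : θ * ((l : ℝ) - k) + k * s + l * (q - s) =
          -(θ * ((l : ℝ) - k)) + (k * (q / (n + 1)) + l * (q / (n + 1)) * n) := by
        rw [hθ, hq, hs]; field_simp; ring
      rw [e3, two_rpow_add, two_rpow_add, ENNReal.rpow_mul _ _ (n : ℝ), ENNReal.rpow_natCast]
      simp only [hφ, mul_pow]
      ring
    rw [e2]
    refine mul_le_mul' le_rfl (mul_le_mul' le_rfl ?_)
    rcases le_total (φ k) (φ l) with h | h
    · calc φ k * φ l ^ n ≤ φ l * φ l ^ n := mul_le_mul' h le_rfl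
        _ = φ l ^ (n + 1) := by rw [pow_succ, mul_comm]
        _ ≤ _ := le_add_self
    · calc φ k * φ l ^ n ≤ φ k * φ k ^ n := mul_le_mul' le_rfl (pow_le_pow_left' h n)
        _ = φ k ^ (n + 1) := by rw [pow_succ, mul_comm]
        _ ≤ _ := le_self_add
  have hmeas : ∀ k : ℤ, Measurable fun x : Pt n => (2 : ℝ≥0∞) ^ (k : ℝ) * volume (sl c (F k) x) :=
    fun k => (measurable_vol_sl c (hF k)).const_mul _
  calc _ ≤ ∫⁻ x : Pt n, AA κ ^ q * ∑ k ∈ K, ∑ l ∈ K,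
        if k ≤ l then (2 : ℝ≥0∞) ^ (κ * q * ((l : ℝ) - k)) *
          (((2 : ℝ≥0∞) ^ (k : ℝ) * volume (sl c (F k) x)) ^ s *
        ((2 : ℝ≥0∞) ^ (l : ℝ) * volume (sl c (F l) x)) ^ (q - s)) else 0 :=
        lintegral_mono fun x => ptw hs0 hsq K _
    _ = AA κ ^ q * ∑ k ∈ K, ∑ l ∈ K, ∫⁻ x : Pt n,
        if k ≤ l then (2 : ℝ≥0∞) ^ (κ * q * ((l : ℝ) - k)) *
          (((2 : ℝ≥0∞) ^ (k : ℝ) * volume (sl c (F k) x)) ^ s *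
        ((2 : ℝ≥0∞) ^ (l : ℝ) * volume (sl c (F l) x)) ^ (q - s)) else 0 := by
        have hm : ∀ k l : ℤ, Measurable fun x : Pt n => if k ≤ l then
          (2 : ℝ≥0∞) ^ (κ * q * ((l : ℝ) - k)) *
          (((2 : ℝ≥0∞) ^ (k : ℝ) * volume (sl c (F k) x)) ^ s *
          ((2 : ℝ≥0∞) ^ (l : ℝ) * volume (sl c (F l) x)) ^ (q - s)) else 0 := by
          intro k l
          split_ifs
          · exact (((hmeas k).pow_const s).mul ((hmeas l).pow_const (q - s))).const_mul _
          · exact measurable_const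
        rw [lintegral_const_mul' _ _ (ENNReal.rpow_ne_top_of_nonneg hq0.le (AA_ne_top hκ0)),
          lintegral_finsetSum _ (fun k _ => Finset.measurable_sum _ fun l _ => hm k l)]
        congr 1
        refine Finset.sum_congr rfl fun k _ => ?_
        rw [lintegral_finsetSum _ (fun l _ => hm k l)]
    _ ≤ AA κ ^ q * ∑ k ∈ K, ∑ l ∈ K,
        C * ((2 : ℝ≥0∞) ^ (-(θ * |(l : ℝ) - k|)) * (φ k ^ (n + 1) + φ l ^ (n + 1))) := by
        refine mul_le_mul' le_rfl (Finset.sum_le_sum fun k _ => Finset.sum_le_sum fun l _ => ?_)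
        split_ifs with hkl
        · exact hpair k l hkl
        · simp
    _ ≤ AA κ ^ q * (C * (2 * AA θ) * ∑ k ∈ K, φ k ^ (n + 1)) := by
        refine mul_le_mul' le_rfl ?_
        simp only [← Finset.mul_sum]
        rw [mul_assoc]
        refine mul_le_mul' le_rfl ?_
        simp only [mul_add, Finset.sum_add_distrib]
        have a1 : ∑ k ∈ K, ∑ l ∈ K, (2 : ℝ≥0∞) ^ (-(θ * |(l : ℝ) - k|)) * φ k ^ (n + 1) ≤
            AA θ * ∑ k ∈ K, φ k ^ (n + 1) := by
          rw [Finset.mul_sum]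
          refine Finset.sum_le_sum fun k _ => ?_
          rw [← Finset.sum_mul]
          exact mul_le_mul' (sum_le_AA θ K k) le_rfl
        have a2 : ∑ k ∈ K, ∑ l ∈ K, (2 : ℝ≥0∞) ^ (-(θ * |(l : ℝ) - k|)) * φ l ^ (n + 1) ≤
            AA θ * ∑ k ∈ K, φ k ^ (n + 1) := by
          rw [Finset.sum_comm]
          refine le_trans (le_of_eq ?_) a1
          refine Finset.sum_congr rfl fun k _ => Finset.sum_congr rfl fun l _ => ?_
          rw [abs_sub_comm]
        calc _ ≤ AA θ * ∑ k ∈ K, φ k ^ (n + 1) + AA θ * ∑ k ∈ K, φ k ^ (n + 1) := add_le_add a1 a2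
          _ = _ := by ring
    _ = _ := by rw [← mul_assoc]
end

noncomputable section

lemma lev_sum {p : ℝ} (hp : 0 < p) (K : Finset ℤ) (t : ℝ≥0∞) :
    ∑ k ∈ K, (if (2 : ℝ≥0∞) ^ (k : ℝ) ≤ t then (2 : ℝ≥0∞) ^ ((k : ℝ) * p) else 0) ≤ AA p * t ^ p := by
  rw [← Finset.sum_filter]
  set K' := K.filter fun k : ℤ => (2 : ℝ≥0∞) ^ (k : ℝ) ≤ t with hK'
  rcases K'.eq_empty_or_nonempty with h | h
  · simp [h]
  obtain ⟨k0, hk0, hmax⟩ := Finset.exists_max_image K' (fun k => k) h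
  have h0 : (2 : ℝ≥0∞) ^ (k0 : ℝ) ≤ t := (Finset.mem_filter.1 hk0).2
  calc ∑ k ∈ K', (2 : ℝ≥0∞) ^ ((k : ℝ) * p)
      = ∑ k ∈ K', (2 : ℝ≥0∞) ^ (-(p * |(k : ℝ) - k0|)) * ((2 : ℝ≥0∞) ^ (k0 : ℝ)) ^ p := by
        refine Finset.sum_congr rfl fun k hk => ?_
        have : (k : ℝ) ≤ k0 := by exact_mod_cast hmax k hk
        rw [abs_of_nonpos (by linarith), ← ENNReal.rpow_mul, ← two_rpow_add]
        congr 1; ring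
    _ ≤ _ := by
        rw [← Finset.sum_mul]
        exact mul_le_mul' (sum_le_AA p K' k0) (ENNReal.rpow_le_rpow h0 hp.le)

section
variable {n : ℕ}

lemma phi_sum {p : ℝ} (hp : 0 < p) (K : Finset ℤ) {f : Pt n → ℝ≥0∞}
    (hf1 : ∫⁻ x, f x ^ p ≤ 1) {E : ℤ → Set (Pt n)} (hE : ∀ k, MeasurableSet (E k))
    (hEf : ∀ k, ∀ x ∈ E k, (2 : ℝ≥0∞) ^ (k : ℝ) ≤ f x) :
    ∑ k ∈ K, (2 : ℝ≥0∞) ^ ((k : ℝ) * p) * volume (E k) ≤ AA p := by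
  calc ∑ k ∈ K, (2 : ℝ≥0∞) ^ ((k : ℝ) * p) * volume (E k)
      = ∑ k ∈ K, ∫⁻ x, (E k).indicator (fun _ => (2 : ℝ≥0∞) ^ ((k : ℝ) * p)) x := by
        refine Finset.sum_congr rfl fun k _ => ?_
        rw [lintegral_indicator_const (hE k)]
    _ = ∫⁻ x, ∑ k ∈ K, (E k).indicator (fun _ => (2 : ℝ≥0∞) ^ ((k : ℝ) * p)) x :=
        (lintegral_finsetSum _ fun k _ => measurable_const.indicator (hE k)).symm
    _ ≤ ∫⁻ x, AA p * f x ^ p := by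
        refine lintegral_mono fun x => ?_
        refine le_trans (Finset.sum_le_sum fun k _ => ?_) (lev_sum hp K (f x))
        by_cases hx : x ∈ E k
        · rw [Set.indicator_of_mem hx, if_pos (hEf k x hx)]
        · rw [Set.indicator_of_notMem hx]; exact zero_le
    _ = AA p * ∫⁻ x, f x ^ p := lintegral_const_mul' _ _ (AA_ne_top hp)
    _ ≤ AA p * 1 := mul_le_mul' le_rfl hf1
    _ = _ := mul_one _

lemma lev_Lp {p : ℝ} (hp : 0 < p) (K : Finset ℤ) {f : Pt n → ℝ≥0∞}
    (hf1 : ∫⁻ x, f x ^ p ≤ 1) {E : ℤ → Set (Pt n)}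
    (hEf : ∀ k, ∀ x ∈ E k, (2 : ℝ≥0∞) ^ (k : ℝ) ≤ f x) :
    ∫⁻ x, (∑ k ∈ K, (E k).indicator (fun _ => (2 : ℝ≥0∞) ^ (k : ℝ)) x) ^ p ≤ AA 1 ^ p := by
  calc _ ≤ ∫⁻ x, AA 1 ^ p * f x ^ p := by
        refine lintegral_mono fun x => ?_
        rw [← ENNReal.mul_rpow_of_nonneg _ _ hp.le]
        refine ENNReal.rpow_le_rpow ?_ hp.le
        have := lev_sum one_pos K (f x)
        rw [ENNReal.rpow_one] at this
        refine le_trans (Finset.sum_le_sum fun k _ => ?_) this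
        by_cases hx : x ∈ E k
        · rw [Set.indicator_of_mem hx, if_pos (hEf k x hx), mul_one]
        · rw [Set.indicator_of_notMem hx]; exact zero_le
    _ = AA 1 ^ p * ∫⁻ x, f x ^ p := lintegral_const_mul' _ _
        (ENNReal.rpow_ne_top_of_nonneg hp.le (AA_ne_top one_pos))
    _ ≤ AA 1 ^ p * 1 := mul_le_mul' le_rfl hf1
    _ = _ := mul_one _

/-- the exponent `(n+2)/(n+1)` -/
def pp (n : ℕ) : ℝ := ((n : ℝ) + 2) / (n + 1)

lemma pp_pos (n : ℕ) : 0 < pp n := by unfold pp; positivity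

lemma holder_sum (hn : 1 ≤ n) : ∃ C : ℝ≥0∞, C ≠ ⊤ ∧ ∀ c : ℝ, 1 ≤ |c| →
    ∀ (J K : Finset ℤ) (f g : Pt n → ℝ≥0∞) (E F : ℤ → Set (Pt n)) (η : ℝ≥0∞),
    ∫⁻ x, f x ^ pp n ≤ 1 → ∫⁻ x, g x ^ pp n ≤ 1 →
    (∀ k, MeasurableSet (E k)) → (∀ k, MeasurableSet (F k)) →
    (∀ k, volume (Prod.fst '' F k) ≠ ⊤) →
    (∀ k, ∀ x ∈ E k, (2 : ℝ≥0∞) ^ (k : ℝ) ≤ f x) →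
    (∀ k, ∀ x ∈ F k, (2 : ℝ≥0∞) ^ (k : ℝ) ≤ g x) →
    (∀ k ∈ K, (2 : ℝ≥0∞) ^ ((k : ℝ) * pp n) * volume (F k) ≤ η) →
    ∑ j ∈ J, ∑ k ∈ K, (2 : ℝ≥0∞) ^ (j : ℝ) * (2 : ℝ≥0∞) ^ (k : ℝ) * Lam n c (E j ×ˢ F k) ≤
      C * η ^ ((n : ℝ) / (n + 2)) := by
  obtain ⟨C, hC, h⟩ := lorentz hn
  have hn' : (0:ℝ) < n := by exact_mod_cast hn
  refine ⟨AA 1 * (C * AA (pp n)) ^ (1 / ((n : ℝ) + 2)), ?_, ?_⟩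
  · exact ENNReal.mul_ne_top (AA_ne_top one_pos) (ENNReal.rpow_ne_top_of_nonneg (by positivity)
      (ENNReal.mul_ne_top hC (AA_ne_top (pp_pos n))))
  intro c hc J K f g E F η hf hg hE hF hFs hEf hFg hη
  have hconj : (pp n).HolderConjugate ((n : ℝ) + 2) := by
    rw [Real.holderConjugate_iff]
    unfold pp
    constructor
    · rw [lt_div_iff₀ (by positivity)]; linarith
    · field_simp; ring
  have hmeas : ∀ k : ℤ, Measurable fun x : Pt n => (2 : ℝ≥0∞) ^ (k : ℝ) * volume (sl c (F k) x) :=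
    fun k => (measurable_vol_sl c (hF k)).const_mul _
  have e1 : ∑ j ∈ J, ∑ k ∈ K, (2 : ℝ≥0∞) ^ (j : ℝ) * (2 : ℝ≥0∞) ^ (k : ℝ) * Lam n c (E j ×ˢ F k) =
      ∫⁻ x, ((fun x => ∑ j ∈ J, (E j).indicator (fun _ => (2 : ℝ≥0∞) ^ (j : ℝ)) x) *
        fun x => ∑ k ∈ K, (2 : ℝ≥0∞) ^ (k : ℝ) * volume (sl c (F k) x)) x := by
    simp only [Pi.mul_apply, Finset.sum_mul_sum]
    have hm : ∀ j k : ℤ, Measurable fun x : Pt n =>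
        (E j).indicator (fun _ => (2 : ℝ≥0∞) ^ (j : ℝ)) x *
          ((2 : ℝ≥0∞) ^ (k : ℝ) * volume (sl c (F k) x)) := fun j k =>
      (measurable_const.indicator (hE j)).mul (hmeas k)
    rw [lintegral_finsetSum _ fun j _ => Finset.measurable_sum _ fun k _ => hm j k]
    refine Finset.sum_congr rfl fun j _ => ?_
    rw [lintegral_finsetSum _ fun k _ => hm j k]
    refine Finset.sum_congr rfl fun k _ => ?_
    rw [Lam_prod c (hE j) (hF k), ← lintegral_indicator (hE j), ← lintegral_const_mul' _ _
      (ENNReal.mul_ne_top (two_rpow_ne_top _) (two_rpow_ne_top _))]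
    refine lintegral_congr fun x => ?_
    by_cases hx : x ∈ E j
    · simp only [Set.indicator_of_mem hx]; ring
    · simp [Set.indicator_of_notMem hx]
  rw [e1]
  refine (ENNReal.lintegral_mul_le_Lp_mul_Lq volume hconj
    (Finset.measurable_sum _ fun j _ => measurable_const.indicator (hE j)).aemeasurable
    (Finset.measurable_sum _ fun k _ => hmeas k).aemeasurable).trans ?_
  have h1 : (∫⁻ x, (∑ j ∈ J, (E j).indicator (fun _ => (2 : ℝ≥0∞) ^ (j : ℝ)) x) ^ pp n) ^ (1 / pp n)
      ≤ AA 1 := by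
    refine (ENNReal.rpow_le_rpow (lev_Lp (pp_pos n) J hf hEf) (by have := pp_pos n; positivity)).trans ?_
    rw [← ENNReal.rpow_mul, mul_one_div_cancel (pp_pos n).ne', ENNReal.rpow_one]
  have h2 : ∑ k ∈ K, ((2 : ℝ≥0∞) ^ ((k : ℝ) * pp n) * volume (F k)) ^ (n + 1) ≤ η ^ n * AA (pp n) := by
    refine le_trans (Finset.sum_le_sum fun k hk => ?_) (le_trans (le_of_eq (Finset.mul_sum K _ (η ^ n)).symm)
      (mul_le_mul' le_rfl (phi_sum (pp_pos n) K hg hF hFg)))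
    rw [pow_succ]
    exact mul_le_mul' (pow_le_pow_left' (hη k hk) n) le_rfl
  have h3 := (h c hc K F hF hFs).trans (mul_le_mul' le_rfl h2)
  have h4 := ENNReal.rpow_le_rpow h3 (z := 1 / ((n:ℝ) + 2)) (by positivity)
  refine (mul_le_mul' h1 h4).trans (le_of_eq ?_)
  have : C * (η ^ n * AA (pp n)) = C * AA (pp n) * η ^ n := by ring
  rw [this, ENNReal.mul_rpow_of_nonneg _ _ (by positivity), ← mul_assoc, ← ENNReal.rpow_natCast,
    ← ENNReal.rpow_mul, mul_one_div]

lemma Lam_comm (c : ℝ) {E F : Set (Pt n)} (hE : MeasurableSet E) (hF : MeasurableSet F) :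
    Lam n c (E ×ˢ F) = Lam n (-c) (F ×ˢ E) := by
  rw [Lam_prod' c hE hF, Lam_prod (-c) hF hE]

/-- truncated level sets -/
def lev (f : Pt n → ℝ≥0∞) (N : ℕ) (k : ℤ) : Set (Pt n) :=
  {x | (2 : ℝ≥0∞) ^ (k : ℝ) ≤ f x} ∩ Metric.closedBall 0 N

lemma lev_meas {f : Pt n → ℝ≥0∞} (hf : Measurable f) (N : ℕ) (k : ℤ) : MeasurableSet (lev f N k) :=
  (measurableSet_le measurable_const hf).inter Metric.isClosed_closedBall.measurableSet

lemma lev_fst (f : Pt n → ℝ≥0∞) (N : ℕ) (k : ℤ) : volume (Prod.fst '' lev f N k) ≠ ⊤ := by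
  refine ne_top_of_le_ne_top (measure_closedBall_lt_top (μ := (volume : Measure (Vec n)))
    (x := 0) (r := N)).ne (measure_mono ?_)
  rintro _ ⟨x, hx, rfl⟩
  have := hx.2
  rw [Metric.mem_closedBall, dist_zero_right] at this ⊢
  exact (norm_fst_le x).trans this

lemma lev_fin (f : Pt n → ℝ≥0∞) (N : ℕ) (k : ℤ) : volume (lev f N k) ≠ ⊤ :=
  ne_top_of_le_ne_top (measure_closedBall_lt_top (μ := (volume : Measure (Pt n)))
    (x := 0) (r := N)).ne (measure_mono Set.inter_subset_right)

/-- dyadic approximation -/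
def appr (f : Pt n → ℝ≥0∞) (N : ℕ) (x : Pt n) : ℝ≥0∞ :=
  ∑ k ∈ Finset.Icc (-(N : ℤ)) N, (lev f N k).indicator (fun _ => (2 : ℝ≥0∞) ^ (k : ℝ)) x

lemma appr_meas {f : Pt n → ℝ≥0∞} (hf : Measurable f) (N : ℕ) : Measurable (appr f N) :=
  Finset.measurable_sum _ fun k _ => measurable_const.indicator (lev_meas hf N k)

lemma appr_mono (f : Pt n → ℝ≥0∞) : Monotone (appr f) := by
  intro N M hNM x
  unfold appr
  have hNM' : (N : ℤ) ≤ M := by exact_mod_cast hNM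
  refine le_trans (Finset.sum_le_sum fun k _ => ?_)
    (Finset.sum_le_sum_of_subset (Finset.Icc_subset_Icc (neg_le_neg hNM') hNM'))
  refine Set.indicator_le_indicator_of_subset ?_ (fun _ => zero_le) x
  exact Set.inter_subset_inter_right _ (Metric.closedBall_subset_closedBall (by exact_mod_cast hNM))

lemma le_appr (f : Pt n → ℝ≥0∞) (x : Pt n) : f x ≤ 2 * ⨆ N, appr f N x := by
  have key : ∀ k : ℤ, (2 : ℝ≥0∞) ^ (k : ℝ) ≤ f x → (2 : ℝ≥0∞) ^ (k : ℝ) ≤ ⨆ N, appr f N x := by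
    intro k hk
    obtain ⟨N, hN⟩ := exists_nat_ge (max ‖x‖ |(k : ℝ)|)
    refine le_trans ?_ (le_iSup (fun N => appr f N x) N)
    have hkm : k ∈ Finset.Icc (-(N : ℤ)) N := by
      have := abs_le.1 ((le_max_right _ _).trans hN)
      rw [Finset.mem_Icc]
      exact ⟨by exact_mod_cast this.1, by exact_mod_cast this.2⟩
    have hx : x ∈ lev f N k := ⟨hk, by
      rw [Metric.mem_closedBall, dist_zero_right]; exact (le_max_left _ _).trans hN⟩
    refine le_trans (le_of_eq ?_) (Finset.single_le_sum (f := fun k : ℤ =>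
      (lev f N k).indicator (fun _ => (2 : ℝ≥0∞) ^ (k : ℝ)) x) (fun _ _ => zero_le) hkm)
    exact (Set.indicator_of_mem hx (fun _ => (2 : ℝ≥0∞) ^ (k : ℝ))).symm
  by_cases h0 : f x = 0
  · rw [h0]; exact zero_le
  by_cases ht : f x = ⊤
  · have : ⨆ N, appr f N x = ⊤ := by
      refine ENNReal.eq_top_of_forall_nnreal_le fun r => ?_
      obtain ⟨m, hm⟩ := pow_unbounded_of_one_lt r (one_lt_two)
      refine le_trans ?_ (key m (by rw [ht]; exact le_top))
      rw [Int.cast_natCast, ENNReal.rpow_natCast]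
      exact_mod_cast hm.le
    rw [this, ENNReal.mul_top (by norm_num)]; exact le_top
  obtain ⟨k, hk1, hk2⟩ := ENNReal.exists_mem_Ico_zpow h0 ht (y := 2) (by norm_num) (by norm_num)
  have e : ∀ m : ℤ, (2 : ℝ≥0∞) ^ (m : ℝ) = 2 ^ m := fun m => ENNReal.rpow_intCast 2 m
  have := key k (by rw [e]; exact hk1)
  refine hk2.le.trans ?_
  rw [← e]
  push_cast
  rw [two_rpow_add, ENNReal.rpow_one, mul_comm]
  exact mul_le_mul' le_rfl this

/-- bilinear form -/
def BF (c : ℝ) (f g : Pt n → ℝ≥0∞) : ℝ≥0∞ := ∫⁻ z, f z.1 * g z.2 ∂(Lam n c)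

lemma BF_le (c : ℝ) {f g : Pt n → ℝ≥0∞} (hf : Measurable f) (hg : Measurable g) {a : ℝ≥0∞}
    (h : ∀ N, BF c (appr f N) (appr g N) ≤ a) : BF c f g ≤ 4 * a := by
  have h1 : BF c f g ≤ ∫⁻ z, 4 * ⨆ N, appr f N z.1 * appr g N z.2 ∂(Lam n c) := by
    refine lintegral_mono fun z => ?_
    refine (mul_le_mul' (le_appr f z.1) (le_appr g z.2)).trans ?_
    have : (⨆ N, appr f N z.1) * (⨆ N, appr g N z.2) ≤ ⨆ N, appr f N z.1 * appr g N z.2 := by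
      rw [ENNReal.iSup_mul]
      refine iSup_le fun i => ?_
      rw [ENNReal.mul_iSup]
      refine iSup_le fun j => ?_
      exact (mul_le_mul' (appr_mono f (le_max_left i j) z.1)
        (appr_mono g (le_max_right i j) z.2)).trans
        (le_iSup (fun N => appr f N z.1 * appr g N z.2) (max i j))
    refine le_trans (le_of_eq ?_) (mul_le_mul' le_rfl this)
    ring
  refine h1.trans ?_
  rw [lintegral_const_mul' _ _ (by norm_num)]
  refine mul_le_mul' le_rfl ?_
  rw [lintegral_iSup]
  · exact iSup_le h
  · exact fun N => ((appr_meas hf N).comp measurable_fst).mul ((appr_meas hg N).comp measurable_snd)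
  · exact fun N M hNM z => mul_le_mul' (appr_mono f hNM z.1) (appr_mono g hNM z.2)

lemma BF_appr (c : ℝ) {f g : Pt n → ℝ≥0∞} (hf : Measurable f) (hg : Measurable g) (N : ℕ) :
    BF c (appr f N) (appr g N) = ∑ j ∈ Finset.Icc (-(N : ℤ)) N, ∑ k ∈ Finset.Icc (-(N : ℤ)) N,
      (2 : ℝ≥0∞) ^ (j : ℝ) * (2 : ℝ≥0∞) ^ (k : ℝ) * Lam n c (lev f N j ×ˢ lev g N k) := by
  unfold BF appr
  simp only [Finset.sum_mul_sum]
  have hm : ∀ j k : ℤ, Measurable fun z : Pt n × Pt n =>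
    (lev f N j).indicator (fun _ => (2 : ℝ≥0∞) ^ (j : ℝ)) z.1 *
      (lev g N k).indicator (fun _ => (2 : ℝ≥0∞) ^ (k : ℝ)) z.2 := fun j k =>
    ((measurable_const.indicator (lev_meas hf N j)).comp measurable_fst).mul
      ((measurable_const.indicator (lev_meas hg N k)).comp measurable_snd)
  rw [lintegral_finsetSum _ fun j _ => Finset.measurable_sum _ fun k _ => hm j k]
  refine Finset.sum_congr rfl fun j _ => ?_
  rw [lintegral_finsetSum _ fun k _ => hm j k]
  refine Finset.sum_congr rfl fun k _ => ?_
  rw [← lintegral_indicator_const ((lev_meas hf N j).prod (lev_meas hg N k))]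
  refine lintegral_congr fun z => ?_
  by_cases h1 : z.1 ∈ lev f N j <;> by_cases h2 : z.2 ∈ lev g N k <;>
    simp [Set.indicator, Set.mem_prod, h1, h2]
end
end

noncomputable section

/-- polynomially bounded on `[1,∞)` -/
def PB (h : ℝ → ℝ) : Prop := ∃ (C : ℝ) (M : ℕ), 0 < C ∧ ∀ K : ℝ, 1 ≤ K → |h K| ≤ C * K ^ M

lemma PB.const (a : ℝ) : PB fun _ => a :=
  ⟨|a| + 1, 0, by positivity, fun K _ => by simp⟩

lemma PB.id : PB fun K => K :=
  ⟨1, 1, one_pos, fun K hK => by rw [abs_of_nonneg (by linarith)]; simp⟩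

lemma PB.mul {f g : ℝ → ℝ} (hf : PB f) (hg : PB g) : PB fun K => f K * g K := by
  obtain ⟨C, M, hC, h⟩ := hf
  obtain ⟨C', M', hC', h'⟩ := hg
  refine ⟨C * C', M + M', by positivity, fun K hK => ?_⟩
  rw [abs_mul, pow_add]
  calc |f K| * |g K| ≤ (C * K ^ M) * (C' * K ^ M') :=
        mul_le_mul (h K hK) (h' K hK) (abs_nonneg _) (by positivity)
    _ = _ := by ring

lemma PB.add {f g : ℝ → ℝ} (hf : PB f) (hg : PB g) : PB fun K => f K + g K := by
  obtain ⟨C, M, hC, h⟩ := hf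
  obtain ⟨C', M', hC', h'⟩ := hg
  refine ⟨C + C', M + M', by positivity, fun K hK => ?_⟩
  have h1 : K ^ M ≤ K ^ (M + M') := pow_le_pow_right₀ hK (by omega)
  have h2 : K ^ M' ≤ K ^ (M + M') := pow_le_pow_right₀ hK (by omega)
  calc |f K + g K| ≤ |f K| + |g K| := abs_add_le _ _
    _ ≤ C * K ^ M + C' * K ^ M' := add_le_add (h K hK) (h' K hK)
    _ ≤ C * K ^ (M + M') + C' * K ^ (M + M') := by gcongr
    _ = _ := by ring

lemma PB.pow {f : ℝ → ℝ} (hf : PB f) (m : ℕ) : PB fun K => f K ^ m := by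
  induction m with
  | zero => simpa using PB.const 1
  | succ m ih => simpa only [pow_succ] using ih.mul hf

lemma PB_K3 (n : ℕ) : PB (K3 n) := by
  have h2 : PB (K2 n) :=
    (((PB.const (4 * (2 * ((n : ℝ) + 2) * (n + 1)))).mul ((PB.const 20).mul PB.id)).mul (PB.const (20 ^ n)))
  exact ((PB.const ((n : ℝ) ^ n)).mul (h2.pow n)).mul (PB.const _)

lemma PB_KF (n : ℕ) : PB (KF n) := by
  have h3 := PB_K3 n
  have h4 : PB (K4 n) := (PB.const (3200 * (n : ℝ) * 2 ^ n)).mul h3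
  have h5 : PB (K5 n) := ((PB.const (128000 * (n : ℝ) * 4 ^ n)).mul (h4.pow (n - 1))).mul PB.id
  have h6 : PB (K6 n) := (PB.const (6400 * 4 ^ n)).mul PB.id
  have h7 : PB (K7 n) := ((PB.const (512000 * (n : ℝ) * 2 ^ n)).mul h3).mul h6
  have h8 : PB (K8 n) := ((PB.const (2 ^ (n + 1))).mul h3).add ((PB.const (80 * 4 ^ n)).mul PB.id)
  have hR : PB (KR n) := ((h5.add (PB.const 1)).add ((PB.const (2 * (n : ℝ))).mul h4)).add h4
  have h9 : PB (K9 n) := (((PB.const (8 * (n : ℝ))).mul (hR.pow 2)).mul (h8.pow 2)).add (PB.const 3)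
  exact h7.mul (h9.pow (2 * n + 1))

section
variable {n : ℕ}

lemma card_good {A η : ℝ≥0∞} (hη : η ≠ 0) (hη' : η ≠ ⊤) (K : Finset ℤ) (φ : ℤ → ℝ≥0∞)
    (h : ∑ k ∈ K, φ k ≤ A) : ((K.filter fun k => ¬ φ k ≤ η).card : ℝ≥0∞) ≤ A / η := by
  rw [ENNReal.le_div_iff_mul_le (Or.inl hη) (Or.inl hη')]
  calc ((K.filter fun k => ¬ φ k ≤ η).card : ℝ≥0∞) * η = ∑ k ∈ K.filter (fun k => ¬ φ k ≤ η), η := by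
        rw [Finset.sum_const, nsmul_eq_mul]
    _ ≤ ∑ k ∈ K.filter (fun k => ¬ φ k ≤ η), φ k :=
        Finset.sum_le_sum fun k hk => (not_le.1 (Finset.mem_filter.1 hk).2).le
    _ ≤ ∑ k ∈ K, φ k := Finset.sum_le_sum_of_subset (Finset.filter_subset _ _)
    _ ≤ A := h

lemma split_bound (hn : 1 ≤ n) : ∃ C : ℝ≥0∞, C ≠ ⊤ ∧ ∀ c : ℝ, 1 ≤ |c| →
    ∀ (f g : Pt n → ℝ≥0∞), Measurable f → Measurable g →
    ∫⁻ x, f x ^ pp n ≤ 1 → ∫⁻ x, g x ^ pp n ≤ 1 →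
    (∀ η δ : ℝ≥0∞, η ≠ 0 → η ≠ ⊤ → (∀ (N : ℕ) (j k : ℤ),
      (2 : ℝ≥0∞) ^ (j : ℝ) * (2 : ℝ≥0∞) ^ (k : ℝ) * Lam n c (lev f N j ×ˢ lev g N k) ≤ δ) →
      BF c f g ≤ 4 * (2 * (C * η ^ ((n : ℝ) / (n + 2))) + (AA (pp n) / η) ^ 2 * δ)) ∧
    BF c f g ≤ 4 * (C * AA (pp n) ^ ((n : ℝ) / (n + 2))) := by
  obtain ⟨C, hC, h⟩ := holder_sum hn
  refine ⟨C, hC, fun c hc f g hf hg hf1 hg1 => ?_⟩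
  have hEf : ∀ N, ∀ k, ∀ x ∈ lev f N k, (2 : ℝ≥0∞) ^ (k : ℝ) ≤ f x := fun N k x hx => hx.1
  have hFg : ∀ N, ∀ k, ∀ x ∈ lev g N k, (2 : ℝ≥0∞) ^ (k : ℝ) ≤ g x := fun N k x hx => hx.1
  have hc' : 1 ≤ |(-c)| := by rwa [abs_neg]
  constructor
  · intro η δ hη hη' hδ
    refine BF_le c hf hg fun N => ?_
    rw [BF_appr c hf hg]
    set I := Finset.Icc (-(N : ℤ)) N with hI
    set φ : ℤ → ℝ≥0∞ := fun k => (2 : ℝ≥0∞) ^ ((k : ℝ) * pp n) * volume (lev f N k) with hφ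
    set ψ : ℤ → ℝ≥0∞ := fun k => (2 : ℝ≥0∞) ^ ((k : ℝ) * pp n) * volume (lev g N k) with hψ
    set a : ℤ → ℤ → ℝ≥0∞ := fun j k =>
      (2 : ℝ≥0∞) ^ (j : ℝ) * (2 : ℝ≥0∞) ^ (k : ℝ) * Lam n c (lev f N j ×ˢ lev g N k) with ha
    have h1 : ∑ j ∈ I, ∑ k ∈ I.filter (fun k => ψ k ≤ η), a j k ≤ C * η ^ ((n : ℝ) / (n + 2)) :=
      h c hc I _ f g (lev f N) (lev g N) η hf1 hg1 (lev_meas hf N) (lev_meas hg N) (lev_fst g N)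
        (hEf N) (hFg N) fun k hk => (Finset.mem_filter.1 hk).2
    have h2 : ∑ k ∈ I.filter (fun k => ¬ ψ k ≤ η), ∑ j ∈ I.filter (fun j => φ j ≤ η), a j k ≤
        C * η ^ ((n : ℝ) / (n + 2)) := by
      refine le_trans (le_of_eq ?_) (h (-c) hc' (I.filter (fun k => ¬ ψ k ≤ η))
        (I.filter (fun j => φ j ≤ η)) g f (lev g N) (lev f N) η hg1 hf1 (lev_meas hg N)
        (lev_meas hf N) (lev_fst f N) (hFg N) (hEf N) fun k hk => (Finset.mem_filter.1 hk).2)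
      refine Finset.sum_congr rfl fun k _ => Finset.sum_congr rfl fun j _ => ?_
      simp only [ha]
      rw [Lam_comm c (lev_meas hf N j) (lev_meas hg N k), mul_comm ((2 : ℝ≥0∞) ^ (j : ℝ))]
    have h3 : ∑ k ∈ I.filter (fun k => ¬ ψ k ≤ η), ∑ j ∈ I.filter (fun j => ¬ φ j ≤ η), a j k ≤
        (AA (pp n) / η) ^ 2 * δ := by
      calc _ ≤ ∑ k ∈ I.filter (fun k => ¬ ψ k ≤ η), ∑ j ∈ I.filter (fun j => ¬ φ j ≤ η), δ :=
            Finset.sum_le_sum fun k _ => Finset.sum_le_sum fun j _ => hδ N j k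
        _ = ((I.filter (fun k => ¬ ψ k ≤ η)).card : ℝ≥0∞) *
            ((I.filter (fun j => ¬ φ j ≤ η)).card : ℝ≥0∞) * δ := by
            simp only [Finset.sum_const, nsmul_eq_mul, mul_assoc]
        _ ≤ (AA (pp n) / η) * (AA (pp n) / η) * δ := by
            refine mul_le_mul' (mul_le_mul' ?_ ?_) le_rfl
            · exact card_good hη hη' I ψ (phi_sum (pp_pos n) I hg1 (lev_meas hg N) (hFg N))
            · exact card_good hη hη' I φ (phi_sum (pp_pos n) I hf1 (lev_meas hf N) (hEf N))
        _ = _ := by rw [sq]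
    calc ∑ j ∈ I, ∑ k ∈ I, a j k
        = ∑ j ∈ I, ∑ k ∈ I.filter (fun k => ψ k ≤ η), a j k +
          (∑ k ∈ I.filter (fun k => ¬ ψ k ≤ η), ∑ j ∈ I.filter (fun j => φ j ≤ η), a j k +
           ∑ k ∈ I.filter (fun k => ¬ ψ k ≤ η), ∑ j ∈ I.filter (fun j => ¬ φ j ≤ η), a j k) := by
          rw [← Finset.sum_add_distrib]
          simp only [Finset.sum_filter_add_sum_filter_not]
          rw [Finset.sum_comm (s := I.filter (fun k => ¬ ψ k ≤ η)), ← Finset.sum_add_distrib]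
          simp only [Finset.sum_filter_add_sum_filter_not]
      _ ≤ _ := by
          refine (add_le_add h1 (add_le_add h2 h3)).trans (le_of_eq ?_)
          ring
  · refine BF_le c hf hg fun N => ?_
    rw [BF_appr c hf hg]
    refine h c hc _ _ f g (lev f N) (lev g N) _ hf1 hg1 (lev_meas hf N) (lev_meas hg N) (lev_fst g N)
        (hEf N) (hFg N) fun k hk => ?_
    exact (Finset.single_le_sum (f := fun k : ℤ => (2 : ℝ≥0∞) ^ ((k : ℝ) * pp n) * volume (lev g N k))
      (fun _ _ => zero_le) hk).trans (phi_sum (pp_pos n) _ hg1 (lev_meas hg N) (hFg N))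

lemma cheb {f : Pt n → ℝ≥0∞} (hf : Measurable f) (hf1 : ∫⁻ x, f x ^ pp n ≤ 1) (N : ℕ) (j : ℤ) :
    ((2 : ℝ) ^ (j : ℝ)) ^ (n + 2) * (volume (lev f N j)).toReal ^ (n + 1) ≤ 1 := by
  have h1 : ((2 : ℝ≥0∞) ^ (j : ℝ)) ^ pp n * volume (lev f N j) ≤ 1 := by
    refine le_trans ?_ hf1
    rw [← lintegral_indicator_const (lev_meas hf N j)]
    refine lintegral_mono fun x => ?_
    by_cases hx : x ∈ lev f N j
    · rw [Set.indicator_of_mem hx]; exact ENNReal.rpow_le_rpow hx.1 (pp_pos n).le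
    · rw [Set.indicator_of_notMem hx]; exact zero_le
  have h2 : ((2 : ℝ) ^ (j : ℝ)) ^ pp n * (volume (lev f N j)).toReal ≤ 1 := by
    have := ENNReal.toReal_mono (by norm_num) h1
    rw [ENNReal.toReal_mul, ← ENNReal.toReal_rpow, ← ENNReal.toReal_rpow] at this
    simpa using this
  have h3 := pow_le_one₀ (n := n + 1) (by positivity) h2
  rw [mul_pow, ← Real.rpow_natCast (((2 : ℝ) ^ (j : ℝ)) ^ pp n), ← Real.rpow_mul (by positivity)] at h3
  have : pp n * ((n + 1 : ℕ) : ℝ) = ((n + 2 : ℕ) : ℝ) := by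
    unfold pp; push_cast; field_simp
  rwa [this, Real.rpow_natCast] at h3
end
end

noncomputable section

lemma exists_real_bound {C : ℝ≥0∞} (hC : C ≠ ⊤) : ∃ r : ℝ, 1 ≤ r ∧ C ≤ ENNReal.ofReal r := by
  refine ⟨max 1 C.toReal, le_max_left _ _, ?_⟩
  rw [ENNReal.le_ofReal_iff_toReal_le hC (by positivity)]
  exact le_max_right _ _

section
variable {n : ℕ}

/-- quantitative existence of a good pair of level sets -/
lemma exists_level (hn : 1 ≤ n) : ∃ c1 a C2 : ℝ, 0 < c1 ∧ 0 < a ∧ 0 < C2 ∧ ∀ c : ℝ, 1 ≤ |c| →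
    ∀ (f g : Pt n → ℝ≥0∞), Measurable f → Measurable g →
    ∫⁻ x, f x ^ pp n ≤ 1 → ∫⁻ x, g x ^ pp n ≤ 1 → BF c f g ≤ ENNReal.ofReal C2 ∧
    ∀ ε : ℝ, 0 < ε → ENNReal.ofReal ε ≤ BF c f g → ∃ (N : ℕ) (j k : ℤ),
      ENNReal.ofReal (c1 * ε ^ a) <
      (2 : ℝ≥0∞) ^ (j : ℝ) * (2 : ℝ≥0∞) ^ (k : ℝ) * Lam n c (lev f N j ×ˢ lev g N k) := by
  obtain ⟨C, hC, h⟩ := split_bound hn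
  have hn' : (0:ℝ) < n := by exact_mod_cast hn
  set γ : ℝ := (n : ℝ) / (n + 2) with hγ
  have hγ0 : 0 < γ := by positivity
  obtain ⟨Cr, hCr, hCC⟩ := exists_real_bound hC
  obtain ⟨Ar, hAr, hAA⟩ := exists_real_bound (AA_ne_top (pp_pos n))
  obtain ⟨C2, hC2, hCC2⟩ := exists_real_bound (C := 4 * (C * AA (pp n) ^ γ))
    (ENNReal.mul_ne_top (by norm_num) (ENNReal.mul_ne_top hC
      (ENNReal.rpow_ne_top_of_nonneg hγ0.le (AA_ne_top (pp_pos n)))))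
  have hCr0 : 0 < Cr := by linarith
  have hAr0 : 0 < Ar := by linarith
  refine ⟨(1 / (32 * Cr)) ^ (2 / γ) / (16 * Ar ^ 2), 1 + 2 / γ, C2, by positivity, by positivity,
    by linarith, ?_⟩
  intro c hc f g hf hg hf1 hg1
  obtain ⟨h1, h2⟩ := h c hc f g hf hg hf1 hg1
  refine ⟨h2.trans hCC2, fun ε hε hB => ?_⟩
  by_contra hcon
  push Not at hcon
  set η : ℝ := (ε / (32 * Cr)) ^ (1 / γ) with hη
  have hη0 : 0 < η := by positivity
  set δ : ℝ := (1 / (32 * Cr)) ^ (2 / γ) / (16 * Ar ^ 2) * ε ^ (1 + 2 / γ) with hδ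
  have hδη : δ = ε * η ^ 2 / (16 * Ar ^ 2) := by
    have e1 : η ^ 2 = (1 / (32 * Cr)) ^ (2 / γ) * ε ^ (2 / γ) := by
      rw [hη, ← Real.rpow_natCast, ← Real.rpow_mul (by positivity), ← Real.mul_rpow (by positivity)
        hε.le]
      congr 1
      · field_simp
      · push_cast; ring
    rw [e1, hδ, Real.rpow_add hε, Real.rpow_one]
    ring
  have hηγ : η ^ γ = ε / (32 * Cr) := by
    rw [hη, ← Real.rpow_mul (by positivity), one_div_mul_cancel hγ0.ne', Real.rpow_one]
  have h3 := h1 (ENNReal.ofReal η) (ENNReal.ofReal δ) (by simpa using hη0) ENNReal.ofReal_ne_top hcon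
  have h4 : (4 : ℝ≥0∞) * (2 * (C * ENNReal.ofReal η ^ γ) +
      (AA (pp n) / ENNReal.ofReal η) ^ 2 * ENNReal.ofReal δ) ≤
      ENNReal.ofReal (4 * (2 * (Cr * η ^ γ) + (Ar / η) ^ 2 * δ)) := by
    have hδ0 : 0 ≤ δ := by rw [hδη]; positivity
    rw [ENNReal.ofReal_mul (p := 4) (by norm_num), ENNReal.ofReal_add (by positivity) (by positivity),
      ENNReal.ofReal_mul (p := 2) (by norm_num), ENNReal.ofReal_mul (p := Cr) hCr0.le,
      ENNReal.ofReal_mul (p := (Ar / η) ^ 2) (by positivity), ENNReal.ofReal_pow (by positivity),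
      ENNReal.ofReal_div_of_pos hη0, ← ENNReal.ofReal_rpow_of_pos hη0]
    refine mul_le_mul' (by simp) (add_le_add (mul_le_mul' (by simp) (mul_le_mul' hCC le_rfl))
      (mul_le_mul' (pow_le_pow_left' (ENNReal.div_le_div_right hAA _) 2) le_rfl))
  have h5 : 4 * (2 * (Cr * η ^ γ) + (Ar / η) ^ 2 * δ) = ε / 2 := by
    rw [hηγ, hδη]; field_simp; norm_num
  rw [h5] at h4
  have h6 := (hB.trans h3).trans h4
  rw [ENNReal.ofReal_le_ofReal_iff (by positivity)] at h6
  linarith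

lemma lev_setup (hn : 1 ≤ n) {c : ℝ} (hc1 : 1 ≤ |c|) (hc2 : |c| ≤ 2) {f g : Pt n → ℝ≥0∞}
    (hf : Measurable f) (hg : Measurable g)
    (hf1 : ∫⁻ x, f x ^ pp n ≤ 1) (hg1 : ∫⁻ x, g x ^ pp n ≤ 1) {N : ℕ} {j k : ℤ} {δ K : ℝ} (hδ : 0 < δ)
    (h : ENNReal.ofReal δ <
      (2 : ℝ≥0∞) ^ (j : ℝ) * (2 : ℝ≥0∞) ^ (k : ℝ) * Lam n c (lev f N j ×ˢ lev g N k))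
    (hK1 : 1 ≤ K) (hK : 1 ≤ K * δ ^ (n + 2)) :
    ∃ α β ρ : ℝ, Setup n c (lev f N j) (lev g N k) α β ρ K := by
  have hE := lev_meas hf N j
  have hF := lev_meas hg N k
  set E := lev f N j with hEdef
  set F := lev g N k with hFdef
  have hEt : volume E ≠ ⊤ := lev_fin f N j
  have hFt : volume F ≠ ⊤ := lev_fin g N k
  have hTt : Lam n c (E ×ˢ F) ≠ ⊤ := by
    rw [Lam_prod c hE hF]
    refine ne_top_of_le_ne_top (ENNReal.mul_ne_top (lev_fst g N k) hEt) ?_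
    calc ∫⁻ x in E, volume (sl c F x) ≤ ∫⁻ x in E, volume (Prod.fst '' F) :=
          lintegral_mono fun x => measure_mono (sl_subset c F x)
      _ = _ := by rw [lintegral_const, Measure.restrict_apply_univ]
  have hT0 : Lam n c (E ×ˢ F) ≠ 0 := by
    intro h0; rw [h0, mul_zero] at h; exact absurd h (by simp)
  have hE0 : volume E ≠ 0 := by
    intro h0; apply hT0
    rw [Lam_prod c hE hF]; exact setLIntegral_measure_zero _ _ h0
  have hF0 : volume F ≠ 0 := by
    intro h0; apply hT0
    rw [Lam_prod' c hE hF]; exact setLIntegral_measure_zero _ _ h0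
  have ee := ENNReal.ofReal_toReal hEt
  have ff := ENNReal.ofReal_toReal hFt
  have tt := ENNReal.ofReal_toReal hTt
  have e0 := ENNReal.toReal_pos hE0 hEt
  have f0 := ENNReal.toReal_pos hF0 hFt
  have t0 := ENNReal.toReal_pos hT0 hTt
  have ce := cheb hf hf1 N j
  have cf := cheb hg hg1 N k
  rw [← hEdef] at ce
  rw [← hFdef] at cf
  set e := (volume E).toReal
  set v := (volume F).toReal
  set T := (Lam n c (E ×ˢ F)).toReal
  have hab : δ ≤ (2 : ℝ) ^ (j : ℝ) * (2 : ℝ) ^ (k : ℝ) * T := by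
    have := ENNReal.toReal_mono (ENNReal.mul_ne_top (ENNReal.mul_ne_top (two_rpow_ne_top _)
      (two_rpow_ne_top _)) hTt) h.le
    rw [ENNReal.toReal_ofReal hδ.le, ENNReal.toReal_mul, ENNReal.toReal_mul, ← ENNReal.toReal_rpow,
      ← ENNReal.toReal_rpow] at this
    simpa using this
  set a := (2 : ℝ) ^ (j : ℝ)
  set b := (2 : ℝ) ^ (k : ℝ)
  have a0 : 0 < a := by positivity
  have b0 : 0 < b := by positivity
  have main : (e * v) ^ (n + 1) ≤ K * T ^ (n + 2) := by
    have m1 : δ ^ (n + 2) ≤ (a * b * T) ^ (n + 2) := pow_le_pow_left₀ hδ.le hab _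
    have m2 : (a ^ (n + 2) * e ^ (n + 1)) * (b ^ (n + 2) * v ^ (n + 1)) ≤ 1 :=
      mul_le_one₀ ce (by positivity) cf
    calc (e * v) ^ (n + 1) = 1 * (e * v) ^ (n + 1) := (one_mul _).symm
      _ ≤ K * δ ^ (n + 2) * (e * v) ^ (n + 1) := by gcongr
      _ ≤ K * (a * b * T) ^ (n + 2) * (e * v) ^ (n + 1) := by gcongr
      _ = K * T ^ (n + 2) * ((a ^ (n + 2) * e ^ (n + 1)) * (b ^ (n + 2) * v ^ (n + 1))) := by
          simp only [mul_pow]; ring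
      _ ≤ K * T ^ (n + 2) * 1 := by gcongr
      _ = _ := mul_one _
  refine ⟨T / e, T / v, e * v / T, ⟨hn, hc1, hc2, hE, hF, lev_fst f N j, lev_fst g N k,
    by positivity, by positivity, by positivity, hK1, ?_, ?_, ?_, ?_⟩⟩
  · rw [← ee]; congr 1; field_simp
  · rw [← ff]; congr 1; field_simp
  · rw [← tt]; congr 1; field_simp
  · rw [div_pow, div_mul_div_comm, ← mul_div_assoc, div_le_div_iff₀ (by positivity) (by positivity)]
    calc (e * v) ^ n * (e * v) = (e * v) ^ (n + 1) := (pow_succ _ _).symm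
      _ ≤ K * T ^ (n + 2) := main
      _ = K * (T * T) * T ^ n := by ring

theorem core (hn : 1 ≤ n) : ∃ c0 A : ℝ, 0 < c0 ∧ 0 < A ∧ ∀ c : ℝ, 1 ≤ |c| → |c| ≤ 2 →
    ∀ (f g : Pt n → ℝ≥0∞), Measurable f → Measurable g →
    ∫⁻ x, f x ^ pp n ≤ 1 → ∫⁻ x, g x ^ pp n ≤ 1 →
    ∀ ε : ℝ, 0 < ε → ENNReal.ofReal ε ≤ BF c f g →
    ∃ (E F : Set (Pt n)) (t s : ℝ) (zb : Pt n × Pt n)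
    (b : OrthonormalBasis (Fin n) ℝ (Vec n)) (r rs : Fin n → ℝ) (ρ' : ℝ),
    MeasurableSet E ∧ MeasurableSet F ∧ 0 < t ∧ 0 < s ∧
    (∀ x ∈ E, ENNReal.ofReal t ≤ f x) ∧ (∀ x ∈ F, ENNReal.ofReal s ≤ g x) ∧
    zb.2.2 = zb.1.2 + c * ⟪zb.1.1, zb.2.1⟫ ∧ 0 < ρ' ∧ (∀ j, 0 < r j) ∧ (∀ j, 0 < rs j) ∧
    (∀ j, r j * rs j = ρ') ∧
    volume {x : Pt n | (∀ j, |⟪x.1 - zb.1.1, b j⟫| < r j) ∧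
      |x.2 - (zb.2.2 - c * ⟪x.1, zb.2.1⟫)| < ρ'} ≤ volume E ∧
    volume {y : Pt n | (∀ j, |⟪y.1 - zb.2.1, b j⟫| < rs j) ∧
      |y.2 - (zb.1.2 + c * ⟪zb.1.1, y.1⟫)| < ρ'} ≤ volume F ∧
    ENNReal.ofReal (c0 * ε ^ A) * BF c f g ≤
      ENNReal.ofReal (t * s) * Lam n c ((E ×ˢ F) ∩ rball c zb b r rs ρ') := by
  obtain ⟨c1, a, C2, hc1, ha, hC2, h⟩ := exists_level hn
  obtain ⟨C3, M, hC3, hKF⟩ := PB_KF n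
  set L : ℝ := max 1 ((c1 * C2 ^ a) ^ (n + 2)) with hL
  have hL1 : 1 ≤ L := le_max_left _ _
  have hL0 : 0 < L := by linarith
  set m : ℕ := 1 + (n + 2) * M with hm
  refine ⟨c1 ^ m / (C3 * L ^ M * C2), a * m, by positivity, by positivity, ?_⟩
  intro c h1 h2 f g hf hg hf1 hg1 ε hε hB
  obtain ⟨hb, hlev⟩ := h c h1 f g hf hg hf1 hg1
  obtain ⟨N, j, k, hjk⟩ := hlev ε hε hB
  have hεC : ε ≤ C2 := by
    have := hB.trans hb
    rwa [ENNReal.ofReal_le_ofReal_iff hC2.le] at this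
  set δ : ℝ := c1 * ε ^ a with hδ
  have hδ0 : 0 < δ := by positivity
  have hδL : δ ^ (n + 2) ≤ L := by
    refine le_trans ?_ (le_max_right _ _)
    refine pow_le_pow_left₀ hδ0.le ?_ _
    rw [hδ]
    exact mul_le_mul_of_nonneg_left (Real.rpow_le_rpow hε.le hεC ha.le) hc1.le
  set K : ℝ := L / δ ^ (n + 2) with hKdef
  have hK1 : 1 ≤ K := by rw [hKdef, one_le_div (by positivity)]; exact hδL
  have hKδ : K * δ ^ (n + 2) = L := by rw [hKdef]; field_simp
  obtain ⟨α, β, ρ, hS⟩ := lev_setup hn h1 h2 hf hg hf1 hg1 hδ0 hjk hK1 (by rw [hKδ]; exact hL1)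
  obtain ⟨zb, b, r, rs, ρ', g1, g2, g3, g4, g5, g6, g7, g8⟩ := hS.main
  have two : ∀ i : ℤ, ENNReal.ofReal ((2:ℝ) ^ (i : ℝ)) = (2 : ℝ≥0∞) ^ (i : ℝ) := by
    intro i
    rw [← ENNReal.ofReal_rpow_of_pos (by norm_num)]; simp
  refine ⟨lev f N j, lev g N k, (2:ℝ) ^ (j : ℝ), (2:ℝ) ^ (k : ℝ), zb, b, r, rs, ρ', lev_meas hf N j,
    lev_meas hg N k, by positivity, by positivity, fun x hx => by rw [two]; exact hx.1,
    fun x hx => by rw [two]; exact hx.1, g1, g2, g3, g4, g5, g6, g7, ?_⟩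
  rw [ENNReal.ofReal_mul (p := (2:ℝ) ^ (j : ℝ)) (by positivity), two, two]
  set W := Lam n c (lev f N j ×ˢ lev g N k ∩ rball c zb b r rs ρ') with hW
  set Q : ℝ := C3 * K ^ M with hQ
  have hQ0 : 0 < Q := by positivity
  have hX : c1 ^ m / (C3 * L ^ M * C2) * ε ^ (a * m) * C2 * Q = δ := by
    have e1 : ε ^ (a * m) = (ε ^ a) ^ m := by rw [Real.rpow_mul hε.le, Real.rpow_natCast]
    have e2 : c1 ^ m / (C3 * L ^ M * C2) * ε ^ (a * m) = δ ^ m / (C3 * L ^ M * C2) := by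
      rw [e1, hδ, mul_pow]; ring
    rw [e2, hQ, hKdef, div_pow, ← pow_mul, hm, pow_add, pow_one]
    field_simp
  have hfin : ENNReal.ofReal Q * (ENNReal.ofReal (c1 ^ m / (C3 * L ^ M * C2) * ε ^ (a * m)) * BF c f g) ≤
      ENNReal.ofReal Q * ((2 : ℝ≥0∞) ^ (j : ℝ) * (2 : ℝ≥0∞) ^ (k : ℝ) * W) := by
    calc _ ≤ ENNReal.ofReal Q * (ENNReal.ofReal (c1 ^ m / (C3 * L ^ M * C2) * ε ^ (a * m)) *
          ENNReal.ofReal C2) := mul_le_mul' le_rfl (mul_le_mul' le_rfl hb)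
      _ = ENNReal.ofReal δ := by
          rw [← ENNReal.ofReal_mul (by positivity), ← ENNReal.ofReal_mul hQ0.le, mul_comm Q, hX]
      _ ≤ _ := hjk.le
      _ ≤ (2 : ℝ≥0∞) ^ (j : ℝ) * (2 : ℝ≥0∞) ^ (k : ℝ) * (ENNReal.ofReal Q * W) := by
          refine mul_le_mul' le_rfl (g8.trans (mul_le_mul' (ENNReal.ofReal_le_ofReal ?_) le_rfl))
          exact (le_abs_self _).trans (hKF K hK1)
      _ = _ := by rw [mul_left_comm]
  exact (ENNReal.mul_le_mul_iff_right (by simpa using hQ0) ENNReal.ofReal_ne_top).1 hfin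
end
end

noncomputable section

section
variable {n : ℕ}

/-- parabolic shear -/
def sh (s : ℝ) (w : Pt n) : Pt n := (w.1, w.2 + s * ‖w.1‖ ^ 2)

lemma sh_sh (s : ℝ) (w : Pt n) : sh s (sh (-s) w) = w := by
  unfold sh; ext <;> simp

lemma sh_mp (s : ℝ) : MeasurePreserving (sh s : Pt n → Pt n) volume volume := by
  have := (MeasurePreserving.id (volume : Measure (Vec n))).skew_product
    (μc := (volume : Measure ℝ)) (μd := (volume : Measure ℝ))
    (g := fun (a : Vec n) (t : ℝ) => t + s * ‖a‖ ^ 2) (by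
      show Measurable fun p : Vec n × ℝ => p.2 + s * ‖p.1‖ ^ 2
      fun_prop)
    (Filter.Eventually.of_forall fun a => (measurePreserving_add_right volume (s * ‖a‖ ^ 2)).map_eq)
  exact this

lemma radonT_sh (g : Pt n → ℝ≥0∞) (w : Pt n) :
    radonT n g (sh 1 w) = ∫⁻ y' : Vec n, g (sh (-1) (y', w.2 + 2 * ⟪w.1, y'⟫)) := by
  unfold radonT
  rw [← lintegral_sub_left_eq_self _ w.1]
  refine lintegral_congr fun y' => ?_
  congr 1
  unfold sh
  ext
  · simp
  · simp only
    rw [norm_sub_sq_real]; ring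

lemma measurable_radonT {g : Pt n → ℝ≥0∞} (hg : Measurable g) : Measurable (radonT n g) := by
  unfold radonT
  refine Measurable.lintegral_prod_right' (f := fun p : Pt n × Vec n => g (p.1.1 - p.2, p.1.2 - ‖p.2‖ ^ 2)) ?_
  exact hg.comp (by fun_prop)

lemma pairT_eq {f g : Pt n → ℝ≥0∞} (hf : Measurable f) (hg : Measurable g) :
    pairT n f g = BF 2 (fun w => f (sh 1 w)) (fun w => g (sh (-1) w)) := by
  have m1 := (sh_mp (n := n) 1).measurable
  have m2 := (sh_mp (n := n) (-1)).measurable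
  have h1 : pairT n f g = ∫⁻ w, f (sh 1 w) * radonT n g (sh 1 w) :=
    ((sh_mp (n := n) 1).lintegral_comp (hf.mul (measurable_radonT hg))).symm
  have hm : Measurable fun z : Pt n × Pt n => f (sh 1 z.1) * g (sh (-1) z.2) :=
    ((hf.comp m1).comp measurable_fst).mul ((hg.comp m2).comp measurable_snd)
  rw [h1, BF, Lam, lintegral_map hm (measurable_incMap 2)]
  have h2 := lintegral_prod (μ := (volume : Measure (Pt n))) (ν := (volume : Measure (Vec n))) _
    (hm.comp (measurable_incMap 2)).aemeasurable
  refine Eq.trans ?_ h2.symm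
  refine lintegral_congr fun w => ?_
  rw [radonT_sh, ← lintegral_const_mul]
  · rfl
  · exact (hg.comp m2).comp (by fun_prop)

lemma incT_eq {E F : Set (Pt n)} (hE : MeasurableSet E) (hF : MeasurableSet F) :
    incT n E F = Lam n 2 ((sh 1 ⁻¹' E) ×ˢ (sh (-1) ⁻¹' F)) := by
  have m1 := (sh_mp (n := n) 1).measurable
  have m2 := (sh_mp (n := n) (-1)).measurable
  have h1 : incT n E F = pairT n (E.indicator 1) (F.indicator 1) := by
    unfold incT pairT
    rw [← lintegral_indicator hE]
    refine lintegral_congr fun x => ?_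
    by_cases hx : x ∈ E <;> simp [hx]
  rw [h1, pairT_eq (measurable_one.indicator hE) (measurable_one.indicator hF), BF,
    ← lintegral_indicator_one ((hE.preimage m1).prod (hF.preimage m2))]
  refine lintegral_congr fun z => ?_
  by_cases h1 : sh 1 z.1 ∈ E <;> by_cases h2 : sh (-1) z.2 ∈ F <;>
    simp [Set.indicator, Set.mem_prod, h1, h2]

lemma open_fst (zb : Pt n × Pt n) (e : Fin n → Vec n) (r rs : Fin n → ℝ) (ρ : ℝ) :
    IsOpen (Prod.fst '' ballI n zb e r rs ρ) := by
  have : Prod.fst '' ballI n zb e r rs ρ = ⋃ y' : Vec n, {x : Pt n |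
      (∀ j, |⟪x.1 - zb.1.1, e j⟫| < r j) ∧ |x.2 - zb.2.2 - ‖x.1 - zb.2.1‖ ^ 2| < ρ ∧
      (∀ j, |⟪y' - zb.2.1, e j⟫| < rs j) ∧
      |(x.2 - ‖y' - x.1‖ ^ 2) - zb.1.2 + ‖y' - zb.1.1‖ ^ 2| < ρ} := by
    ext x
    rw [Set.mem_iUnion]
    constructor
    · rintro ⟨⟨x, y⟩, ⟨h1, h2, h3, h4, h5⟩, rfl⟩
      refine ⟨y.1, h2, h3, h4, ?_⟩
      simp only at h1 h5
      rw [h1] at h5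
      exact h5
    · rintro ⟨y', h2, h3, h4, h5⟩
      exact ⟨(x, (y', x.2 - ‖y' - x.1‖ ^ 2)), ⟨rfl, h2, h3, h4, h5⟩, rfl⟩
  rw [this]
  refine isOpen_iUnion fun y' => ?_
  refine IsOpen.inter ?_ (IsOpen.inter ?_ (IsOpen.inter ?_ ?_))
  · have hO : IsOpen (⋂ j, {x : Pt n | |⟪x.1 - zb.1.1, e j⟫| < r j}) := isOpen_iInter_of_finite fun j =>
      isOpen_lt (by fun_prop) continuous_const
    have hE : (⋂ j, {x : Pt n | |⟪x.1 - zb.1.1, e j⟫| < r j}) = {x : Pt n | ∀ j, |⟪x.1 - zb.1.1, e j⟫| < r j} :=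
      Set.ext fun x => Set.mem_iInter
    rw [hE] at hO
    exact hO
  · exact isOpen_lt (f := fun x : Pt n => |x.2 - zb.2.2 - ‖x.1 - zb.2.1‖ ^ 2|) (by fun_prop) continuous_const
  · exact isOpen_const
  · exact isOpen_lt (f := fun x : Pt n => |(x.2 - ‖y' - x.1‖ ^ 2) - zb.1.2 + ‖y' - zb.1.1‖ ^ 2|)
      (by fun_prop) continuous_const

lemma open_snd (zb : Pt n × Pt n) (e : Fin n → Vec n) (r rs : Fin n → ℝ) (ρ : ℝ) :
    IsOpen (Prod.snd '' ballI n zb e r rs ρ) := by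
  have : Prod.snd '' ballI n zb e r rs ρ = ⋃ x' : Vec n, {y : Pt n |
      (∀ j, |⟪x' - zb.1.1, e j⟫| < r j) ∧
      |(y.2 + ‖y.1 - x'‖ ^ 2) - zb.2.2 - ‖x' - zb.2.1‖ ^ 2| < ρ ∧
      (∀ j, |⟪y.1 - zb.2.1, e j⟫| < rs j) ∧
      |y.2 - zb.1.2 + ‖y.1 - zb.1.1‖ ^ 2| < ρ} := by
    ext y
    rw [Set.mem_iUnion]
    constructor
    · rintro ⟨⟨x, y⟩, ⟨h1, h2, h3, h4, h5⟩, rfl⟩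
      refine ⟨x.1, h2, ?_, h4, h5⟩
      simp only at h1 h3
      have : x.2 = y.2 + ‖y.1 - x.1‖ ^ 2 := by rw [h1]; ring
      rw [this] at h3
      exact h3
    · rintro ⟨x', h2, h3, h4, h5⟩
      exact ⟨((x', y.2 + ‖y.1 - x'‖ ^ 2), y), ⟨by simp, h2, h3, h4, h5⟩, rfl⟩
  rw [this]
  refine isOpen_iUnion fun x' => ?_
  refine IsOpen.inter ?_ (IsOpen.inter ?_ (IsOpen.inter ?_ ?_))
  · exact isOpen_const
  · exact isOpen_lt (f := fun y : Pt n => |(y.2 + ‖y.1 - x'‖ ^ 2) - zb.2.2 - ‖x' - zb.2.1‖ ^ 2|)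
      (by fun_prop) continuous_const
  · have hO : IsOpen (⋂ j, {x : Pt n | |⟪x.1 - zb.2.1, e j⟫| < rs j}) := isOpen_iInter_of_finite fun j =>
      isOpen_lt (by fun_prop) continuous_const
    have hE : (⋂ j, {x : Pt n | |⟪x.1 - zb.2.1, e j⟫| < rs j}) = {x : Pt n | ∀ j, |⟪x.1 - zb.2.1, e j⟫| < rs j} :=
      Set.ext fun x => Set.mem_iInter
    rw [hE] at hO
    exact hO
  · exact isOpen_lt (f := fun y : Pt n => |y.2 - zb.1.2 + ‖y.1 - zb.1.1‖ ^ 2|)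
      (by fun_prop) continuous_const

lemma ball_of_rball {zb z : Pt n × Pt n} {e : Fin n → Vec n} {r rs : Fin n → ℝ} {ρ : ℝ}
    (h : z ∈ rball 2 zb e r rs ρ) :
    (sh 1 z.1, sh (-1) z.2) ∈ ballI n (sh 1 zb.1, sh (-1) zb.2) e r rs ρ := by
  obtain ⟨h1, h2, h3, h4, h5⟩ := h
  refine ⟨?_, h2, ?_, h4, ?_⟩
  · simp only [sh]
    rw [h1, norm_sub_sq_real, real_inner_comm]; ring
  · simp only [sh]
    rw [norm_sub_sq_real]
    convert h3 using 2; ring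
  · simp only [sh]
    rw [norm_sub_sq_real, real_inner_comm]
    convert h5 using 2; ring

lemma vol_fst (zb : Pt n × Pt n) (e : Fin n → Vec n) (r rs : Fin n → ℝ) (ρ : ℝ) :
    volume (Prod.fst '' ballI n (sh 1 zb.1, sh (-1) zb.2) e r rs ρ) ≤
    volume {x : Pt n | (∀ j, |⟪x.1 - zb.1.1, e j⟫| < r j) ∧
      |x.2 - (zb.2.2 - 2 * ⟪x.1, zb.2.1⟫)| < ρ} := by
  rw [← (sh_mp (n := n) 1).measure_preimage (open_fst _ e r rs ρ).measurableSet.nullMeasurableSet]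
  refine measure_mono ?_
  rintro w ⟨⟨x, y⟩, ⟨h1, h2, h3, h4, h5⟩, hw⟩
  simp only at hw h2 h3
  rw [hw] at h2 h3
  refine ⟨h2, ?_⟩
  simp only [sh] at h3
  rw [norm_sub_sq_real] at h3
  convert h3 using 2; ring

lemma vol_snd (zb : Pt n × Pt n) (e : Fin n → Vec n) (r rs : Fin n → ℝ) (ρ : ℝ) :
    volume (Prod.snd '' ballI n (sh 1 zb.1, sh (-1) zb.2) e r rs ρ) ≤
    volume {y : Pt n | (∀ j, |⟪y.1 - zb.2.1, e j⟫| < rs j) ∧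
      |y.2 - (zb.1.2 + 2 * ⟪zb.1.1, y.1⟫)| < ρ} := by
  rw [← (sh_mp (n := n) (-1)).measure_preimage (open_snd _ e r rs ρ).measurableSet.nullMeasurableSet]
  refine measure_mono ?_
  rintro w ⟨⟨x, y⟩, ⟨h1, h2, h3, h4, h5⟩, hw⟩
  simp only at hw h4 h5
  rw [hw] at h4 h5
  refine ⟨h4, ?_⟩
  simp only [sh] at h5
  rw [norm_sub_sq_real, real_inner_comm] at h5
  convert h5 using 2; ring

lemma norm_one {f : Pt n → ℝ≥0∞} (h0 : 0 < LpN n (pp n) f)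
    (ht : LpN n (pp n) f < ⊤) (s : ℝ) (hf : Measurable f) :
    ∫⁻ w, ((LpN n (pp n) f)⁻¹ * f (sh s w)) ^ pp n ≤ 1 := by
  have hp := pp_pos n
  set a := LpN n (pp n) f with ha
  have e : ∫⁻ w, (a⁻¹ * f (sh s w)) ^ pp n = (a ^ pp n)⁻¹ * ∫⁻ w, f w ^ pp n := by
    simp only [ENNReal.mul_rpow_of_nonneg _ _ hp.le, ENNReal.inv_rpow]
    rw [lintegral_const_mul' _ _ (by
      rw [Ne, ENNReal.inv_eq_top, ENNReal.rpow_eq_zero_iff]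
      rintro (⟨h, _⟩ | ⟨h, _⟩)
      · exact h0.ne' h
      · exact ht.ne h)]
    rw [(sh_mp (n := n) s).lintegral_comp (f := fun w => f w ^ pp n) (hf.pow_const _)]
  have e2 : a ^ pp n = ∫⁻ w, f w ^ pp n := by
    rw [ha, LpN, ← ENNReal.rpow_mul, one_div_mul_cancel hp.ne', ENNReal.rpow_one]
  rw [e, ← e2]
  exact ENNReal.inv_mul_le_one _

theorem main_n (hn : 1 ≤ n) :
    ∃ c A : ℝ, 0 < c ∧ 0 < A ∧
      ∀ (ε : ℝ), 0 < ε →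
      ∀ (f fs : Pt n → ℝ≥0∞), Measurable f → Measurable fs →
        0 < LpN n (pp n) f → LpN n (pp n) f < ⊤ →
        0 < LpN n (pp n) fs → LpN n (pp n) fs < ⊤ →
        ENNReal.ofReal ε * (LpN n (pp n) f * LpN n (pp n) fs) ≤ pairT n f fs →
        ∃ (E Es : Set (Pt n)) (t ts : ℝ)
          (zb : Pt n × Pt n) (e : Fin n → Vec n)
          (r rs : Fin n → ℝ) (ρ : ℝ),
          MeasurableSet E ∧ MeasurableSet Es ∧ 0 < t ∧ 0 < ts ∧
          IsBallParams n zb e r rs ρ ∧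
          (∀ x ∈ E, ENNReal.ofReal t ≤ f x) ∧
          (∀ x ∈ Es, ENNReal.ofReal ts ≤ fs x) ∧
          ENNReal.ofReal (c * ε ^ A) * pairT n f fs ≤
            ENNReal.ofReal (t * ts) *
              incT n (E ∩ Prod.fst '' ballI n zb e r rs ρ)
                (Es ∩ Prod.snd '' ballI n zb e r rs ρ) ∧
          volume (Prod.fst '' ballI n zb e r rs ρ) ≤ volume E ∧
          volume (Prod.snd '' ballI n zb e r rs ρ) ≤ volume Es := by
  obtain ⟨c0, A, hc0, hA, h⟩ := core hn
  refine ⟨c0, A, hc0, hA, ?_⟩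
  intro ε hε f fs hf hfs ha0 hat hb0 hbt hpair
  have m1 := (sh_mp (n := n) 1).measurable
  have m2 := (sh_mp (n := n) (-1)).measurable
  have n1 := norm_one ha0 hat 1 hf
  have n2 := norm_one hb0 hbt (-1) hfs
  set a := LpN n (pp n) f with ha
  set b := LpN n (pp n) fs with hb
  have hab0 : a * b ≠ 0 := mul_ne_zero ha0.ne' hb0.ne'
  have habt : a * b ≠ ⊤ := ENNReal.mul_ne_top hat.ne hbt.ne
  have hBF : pairT n f fs = a * b * BF 2 (fun w => a⁻¹ * f (sh 1 w)) (fun w => b⁻¹ * fs (sh (-1) w)) := by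
    rw [pairT_eq hf hfs, BF, BF, ← lintegral_const_mul' _ _ habt]
    refine lintegral_congr fun z => ?_
    have e : a * b * (a⁻¹ * f (sh 1 z.1) * (b⁻¹ * fs (sh (-1) z.2))) =
      (a * a⁻¹) * (b * b⁻¹) * (f (sh 1 z.1) * fs (sh (-1) z.2)) := by ring
    rw [e, ENNReal.mul_inv_cancel ha0.ne' hat.ne, ENNReal.mul_inv_cancel hb0.ne' hbt.ne, one_mul,
      one_mul]
  rw [hBF, mul_comm (ENNReal.ofReal ε), ENNReal.mul_le_mul_iff_right hab0 habt] at hpair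
  obtain ⟨E, F, t, s, zb, bs, r, rs, ρ, hE, hF, ht, hs, hEf, hFg, g1, g2, g3, g4, g5, g6, g7, g8⟩ :=
    h 2 (by norm_num) (by norm_num) (fun w => a⁻¹ * f (sh 1 w)) (fun w => b⁻¹ * fs (sh (-1) w))
      ((hf.comp m1).const_mul _) ((hfs.comp m2).const_mul _) n1 n2 ε hε hpair
  have ar := ENNReal.ofReal_toReal hat.ne
  have br := ENNReal.ofReal_toReal hbt.ne
  have ar0 := ENNReal.toReal_pos ha0.ne' hat.ne
  have br0 := ENNReal.toReal_pos hb0.ne' hbt.ne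
  refine ⟨sh (-1) ⁻¹' E, sh 1 ⁻¹' F, a.toReal * t, b.toReal * s, (sh 1 zb.1, sh (-1) zb.2), bs, r, rs, ρ,
    hE.preimage m2, hF.preimage m1, by positivity, by positivity, ?_, ?_, ?_, ?_, ?_, ?_⟩
  · refine ⟨?_, g2, bs.orthonormal, g3, g4, g5⟩
    simp only [sh]
    rw [g1, norm_sub_sq_real, real_inner_comm]; ring
  · intro x hx
    have := hEf _ hx
    rw [sh_sh] at this
    rw [ENNReal.ofReal_mul ar0.le, ar]
    refine (mul_le_mul' le_rfl this).trans (le_of_eq ?_)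
    rw [← mul_assoc, ENNReal.mul_inv_cancel ha0.ne' hat.ne, one_mul]
  · intro x hx
    have := hFg _ hx
    have e := sh_sh (-1) x
    rw [neg_neg] at e
    rw [e] at this
    rw [ENNReal.ofReal_mul br0.le, br]
    refine (mul_le_mul' le_rfl this).trans (le_of_eq ?_)
    rw [← mul_assoc, ENNReal.mul_inv_cancel hb0.ne' hbt.ne, one_mul]
  · have hinc : Lam n 2 ((E ×ˢ F) ∩ rball 2 zb bs r rs ρ) ≤
        incT n (sh (-1) ⁻¹' E ∩ Prod.fst '' ballI n (sh 1 zb.1, sh (-1) zb.2) bs r rs ρ)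
          (sh 1 ⁻¹' F ∩ Prod.snd '' ballI n (sh 1 zb.1, sh (-1) zb.2) bs r rs ρ) := by
      rw [incT_eq ((hE.preimage m2).inter (open_fst _ _ _ _ _).measurableSet)
        ((hF.preimage m1).inter (open_snd _ _ _ _ _).measurableSet)]
      refine measure_mono ?_
      rintro z ⟨⟨hz1, hz2⟩, hzb⟩
      have hball := ball_of_rball hzb
      refine ⟨⟨?_, _, hball, rfl⟩, ⟨?_, _, hball, rfl⟩⟩
      · show sh (-1) (sh 1 z.1) ∈ E
        have e := sh_sh (-1) z.1
        rw [neg_neg] at e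
        rw [e]; exact hz1
      · show sh 1 (sh (-1) z.2) ∈ F
        rw [sh_sh]; exact hz2
    have e : a.toReal * t * (b.toReal * s) = a.toReal * b.toReal * (t * s) := by ring
    rw [hBF, e, ENNReal.ofReal_mul (p := a.toReal * b.toReal) (by positivity),
      ENNReal.ofReal_mul (p := a.toReal) ar0.le, ar, br, mul_left_comm, mul_assoc (a * b)]
    exact mul_le_mul' le_rfl (g8.trans (mul_le_mul' le_rfl hinc))
  · rw [(sh_mp (n := n) (-1)).measure_preimage hE.nullMeasurableSet]
    exact (vol_fst zb bs r rs ρ).trans g6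
  · rw [(sh_mp (n := n) 1).measure_preimage hF.nullMeasurableSet]
    exact (vol_snd zb bs r rs ρ).trans g7
end
end

/-- for any `ε`-quasiextremal pair of nonnegative functions
`(f, f*)` there are sub-level pairs `t χ_E ≤ f`, `t* χ_{E*} ≤ f*` interacting
strongly inside a pair of ball projections `(B, B*)` with `|B| ≤ |E|`,
`|B*| ≤ |E*|`. -/
theorem stmt6 (d : ℕ) (hd : 2 ≤ d) :
    ∃ c A : ℝ, 0 < c ∧ 0 < A ∧
      ∀ (ε : ℝ), 0 < ε →
      ∀ (f fs : Pt (d - 1) → ℝ≥0∞), Measurable f → Measurable fs →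
        0 < LpN (d - 1) (((d : ℝ) + 1) / d) f → LpN (d - 1) (((d : ℝ) + 1) / d) f < ⊤ →
        0 < LpN (d - 1) (((d : ℝ) + 1) / d) fs → LpN (d - 1) (((d : ℝ) + 1) / d) fs < ⊤ →
        ENNReal.ofReal ε * (LpN (d - 1) (((d : ℝ) + 1) / d) f *
            LpN (d - 1) (((d : ℝ) + 1) / d) fs) ≤ pairT (d - 1) f fs →
        ∃ (E Es : Set (Pt (d - 1))) (t ts : ℝ)
          (zb : Pt (d - 1) × Pt (d - 1)) (e : Fin (d - 1) → Vec (d - 1))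
          (r rs : Fin (d - 1) → ℝ) (ρ : ℝ),
          MeasurableSet E ∧ MeasurableSet Es ∧ 0 < t ∧ 0 < ts ∧
          IsBallParams (d - 1) zb e r rs ρ ∧
          (∀ x ∈ E, ENNReal.ofReal t ≤ f x) ∧
          (∀ x ∈ Es, ENNReal.ofReal ts ≤ fs x) ∧
          ENNReal.ofReal (c * ε ^ A) * pairT (d - 1) f fs ≤
            ENNReal.ofReal (t * ts) *
              incT (d - 1) (E ∩ Prod.fst '' ballI (d - 1) zb e r rs ρ)
                (Es ∩ Prod.snd '' ballI (d - 1) zb e r rs ρ) ∧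
          volume (Prod.fst '' ballI (d - 1) zb e r rs ρ) ≤ volume E ∧
          volume (Prod.snd '' ballI (d - 1) zb e r rs ρ) ≤ volume Es := by
  obtain ⟨n, rfl⟩ : ∃ n, d = n + 1 := ⟨d - 1, by omega⟩
  have hp : (((n + 1 : ℕ) : ℝ) + 1) / ((n + 1 : ℕ) : ℝ) = pp n := by
    unfold pp
    push_cast
    congr 1
    ring
  rw [hp]
  exact main_n (n := n) (by omega)
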